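/- For every integer n ≥ 1, over PA⁻ + IΣn the principle GPHP(Σ_{n+1}) lies strictly between CARD(Σ_{n+1}) and WPHP(Σ_{n+1}): WPHP(Σ_{n+1}) implies GPHP(Σ_{n+1}) and GPHP(Σ_{n+1}) implies CARD(Σ_{n+1}), while PA⁻ + IΣn + CARD(Σ_{n+1}) does not prove GPHP(Σ_{n+1}) and PA⁻ + IΣn + GPHP(Σ_{n+1}) does not prove WPHP(Σ_{n+1}). -/

import Mathlib

/- Shared development: first-order arithmetic in the language {0,1,+,·,<},
   the arithmetic hierarchy, fragments of arithmetic, and coded finite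
   combinatorics inside models. -/

open FirstOrder Language

namespace ArithFC

/-- Function symbols of the language of arithmetic: 0, 1, +, ·. -/
inductive Func : ℕ → Type
  | zero : Func 0
  | one : Func 0
  | add : Func 2
  | mul : Func 2

/-- Relation symbols of the language of arithmetic: <. -/
inductive Rel : ℕ → Type
  | lt : Rel 2

/-- The first-order language {0, 1, +, ·, <}. -/
def lang : Language :=
  { Functions := Func, Relations := Rel }

section Instances

variable (M : Type) [lang.Structure M]

instance : Zero M := ⟨Structure.funMap (L := lang) Func.zero ![]⟩
instance : One M := ⟨Structure.funMap (L := lang) Func.one ![]⟩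
instance : Add M := ⟨fun x y => Structure.funMap (L := lang) Func.add ![x, y]⟩
instance : Mul M := ⟨fun x y => Structure.funMap (L := lang) Func.mul ![x, y]⟩
instance : LT M := ⟨fun x y => Structure.RelMap (L := lang) Rel.lt ![x, y]⟩
instance : LE M := ⟨fun x y => x < y ∨ x = y⟩

end Instances

/-- The numeral `n` in a model. -/
def numM (M : Type) [lang.Structure M] : ℕ → M
  | 0 => 0
  | n + 1 => numM M n + 1

/-- `b` is nonstandard (greater than every numeral). -/
def Nonstd {M : Type} [lang.Structure M] (b : M) : Prop := ∀ n : ℕ, numM M n < b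

/-- The atomic formula `t < u`. -/
def ltFm {α : Type} {n : ℕ} (t u : lang.Term (α ⊕ Fin n)) : lang.BoundedFormula α n :=
  BoundedFormula.rel (Rel.lt : lang.Relations 2) ![t, u]

/-- Δ₀ formulas: built from atomic formulas by boolean connectives and
bounded universal quantification (this generates, up to logical equivalence,
the usual class of bounded formulas). -/
inductive IsDelta0 {α : Type} : ∀ n : ℕ, lang.BoundedFormula α n → Prop
  | falsum (n : ℕ) : IsDelta0 n BoundedFormula.falsum
  | equal (n : ℕ) (t u : lang.Term (α ⊕ Fin n)) : IsDelta0 n (BoundedFormula.equal t u)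
  | rel (n l : ℕ) (R : lang.Relations l) (ts : Fin l → lang.Term (α ⊕ Fin n)) :
      IsDelta0 n (BoundedFormula.rel R ts)
  | imp (n : ℕ) {φ ψ : lang.BoundedFormula α n} :
      IsDelta0 n φ → IsDelta0 n ψ → IsDelta0 n (φ.imp ψ)
  | bdAll (n : ℕ) (t : lang.Term (α ⊕ Fin n)) {φ : lang.BoundedFormula α (n + 1)} :
      IsDelta0 (n + 1) φ →
      IsDelta0 n
        (BoundedFormula.all ((ltFm (Term.var (Sum.inr (Fin.last n))) (t.liftAt 1 n)).imp φ))

mutual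
  /-- Σ_m formulas. -/
  inductive SigmaFm {α : Type} : ℕ → ∀ n : ℕ, lang.BoundedFormula α n → Prop
    | delta0 (m n : ℕ) {φ : lang.BoundedFormula α n} : IsDelta0 n φ → SigmaFm m n φ
    | ofPi (m n : ℕ) {φ : lang.BoundedFormula α n} : PiFm m n φ → SigmaFm (m + 1) n φ
    | ex (m n : ℕ) {φ : lang.BoundedFormula α (n + 1)} :
        SigmaFm (m + 1) (n + 1) φ → SigmaFm (m + 1) n φ.ex
  /-- Π_m formulas. -/
  inductive PiFm {α : Type} : ℕ → ∀ n : ℕ, lang.BoundedFormula α n → Prop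
    | delta0 (m n : ℕ) {φ : lang.BoundedFormula α n} : IsDelta0 n φ → PiFm m n φ
    | ofSigma (m n : ℕ) {φ : lang.BoundedFormula α n} : SigmaFm m n φ → PiFm (m + 1) n φ
    | all (m n : ℕ) {φ : lang.BoundedFormula α (n + 1)} :
        PiFm (m + 1) (n + 1) φ → PiFm (m + 1) n φ.all
end

/-- A `k`-ary relation on `M` is Σ_m-definable (with parameters from `M`). -/
def IsSigmaDef (m : ℕ) (M : Type) [lang.Structure M] {k : ℕ} (R : (Fin k → M) → Prop) : Prop :=
  ∃ (p : ℕ) (φ : lang.BoundedFormula (Fin k ⊕ Fin p) 0) (w : Fin p → M),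
    SigmaFm m 0 φ ∧ ∀ v : Fin k → M, R v ↔ φ.Realize (Sum.elim v w) finZeroElim

/-- A subset of `M` is Σ_m-definable with parameters. -/
def SigmaDef1 (m : ℕ) (M : Type) [lang.Structure M] (A : Set M) : Prop :=
  IsSigmaDef m M (k := 1) fun v => v 0 ∈ A

/-- A binary relation on `M` is Σ_m-definable with parameters. -/
def SigmaDef2 (m : ℕ) (M : Type) [lang.Structure M] (R : M → M → Prop) : Prop :=
  IsSigmaDef m M (k := 2) fun v => R (v 0) (v 1)

/-- A ternary relation on `M` is Σ_m-definable with parameters. -/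
def SigmaDef3 (m : ℕ) (M : Type) [lang.Structure M] (R : M → M → M → Prop) : Prop :=
  IsSigmaDef m M (k := 3) fun v => R (v 0) (v 1) (v 2)

/-- `M` is a model of PA⁻ (the nonnegative part of a discretely ordered
commutative semiring). -/
structure PAm (M : Type) [lang.Structure M] : Prop where
  add_assoc : ∀ x y z : M, x + y + z = x + (y + z)
  add_comm : ∀ x y : M, x + y = y + x
  mul_assoc : ∀ x y z : M, x * y * z = x * (y * z)
  mul_comm : ∀ x y : M, x * y = y * x
  ldistrib : ∀ x y z : M, x * (y + z) = x * y + x * z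
  add_zero : ∀ x : M, x + 0 = x
  mul_zero : ∀ x : M, x * 0 = 0
  mul_one : ∀ x : M, x * 1 = x
  lt_trans : ∀ x y z : M, x < y → y < z → x < z
  lt_irrefl : ∀ x : M, ¬x < x
  lt_total : ∀ x y : M, x < y ∨ x = y ∨ y < x
  add_lt_add : ∀ x y z : M, x < y → x + z < y + z
  mul_lt_mul : ∀ x y z : M, x < y → 0 < z → x * z < y * z
  sub_exists : ∀ x y : M, x < y → ∃ z, x + z = y
  zero_lt_one : (0 : M) < 1
  discrete : ∀ x : M, 0 < x → (1 : M) ≤ x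
  zero_le : ∀ x : M, (0 : M) ≤ x

/-- `M` satisfies the Σ_m-induction scheme (with parameters). -/
def ISig (m : ℕ) (M : Type) [lang.Structure M] : Prop :=
  ∀ A : Set M, SigmaDef1 m M A → (0 : M) ∈ A → (∀ x, x ∈ A → x + 1 ∈ A) → ∀ x, x ∈ A

/-- `M` satisfies the Σ_m-collection (bounding) scheme (with parameters). -/
def BSig (m : ℕ) (M : Type) [lang.Structure M] : Prop :=
  ∀ R : M → M → Prop, SigmaDef2 m M R → ∀ a : M,
    (∀ x, x < a → ∃ y, R x y) → ∃ b, ∀ x, x < a → ∃ y, y < b ∧ R x y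

section Coding

variable {M : Type} [lang.Structure M]

/-- `z` is the Cantor pair `⟨x, y⟩`: `2z = (x+y)(x+y+1) + 2y`. -/
def IsPairC (z x y : M) : Prop := z + z = (x + y) * (x + y + 1) + (y + y)

/-- Gödel's β-function: `x = a mod ((i+1)·b + 1)`. -/
def BetaC (a b i x : M) : Prop :=
  x < (i + 1) * b + 1 ∧ ∃ q, a = q * ((i + 1) * b + 1) + x

/-- The sequence coded by `s` (via a Cantor pair of β-function data) has value `x`
at place `i`. -/
def SeqAt (s i x : M) : Prop := ∃ a b, IsPairC s a b ∧ BetaC a b i x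

/-- `c` codes the M-finite set `X` of cardinality `card`: `c = ⟨card, s⟩` where `s`
codes the strictly increasing enumeration of `X` of length `card`. -/
def CodesFinset (c : M) (X : Set M) (card : M) : Prop :=
  ∃ s, IsPairC c card s ∧
    (∀ i, i < card → ∃ x, x ∈ X ∧ SeqAt s i x) ∧
    (∀ i j x y, i < j → j < card → SeqAt s i x → SeqAt s j y → x < y) ∧
    (∀ x, x ∈ X ↔ ∃ i, i < card ∧ SeqAt s i x)

/-- `X` is an M-finite (coded) set. -/
def MFinite (X : Set M) : Prop := ∃ c card : M, CodesFinset c X card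

/-- `d` codes an `e`-element subset `D` of `[0, y)`, i.e. an element of `[y]^e`. -/
def CodesTupleIn (d e y : M) (D : Set M) : Prop :=
  CodesFinset d D e ∧ ∀ z ∈ D, z < y

/-- `f` codes a (finite) function defined on all of `[0, a)`. -/
def CodesFunOn (f a : M) : Prop :=
  ∀ x, x < a → (∃ y, SeqAt f x y) ∧ ∀ y y', SeqAt f x y → SeqAt f x y' → y = y'

/-- `X` is an M-coded subset of `[0, a)`. -/
def MCodedSubset (a : M) (X : Set M) : Prop :=
  MFinite X ∧ ∀ x ∈ X, x < a

end Coding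

/-- An `M`-ultrafilter on `a`: an ultrafilter of the Boolean algebra of
M-finite subsets of `[0, a)`. -/
structure MUltra (M : Type) [lang.Structure M] (a : M) where
  sets : Set (Set M)
  mem_coded : ∀ X ∈ sets, MCodedSubset a X
  univ_mem : {x : M | x < a} ∈ sets
  superset_mem : ∀ X Y : Set M, X ∈ sets → MCodedSubset a Y → X ⊆ Y → Y ∈ sets
  inter_mem : ∀ X Y : Set M, X ∈ sets → Y ∈ sets → X ∩ Y ∈ sets
  empty_not_mem : (∅ : Set M) ∉ sets
  ultra : ∀ X : Set M, MCodedSubset a X → X ∈ sets ∨ {x : M | x < a ∧ x ∉ X} ∈ sets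

section Principles

variable (M : Type) [lang.Structure M]

/-- `F` is (the graph of) a Σ_m-definable injection from `[0, y)` into `[0, x)`. -/
def SigmaInjRel (m : ℕ) (F : M → M → Prop) (y x : M) : Prop :=
  SigmaDef2 m M F ∧
    (∀ u, u < y → ∃ v, v < x ∧ F u v) ∧
    (∀ u v v', u < y → F u v → F u v' → v = v') ∧
    (∀ u u' v, u < y → u' < y → F u v → F u' v → u = u')

/-- There exists a Σ_m-definable injection from `[0, y)` into `[0, x)`. -/
def ExSigmaInj (m : ℕ) (y x : M) : Prop := ∃ F : M → M → Prop, SigmaInjRel M m F y x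

/-- There exists a Σ_m-definable injection from all of `M` into `[0, a)`. -/
def SigmaInjWhole (m : ℕ) (a : M) : Prop :=
  ∃ F : M → M → Prop, SigmaDef2 m M F ∧
    (∀ u, ∃ v, v < a ∧ F u v) ∧
    (∀ u v v', F u v → F u v' → v = v') ∧
    (∀ u u' v, F u v → F u' v → u = u')

/-- CARD(Σ_m): no Σ_m-definable multivalued map sends `M` injectively below `a`. -/
def CARD (m : ℕ) : Prop :=
  ∀ F : M → M → Prop, SigmaDef2 m M F → ∀ a : M,
    (∀ x, ∃ y, y < a ∧ F x y) →
      ∃ x0 x1 y, x0 ≠ x1 ∧ y < a ∧ F x0 y ∧ F x1 y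

/-- GPHP(Σ_m): for every `x` there is `y` with no Σ_m-definable injection of
`[0,y)` into `[0,x)`. -/
def GPHP (m : ℕ) : Prop := ∀ x : M, ∃ y : M, ¬ExSigmaInj M m y x

/-- WPHP(Σ_m): for `x > 0` there is no Σ_m-definable injection of `[0,2x)` into `[0,x)`. -/
def WPHP (m : ℕ) : Prop := ∀ x : M, 0 < x → ¬ExSigmaInj M m (x + x) x

/-- `C` is a Σ_m-definable `k`-coloring of `[y]^e` (acting on codes of
`e`-element subsets of `[0,y)`, independently of the chosen code). -/
def IsColoring (m : ℕ) (e y k : M) (C : M → M → Prop) : Prop :=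
  SigmaDef2 m M C ∧
    (∀ d D, CodesTupleIn d e y D → ∃ i, i < k ∧ C d i) ∧
    (∀ d d' D i i', CodesTupleIn d e y D → CodesTupleIn d' e y D → C d i → C d' i' → i = i')

/-- FRT^e_k(Σ_m): every Σ_m-definable `k`-coloring of some `[y]^e` has an
M-finite homogeneous set of cardinality `x`, for every `x`. -/
def FRT (m : ℕ) (e k : M) : Prop :=
  ∀ x : M, ∃ y : M, ∀ C : M → M → Prop, IsColoring M m e y k C →
    ∃ (c : M) (H : Set M), CodesFinset c H x ∧ (∀ z ∈ H, z < y) ∧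
      ∃ i, ∀ d D, CodesFinset d D e → D ⊆ H → C d i

/-- fairFRT^e_k(Σ_m): the homogeneous set is required to be given as the range of a
Σ_m-definable injection from `[0,x)` into `[0,y)`. -/
def FairFRT (m : ℕ) (e k : M) : Prop :=
  ∀ x : M, ∃ y : M, ∀ C : M → M → Prop, IsColoring M m e y k C →
    ∃ H : M → M → Prop, SigmaInjRel M m H x y ∧
      ∃ i, ∀ d D, CodesFinset d D e → (∀ z ∈ D, ∃ u, u < x ∧ H u z) → C d i

/-- `C` is a Σ_m-definable `k`-coloring of `[0, y)`. -/
def IsColoring1 (m : ℕ) (y k : M) (C : M → M → Prop) : Prop :=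
  SigmaDef2 m M C ∧
    (∀ z, z < y → ∃ i, i < k ∧ C z i) ∧
    (∀ z i i', z < y → C z i → C z i' → i = i')

/-- FRT¹_k(Σ_m): every Σ_m-definable `k`-coloring of some `[0,y)` has an M-finite
homogeneous set of cardinality `x`, for every `x`. -/
def FRT1 (m : ℕ) (k : M) : Prop :=
  ∀ x : M, ∃ y : M, ∀ C : M → M → Prop, IsColoring1 M m y k C →
    ∃ (c : M) (H : Set M), CodesFinset c H x ∧ (∀ z ∈ H, z < y) ∧
      ∃ i, ∀ z ∈ H, C z i

/-- fairFRT¹_k(Σ_m). -/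
def FairFRT1 (m : ℕ) (k : M) : Prop :=
  ∀ x : M, ∃ y : M, ∀ C : M → M → Prop, IsColoring1 M m y k C →
    ∃ H : M → M → Prop, SigmaInjRel M m H x y ∧
      ∃ i, ∀ u v, u < x → H u v → C v i

end Principles

section Approx

variable {M : Type} [lang.Structure M]

/-- `f` is (the graph of) a partial function. -/
def IsPartialFun (f : M → M → Prop) : Prop := ∀ x y y', f x y → f x y' → y = y'

/-- `s` codes an approximation to the partial function `f` of length `b`. -/
def IsApprox (f : M → M → Prop) (s b : M) : Prop :=
  (∀ i, i < b → ∃ v, SeqAt s i v) ∧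
    (∀ i u v x y, i + 1 < b → SeqAt s i u → SeqAt s (i + 1) v → x ≤ u → f x y → y ≤ v)

/-- `s` codes a `g`-stretched approximation to the partial function `f` of length `b`. -/
def IsStretchedApprox (f g : M → M → Prop) (s b : M) : Prop :=
  (∀ i, i < b → ∃ v, SeqAt s i v) ∧
    (∀ i u w v x y, i + 1 < b → SeqAt s i u → g u w → SeqAt s (i + 1) v →
      x ≤ w → f x y → y ≤ v)

/-- The eventual (limit) value of `fun s => h s ·` is `x`. -/
def EvLim (h : M → M → Prop) (x : M) : Prop := ∃ s : M, ∀ t, s < t → h t x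

end Approx

/-- PΣ_m: every partial Σ_m-definable function admits approximations of every length. -/
def PSig (m : ℕ) (M : Type) [lang.Structure M] : Prop :=
  ∀ f : M → M → Prop, SigmaDef2 m M f → IsPartialFun f → ∀ b : M, ∃ s, IsApprox f s b

section Extensions

variable (M N : Type) [lang.Structure M] [lang.Structure N]

/-- `g : M → N` is Σ_m-elementary: Σ_m formulas with parameters from `M` transfer. -/
def SigmaElem (m : ℕ) (g : M → N) : Prop :=
  ∀ (p : ℕ) (φ : lang.BoundedFormula (Fin p) 0), SigmaFm m 0 φ →
    ∀ v : Fin p → M, (φ.Realize v finZeroElim ↔ φ.Realize (g ∘ v) finZeroElim)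

/-- The extension `g : M → N` is cofinal. -/
def Cofinal (g : M → N) : Prop := ∀ z : N, ∃ x : M, z ≤ g x

/-- `[0,a]^M = [0,a]^N`: every element of `N` below `g a` comes from `M`. -/
def SameBelow (g : M → N) (a : M) : Prop := ∀ z : N, z ≤ g a → ∃ x : M, g x = z

end Extensions

section Ramsey

variable {M : Type} [lang.Structure M]

/-- `f` is an M-coded `k`-coloring of `[y]^e` (assigning colors to codes of
`e`-subsets of `[0,y)`, independently of the code). -/
def CodedColoring (f e y k : M) : Prop :=
  (∀ d D, CodesTupleIn d e y D → ∃ i, i < k ∧ SeqAt f d i) ∧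
    (∀ d d' D i i', CodesTupleIn d e y D → CodesTupleIn d' e y D →
      SeqAt f d i → SeqAt f d' i' → i = i')

/-- The coded coloring `f` of `[y]^e` has an M-coded homogeneous set of cardinality `x`. -/
def CodedHomog (f e y x : M) : Prop :=
  ∃ (c : M) (H : Set M), CodesFinset c H x ∧ (∀ z ∈ H, z < y) ∧
    ∃ i, ∀ d D, CodesFinset d D e → D ⊆ H → SeqAt f d i

/-- `y = r(x, e, k)`: `y` is the least size guaranteeing coded homogeneous sets of
cardinality `x` for all coded `k`-colorings of `e`-subsets. -/
def IsRamsey (x e k y : M) : Prop :=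
  (∀ f, CodedColoring f e y k → CodedHomog f e y x) ∧
    (∀ y', y' < y → ∃ f, CodedColoring f e y' k ∧ ¬CodedHomog f e y' x)

/-- `y = r^(b)(x, e, k)`: the `b`-th iterate of the Ramsey function inside `M`. -/
def IterRamsey (x e k b y : M) : Prop :=
  ∃ s : M, SeqAt s 0 x ∧ SeqAt s b y ∧ (∀ i, i ≤ b → ∃ u, SeqAt s i u) ∧
    (∀ i u v, i < b → SeqAt s i u → SeqAt s (i + 1) v → IsRamsey u e k v)

end Ramsey

end ArithFC

/- For GPHP from WPHP take `y = 2x`. For CARD from GPHP, a possibly multivalued injection of the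
whole model into a bounded set becomes a function after uniformizing below the bound, which IΣ_n
allows, and then restricts to every `[0, y)`.

The separating models are sets of germs of functions `ℕ → ℕ`, in an ultrapower of `ℕ`, that are
closed under Σ_{n+1} functions; such a set satisfies IΣ_n and a Łoś theorem for Σ_{n+1} formulas.
Along infinitely many levels, each far above the previous one, choose a generic number by counting:
all but few numbers escape what Σ_{n+1} functions of small index do on few arguments, and one
Σ_{n+1} function predicts every value below a level that is computed from the digits of the generic
number there. Hence digits at higher levels add no new elements below, although a higher digit is
not computable from the lower ones. The models are generated by towers; the one of height `k`
consists of the `ι k` lowest digits at each of the first `k` levels.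

With `ι k = 1`, everything below a level is computed from one element, the tower up to there, so
`[0, y)` is injected into the indices of the computations: GPHP fails. Still no Σ_{n+1} function
maps the model injectively into a bounded set, because the digit at a high level cannot be
recovered from its image: CARD holds. With `ι k = k + 1` the model contains ever more digits of the
generic number at each level, so there are always two of them below the next level that a function
into the present level cannot tell apart: GPHP holds. However, everything below the lowest level
`2t` is computed from `t` alone, and WPHP fails. -/

namespace ArithFC

section DefinableRelations

variable {M : Type} [Zero M] [One M] [Add M] [Mul M] {ι ι' E E' : Type}

/-- The polynomial functions of the coordinates `V i : E → M`, i.e. the semantic counterpart of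
terms; elements of `E` play the role of variable assignments. -/
inductive IsPoly (V : ι → E → M) : (E → M) → Prop
  | var (i : ι) : IsPoly V (V i)
  | zero : IsPoly V fun _ => 0
  | one : IsPoly V fun _ => 1
  | add {f g : E → M} : IsPoly V f → IsPoly V g → IsPoly V fun e => f e + g e
  | mul {f g : E → M} : IsPoly V f → IsPoly V g → IsPoly V fun e => f e * g e

/-- The coordinates on `E × M` that arise from the coordinates `V` by binding one more
variable. -/
def extendVars (V : ι → E → M) (i : Option ι) (p : E × M) : M :=
  i.elim p.2 fun i => V i p.1

theorem IsPoly.subst {V : ι → E → M} {V' : ι' → E' → M} {h : E' → E}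
    (hV : ∀ i, IsPoly V' fun e => V i (h e)) {f : E → M} (hf : IsPoly V f) :
    IsPoly V' fun e => f (h e) := by
  induction hf with
  | var i => exact hV i
  | zero => exact .zero
  | one => exact .one
  | add _ _ ihf ihg => exact ihf.add ihg
  | mul _ _ ihf ihg => exact ihf.mul ihg

theorem IsPoly.bound (V : ι → E → M) : IsPoly (extendVars V) Prod.snd :=
  .var (V := extendVars V) none

theorem IsPoly.lift {V : ι → E → M} {f : E → M} (hf : IsPoly V f) :
    IsPoly (extendVars V) fun p => f p.1 :=
  hf.subst (h := Prod.fst) fun i => .var (V := extendVars V) (some i)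

theorem IsPoly.extend {V : ι → E → M} {V' : ι' → E' → M} {h : E' → E}
    (hV : ∀ i, IsPoly V' fun e => V i (h e)) (i : Option ι) :
    IsPoly (extendVars V') fun p => extendVars V i (Prod.map h id p) := by
  cases i with
  | none => exact .bound V'
  | some i => exact (hV i).lift

variable [LT M]

/-- The semantic counterpart of Δ₀ formulas: the relations on `E` generated from (in)equalities
between polynomials in the coordinates `V` by implication and bounded quantification. -/
inductive Delta0Rel : ∀ {ι E : Type}, (ι → E → M) → (E → Prop) → Prop
  | falsum {ι E : Type} {V : ι → E → M} : Delta0Rel V fun _ => False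
  | eq {ι E : Type} {V : ι → E → M} {f g : E → M} :
      IsPoly V f → IsPoly V g → Delta0Rel V fun e => f e = g e
  | lt {ι E : Type} {V : ι → E → M} {f g : E → M} :
      IsPoly V f → IsPoly V g → Delta0Rel V fun e => f e < g e
  | imp {ι E : Type} {V : ι → E → M} {R S : E → Prop} :
      Delta0Rel V R → Delta0Rel V S → Delta0Rel V fun e => R e → S e
  | ball {ι E : Type} {V : ι → E → M} {f : E → M} {R : E × M → Prop} :
      IsPoly V f → Delta0Rel (extendVars V) R → Delta0Rel V fun e => ∀ x, x < f e → R (e, x)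

/-- The semantic counterpart of Σ_m formulas, with exactly `m` alternating quantifier blocks in
front of a Δ₀ relation. -/
inductive SigmaRel : ℕ → ∀ {ι E : Type}, (ι → E → M) → (E → Prop) → Prop
  | delta0 {ι E : Type} {V : ι → E → M} {R : E → Prop} : Delta0Rel V R → SigmaRel 0 V R
  | compl {m : ℕ} {ι E : Type} {V : ι → E → M} {R : E → Prop} :
      SigmaRel m V R → SigmaRel (m + 1) V fun e => ¬R e
  | ex {m : ℕ} {ι E : Type} {V : ι → E → M} {R : E × M → Prop} :
      SigmaRel (m + 1) (extendVars V) R → SigmaRel (m + 1) V fun e => ∃ x, R (e, x)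

theorem Delta0Rel.congr {V : ι → E → M} {R S : E → Prop} (hR : Delta0Rel V R)
    (h : ∀ e, R e ↔ S e) : Delta0Rel V S :=
  funext (fun e => propext (h e)) ▸ hR

theorem Delta0Rel.not {V : ι → E → M} {R : E → Prop} (hR : Delta0Rel V R) :
    Delta0Rel V fun e => ¬R e :=
  hR.imp .falsum

theorem Delta0Rel.and {V : ι → E → M} {R S : E → Prop} (hR : Delta0Rel V R)
    (hS : Delta0Rel V S) : Delta0Rel V fun e => R e ∧ S e :=
  (hR.imp hS.not).not.congr fun e => by simp

theorem Delta0Rel.or {V : ι → E → M} {R S : E → Prop} (hR : Delta0Rel V R)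
    (hS : Delta0Rel V S) : Delta0Rel V fun e => R e ∨ S e :=
  (hR.not.imp hS).congr fun e => by tauto

theorem Delta0Rel.subst {V : ι → E → M} {R : E → Prop} (hR : Delta0Rel V R)
    {V' : ι' → E' → M} {h : E' → E} (hV : ∀ i, IsPoly V' fun e => V i (h e)) :
    Delta0Rel V' fun e => R (h e) := by
  induction hR generalizing ι' E' with
  | falsum => exact .falsum
  | eq hf hg => exact .eq (hf.subst hV) (hg.subst hV)
  | lt hf hg => exact .lt (hf.subst hV) (hg.subst hV)
  | imp _ _ ihR ihS => exact (ihR hV).imp (ihS hV)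
  | ball hf _ ih => exact .ball (hf.subst hV) (ih (.extend hV))

theorem SigmaRel.congr {m : ℕ} {V : ι → E → M} {R S : E → Prop} (hR : SigmaRel m V R)
    (h : ∀ e, R e ↔ S e) : SigmaRel m V S :=
  funext (fun e => propext (h e)) ▸ hR

theorem SigmaRel.subst {m : ℕ} {V : ι → E → M} {R : E → Prop} (hR : SigmaRel m V R)
    {V' : ι' → E' → M} {h : E' → E} (hV : ∀ i, IsPoly V' fun e => V i (h e)) :
    SigmaRel m V' fun e => R (h e) := by
  induction hR generalizing ι' E' with
  | delta0 hR => exact .delta0 (hR.subst hV)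
  | compl _ ih => exact .compl (ih hV)
  | ex _ ih => exact .ex (ih (.extend hV))

theorem SigmaRel.lift {m : ℕ} {V : ι → E → M} {R : E → Prop} (hR : SigmaRel m V R) :
    SigmaRel m (extendVars V) fun p => R p.1 :=
  hR.subst (h := Prod.fst) fun i => .var (V := extendVars V) (some i)

theorem SigmaRel.of_not {m : ℕ} {V : ι → E → M} {R : E → Prop}
    (hR : SigmaRel m V fun e => ¬R e) : SigmaRel (m + 1) V R :=
  hR.compl.congr fun _ => not_not

theorem SigmaRel.succ {m : ℕ} {V : ι → E → M} {R : E → Prop} (hR : SigmaRel m V R) :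
    SigmaRel (m + 1) V R := by
  induction hR with
  | delta0 hR => exact .of_not (.delta0 hR.not)
  | compl _ ih => exact ih.compl
  | ex _ ih => exact ih.ex

theorem SigmaRel.mono {m m' : ℕ} (hm : m ≤ m') {V : ι → E → M} {R : E → Prop}
    (hR : SigmaRel m V R) : SigmaRel m' V R := by
  induction hm with
  | refl => exact hR
  | step _ ih => exact ih.succ

theorem Delta0Rel.sigmaRel (m : ℕ) {V : ι → E → M} {R : E → Prop} (hR : Delta0Rel V R) :
    SigmaRel m V R :=
  (SigmaRel.delta0 hR).mono (Nat.zero_le m)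

theorem SigmaRel.succ_induction {m : ℕ}
    {motive : ∀ {ι E : Type}, (ι → E → M) → (E → Prop) → Prop}
    (compl : ∀ {ι E : Type} {V : ι → E → M} {R : E → Prop}, SigmaRel m V R →
      motive V fun e => ¬R e)
    (ex : ∀ {ι E : Type} {V : ι → E → M} {R : E × M → Prop}, motive (extendVars V) R →
      motive V fun e => ∃ x, R (e, x))
    {V : ι → E → M} {R : E → Prop} (hR : SigmaRel (m + 1) V R) : motive V R := by
  generalize hk : m + 1 = k at hR
  induction hR with
  | delta0 => cases hk
  | compl hR => cases hk; exact compl hR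
  | ex _ ih => exact ex (ih hk)

theorem SigmaRel.connective_succ {op : Prop → Prop → Prop} {m : ℕ}
    (ex_left : ∀ (P : M → Prop) q, op (∃ x, P x) q ↔ ∃ x, op (P x) q)
    (ex_right : ∀ p (Q : M → Prop), op p (∃ x, Q x) ↔ ∃ x, op p (Q x))
    (compl_compl : ∀ {ι E : Type} {V : ι → E → M} {R S : E → Prop}, SigmaRel m V R →
      SigmaRel m V S → SigmaRel (m + 1) V fun e => op (¬R e) (¬S e))
    {V : ι → E → M} {R S : E → Prop} (hR : SigmaRel (m + 1) V R) (hS : SigmaRel (m + 1) V S) :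
    SigmaRel (m + 1) V fun e => op (R e) (S e) := by
  refine SigmaRel.succ_induction (motive := fun V R => ∀ {S}, SigmaRel (m + 1) V S →
    SigmaRel (m + 1) V fun e => op (R e) (S e)) (fun hR _ hS => ?_)
    (fun ih _ hS => (ih hS.lift).ex.congr fun e => by simp only [ex_left]) hR hS
  exact SigmaRel.succ_induction (motive := fun V S => ∀ {R}, SigmaRel m V R →
    SigmaRel (m + 1) V fun e => op (¬R e) (S e)) (fun hS _ hR => compl_compl hR hS)
    (fun ih _ hR => (ih hR.lift).ex.congr fun e => by simp only [ex_right]) hS hR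

theorem SigmaRel.and_and_or (m : ℕ) :
    ∀ {ι E : Type} {V : ι → E → M} {R S : E → Prop}, SigmaRel m V R → SigmaRel m V S →
      SigmaRel m V (fun e => R e ∧ S e) ∧ SigmaRel m V (fun e => R e ∨ S e) := by
  have : Nonempty M := ⟨0⟩
  induction m with
  | zero =>
    rintro ι E V R S (hR | _) (hS | _)
    exact ⟨.delta0 (hR.and hS), .delta0 (hR.or hS)⟩
  | succ m ih =>
    intro ι E V R S hR hS
    exact ⟨connective_succ (fun _ _ => exists_and_right.symm) (fun _ _ => exists_and_left.symm)
        (fun hR hS => (ih hR hS).2.compl.congr fun e => not_or) hR hS,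
      connective_succ (fun _ _ => by simp [exists_or]) (fun _ _ => by simp [exists_or])
        (fun hR hS => (ih hR hS).1.compl.congr fun e => not_and_or) hR hS⟩

theorem SigmaRel.and {m : ℕ} {V : ι → E → M} {R S : E → Prop} (hR : SigmaRel m V R)
    (hS : SigmaRel m V S) : SigmaRel m V fun e => R e ∧ S e :=
  (and_and_or m hR hS).1

theorem SigmaRel.or {m : ℕ} {V : ι → E → M} {R S : E → Prop} (hR : SigmaRel m V R)
    (hS : SigmaRel m V S) : SigmaRel m V fun e => R e ∨ S e :=
  (and_and_or m hR hS).2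

theorem SigmaRel.bex {m : ℕ} {V : ι → E → M} {f : E → M} {R : E × M → Prop} (hf : IsPoly V f)
    (hR : SigmaRel m (extendVars V) R) : SigmaRel m V fun e => ∃ x, x < f e ∧ R (e, x) := by
  obtain hR | _ := id hR
  · exact .delta0 ((Delta0Rel.ball hf hR.not).not.congr fun e => by simp)
  all_goals exact .ex (((Delta0Rel.lt (.bound V) hf.lift).sigmaRel _).and hR)

end DefinableRelations

section Formulas

variable {M ι E α : Type} {k m : ℕ}

/-- The variables for `extendVars V`, given the variables `τ` for `V`. -/
def extendIndex (τ : ι → α ⊕ Fin k) (i : Option ι) : α ⊕ Fin (k + 1) :=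
  i.elim (.inr (Fin.last k)) fun i => (τ i).map id Fin.castSucc

theorem extendVars_eq_elim_snoc {V : ι → E → M} {τ : ι → α ⊕ Fin k} {e : E} {v : α → M}
    {xs : Fin k → M} (h : ∀ i, V i e = Sum.elim v xs (τ i)) (x : M) (i : Option ι) :
    extendVars V i (e, x) = Sum.elim v (Fin.snoc xs x) (extendIndex τ i) := by
  cases i with
  | none => simp only [extendVars, extendIndex, Option.elim_none, Sum.elim_inr, Fin.snoc_last]
  | some i =>
    simp only [extendVars, extendIndex, Option.elim_some, h i]
    cases τ i <;> simp

variable [lang.Structure M]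

theorem realize_func_zero (ts : Fin 0 → lang.Term α) (v : α → M) :
    (Term.func (Func.zero : lang.Functions 0) ts).realize v = 0 :=
  congrArg (Structure.funMap (L := lang) Func.zero) (Subsingleton.elim _ _)

theorem realize_func_one (ts : Fin 0 → lang.Term α) (v : α → M) :
    (Term.func (Func.one : lang.Functions 0) ts).realize v = 1 :=
  congrArg (Structure.funMap (L := lang) Func.one) (Subsingleton.elim _ _)

theorem realize_func_add (ts : Fin 2 → lang.Term α) (v : α → M) :
    (Term.func (Func.add : lang.Functions 2) ts).realize v =
      (ts 0).realize v + (ts 1).realize v :=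
  congrArg (Structure.funMap (L := lang) Func.add) (funext (Fin.forall_fin_two.2 ⟨rfl, rfl⟩))

theorem realize_func_mul (ts : Fin 2 → lang.Term α) (v : α → M) :
    (Term.func (Func.mul : lang.Functions 2) ts).realize v =
      (ts 0).realize v * (ts 1).realize v :=
  congrArg (Structure.funMap (L := lang) Func.mul) (funext (Fin.forall_fin_two.2 ⟨rfl, rfl⟩))

theorem realize_rel_lt (ts : Fin 2 → lang.Term (α ⊕ Fin k)) (v : α → M) (xs : Fin k → M) :
    (BoundedFormula.rel (Rel.lt : lang.Relations 2) ts).Realize v xs ↔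
      (ts 0).realize (Sum.elim v xs) < (ts 1).realize (Sum.elim v xs) :=
  iff_of_eq <| congrArg (Structure.RelMap (L := lang) Rel.lt)
    (funext (Fin.forall_fin_two.2 ⟨rfl, rfl⟩))

theorem realize_liftAt_snoc (t : lang.Term (α ⊕ Fin k)) (v : α → M) (xs : Fin k → M) (x : M) :
    (t.liftAt 1 k).realize (Sum.elim v (Fin.snoc xs x)) = t.realize (Sum.elim v xs) := by
  rw [Term.realize_liftAt]
  congr 1
  funext i
  rcases i with a | i
  · rfl
  · simp only [Function.comp_apply, Sum.map_inr, Sum.elim_inr, i.is_lt, if_true]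
    exact Fin.snoc_castSucc (α := fun _ => M) (x := x) (p := xs) (i := i)

theorem realize_boundedAll (t : lang.Term (α ⊕ Fin k)) (φ : lang.BoundedFormula α (k + 1))
    (v : α → M) (xs : Fin k → M) :
    (BoundedFormula.all ((ltFm (Term.var (Sum.inr (Fin.last k))) (t.liftAt 1 k)).imp φ)).Realize
      v xs ↔ ∀ x, x < t.realize (Sum.elim v xs) → φ.Realize v (Fin.snoc xs x) := by
  refine BoundedFormula.realize_all.trans (forall_congr' fun x => ?_)
  rw [BoundedFormula.realize_imp, ltFm, realize_rel_lt]
  simp only [Matrix.cons_val_zero, Matrix.cons_val_one, realize_liftAt_snoc,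
    Term.realize_var, Sum.elim_inr, Fin.snoc_last]

theorem isPoly_realize (V : ι → E → M) (t : lang.Term ι) :
    IsPoly V fun e => t.realize fun i => V i e := by
  induction t with
  | var i => exact .var i
  | func f ts ih =>
    cases f with
    | zero => simpa only [realize_func_zero] using .zero
    | one => simpa only [realize_func_one] using .one
    | add => simpa only [realize_func_add] using (ih 0).add (ih 1)
    | mul => simpa only [realize_func_mul] using (ih 0).mul (ih 1)

theorem IsPoly.exists_term {V : ι → E → M} {f : E → M} (hf : IsPoly V f) :
    ∃ t : lang.Term ι, ∀ e, t.realize (fun i => V i e) = f e := by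
  induction hf with
  | var i => exact ⟨.var i, fun _ => rfl⟩
  | zero => exact ⟨.func Func.zero ![], fun _ => realize_func_zero _ _⟩
  | one => exact ⟨.func Func.one ![], fun _ => realize_func_one _ _⟩
  | add _ _ ihf ihg =>
    obtain ⟨⟨t, ht⟩, u, hu⟩ := ihf, ihg
    exact ⟨.func Func.add ![t, u], fun e =>
      (realize_func_add _ _).trans (congrArg₂ (· + ·) (ht e) (hu e))⟩
  | mul _ _ ihf ihg =>
    obtain ⟨⟨t, ht⟩, u, hu⟩ := ihf, ihg
    exact ⟨.func Func.mul ![t, u], fun e =>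
      (realize_func_mul _ _).trans (congrArg₂ (· * ·) (ht e) (hu e))⟩

/-- Coordinates for the free variables `α` followed by the bound variables `Fin k` of a formula:
the first component of a point of the context assigns the former, the second the latter. -/
def formulaVars (M α : Type) (k : ℕ) (i : α ⊕ Fin k) (e : (α → M) × (Fin k → M)) : M :=
  Sum.elim e.1 e.2 i

theorem isPoly_formulaVars_snoc (i : α ⊕ Fin (k + 1)) :
    IsPoly (extendVars (formulaVars M α k)) fun p =>
      formulaVars M α (k + 1) i (p.1.1, Fin.snoc p.1.2 p.2) := by
  obtain a | j := i
  · exact (IsPoly.var (V := formulaVars M α k) (.inl a)).lift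
  · induction j using Fin.lastCases with
    | last => simpa only [formulaVars, Sum.elim_inr, Fin.snoc_last] using .bound _
    | cast j =>
      simpa only [formulaVars, Sum.elim_inr, Fin.snoc_castSucc] using
        (IsPoly.var (V := formulaVars M α k) (.inr j)).lift

theorem IsDelta0.delta0Rel {φ : lang.BoundedFormula α k} (hφ : IsDelta0 k φ) :
    Delta0Rel (formulaVars M α k) fun e => φ.Realize e.1 e.2 := by
  induction hφ with
  | falsum => exact .falsum
  | equal k t u => exact .eq (isPoly_realize _ t) (isPoly_realize _ u)
  | rel k l R ts =>
    cases R
    simpa only [realize_rel_lt] using .lt (isPoly_realize _ (ts 0)) (isPoly_realize _ (ts 1))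
  | imp _ _ _ ihφ ihψ => exact ihφ.imp ihψ
  | bdAll k t _ ih =>
    simpa only [realize_boundedAll] using
      .ball (isPoly_realize _ t) (ih.subst isPoly_formulaVars_snoc)

mutual

theorem SigmaFm.sigmaRel : ∀ {m k : ℕ} {φ : lang.BoundedFormula α k}, SigmaFm m k φ →
    SigmaRel m (formulaVars M α k) fun e => φ.Realize e.1 e.2
  | _, _, _, .delta0 m _ h => h.delta0Rel.sigmaRel m
  | _, _, _, .ofPi _ _ h => h.sigmaRel_not.of_not
  | _, _, _, .ex _ _ h => by
    simpa only [BoundedFormula.realize_ex] using (h.sigmaRel.subst isPoly_formulaVars_snoc).ex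

theorem PiFm.sigmaRel_not : ∀ {m k : ℕ} {φ : lang.BoundedFormula α k}, PiFm m k φ →
    SigmaRel m (formulaVars M α k) fun e => ¬φ.Realize e.1 e.2
  | _, _, _, .delta0 m _ h => h.delta0Rel.not.sigmaRel m
  | _, _, _, .ofSigma _ _ h => h.sigmaRel.compl
  | _, _, _, .all _ _ h => by
    simpa only [BoundedFormula.realize_all, not_forall] using
      (h.sigmaRel_not.subst isPoly_formulaVars_snoc).ex

end

/-- `φ` expresses `R` when the coordinate `V i` is written as the variable `τ i`. -/
def Expresses (φ : lang.BoundedFormula α k) (V : ι → E → M) (τ : ι → α ⊕ Fin k)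
    (R : E → Prop) : Prop :=
  ∀ e v xs, (∀ i, V i e = Sum.elim v xs (τ i)) → (φ.Realize v xs ↔ R e)

theorem Delta0Rel.exists_isDelta0 {V : ι → E → M} {R : E → Prop} (hR : Delta0Rel V R)
    (τ : ι → α ⊕ Fin k) : ∃ φ : lang.BoundedFormula α k, IsDelta0 k φ ∧ Expresses φ V τ R := by
  have exists_term {ι E : Type} {V : ι → E → M} {k : ℕ} (τ : ι → α ⊕ Fin k) {f : E → M}
      (hf : IsPoly V f) : ∃ t : lang.Term (α ⊕ Fin k), ∀ e v xs,
        (∀ i, V i e = Sum.elim v xs (τ i)) → t.realize (Sum.elim v xs) = f e := by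
    obtain ⟨t, ht⟩ := hf.exists_term
    refine ⟨t.relabel τ, fun e v xs h => ?_⟩
    rw [Term.realize_relabel, ← ht e]
    exact congrArg t.realize (funext fun i => (h i).symm)
  induction hR generalizing k with
  | falsum => exact ⟨_, .falsum k, fun _ _ _ _ => Iff.rfl⟩
  | eq hf hg =>
    obtain ⟨⟨t, ht⟩, u, hu⟩ := exists_term τ hf, exists_term τ hg
    exact ⟨_, .equal k t u, fun e v xs h =>
      iff_of_eq (congrArg₂ (· = ·) (ht e v xs h) (hu e v xs h))⟩
  | lt hf hg =>
    obtain ⟨⟨t, ht⟩, u, hu⟩ := exists_term τ hf, exists_term τ hg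
    exact ⟨ltFm t u, .rel k _ _ _, fun e v xs h => (realize_rel_lt _ v xs).trans
      (iff_of_eq (congrArg₂ (· < ·) (ht e v xs h) (hu e v xs h)))⟩
  | imp _ _ ihR ihS =>
    obtain ⟨⟨φ, hφ, hR⟩, ψ, hψ, hS⟩ := ihR τ, ihS τ
    exact ⟨_, .imp k hφ hψ, fun e v xs h => imp_congr (hR e v xs h) (hS e v xs h)⟩
  | ball hf _ ih =>
    obtain ⟨⟨t, ht⟩, φ, hφ, hR⟩ := exists_term τ hf, ih (extendIndex τ)
    refine ⟨_, .bdAll k t hφ, fun e v xs h => ?_⟩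
    rw [realize_boundedAll, ht e v xs h]
    exact forall_congr' fun x =>
      imp_congr_right fun _ => hR _ _ _ (extendVars_eq_elim_snoc h x)

theorem SigmaRel.exists_sigmaFm {V : ι → E → M} {R : E → Prop} (hR : SigmaRel m V R)
    (τ : ι → α ⊕ Fin k) :
    (∃ φ : lang.BoundedFormula α k, SigmaFm m k φ ∧ Expresses φ V τ R) ∧
      ∃ φ : lang.BoundedFormula α k, PiFm m k φ ∧ Expresses φ V τ fun e => ¬R e := by
  induction hR generalizing k with
  | delta0 hR =>
    obtain ⟨⟨φ, hφ, hR⟩, ψ, hψ, hR'⟩ := hR.exists_isDelta0 τ, hR.not.exists_isDelta0 τ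
    exact ⟨⟨φ, .delta0 _ _ hφ, hR⟩, ψ, .delta0 _ _ hψ, hR'⟩
  | compl _ ih =>
    obtain ⟨⟨φ, hφ, hR⟩, ψ, hψ, hR'⟩ := ih τ
    exact ⟨⟨ψ, .ofPi _ _ hψ, hR'⟩, φ, .ofSigma _ _ hφ, fun e v xs h =>
      (hR e v xs h).trans not_not.symm⟩
  | ex _ ih =>
    obtain ⟨⟨φ, hφ, hR⟩, ψ, hψ, hR'⟩ := ih (extendIndex τ)
    refine ⟨⟨_, .ex _ _ hφ, fun e v xs h => ?_⟩, _, .all _ _ hψ, fun e v xs h => ?_⟩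
    · exact BoundedFormula.realize_ex.trans
        (exists_congr fun x => hR _ _ _ (extendVars_eq_elim_snoc h x))
    · exact BoundedFormula.realize_all.trans
        ((forall_congr' fun x => hR' _ _ _ (extendVars_eq_elim_snoc h x)).trans not_exists.symm)

/-- Coordinates for `k` variables and `p` parameters `w`. -/
def paramVars {p : ℕ} (w : Fin p → M) (i : Fin k ⊕ Fin p) (v : Fin k → M) : M :=
  Sum.elim v w i

theorem isSigmaDef_iff {A : (Fin k → M) → Prop} :
    IsSigmaDef m M A ↔ ∃ (p : ℕ) (w : Fin p → M), SigmaRel m (paramVars w) A := by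
  constructor
  · rintro ⟨p, φ, w, hφ, hA⟩
    refine ⟨p, w, (hφ.sigmaRel.subst (h := fun v => (Sum.elim v w, finZeroElim)) ?_).congr
      fun v => (hA v).symm⟩
    rintro (i | i)
    · exact .var (V := paramVars w) i
    · exact i.elim0
  · rintro ⟨p, w, hA⟩
    obtain ⟨φ, hφ, h⟩ := (hA.exists_sigmaFm (α := Fin k ⊕ Fin p) (k := 0) .inl).1
    exact ⟨p, φ, w, hφ, fun v => (h v (Sum.elim v w) finZeroElim fun _ => rfl).symm⟩

theorem SigmaRel.isSigmaDef [Finite ι] {V : ι → E → M} {R : E → Prop} (hR : SigmaRel m V R)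
    {h : (Fin k → M) → E} (hh : ∀ i, (∃ j, ∀ v, V i (h v) = v j) ∨ ∃ c, ∀ v, V i (h v) = c) :
    IsSigmaDef m M fun v => R (h v) := by
  obtain ⟨p, ⟨index⟩⟩ := Finite.exists_equiv_fin ι
  refine isSigmaDef_iff.2 ⟨p, fun j => V (index.symm j) (h fun _ => 0), hR.subst fun i => ?_⟩
  obtain ⟨j, hj⟩ | ⟨c, hc⟩ := hh i
  · simp only [hj]
    exact .var (V := paramVars _) (.inl j)
  · convert IsPoly.var (V := paramVars _) (.inr (index i)) with v
    simp [paramVars, hc]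

end Formulas

section Induction

variable {M : Type} [Zero M] [One M] [Add M] [LT M]

/-- The facts on the order of `M` needed to bound quantifiers; they hold in models of PA⁻ and
in `ℕ`. -/
structure DiscreteOrder (M : Type) [Zero M] [One M] [Add M] [LT M] : Prop where
  not_lt_zero (x : M) : ¬x < 0
  lt_add_one_iff (x y : M) : x < y + 1 ↔ x < y ∨ x = y
  trans {x y z : M} : x < y → y < z → x < z
  trichotomous (x y : M) : x < y ∨ x = y ∨ y < x
  exists_gt_both (x y : M) : ∃ z, x < z ∧ y < z

variable [Mul M]

/-- Induction for relations that are Σ_m in finitely many coordinates. -/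
def SigmaInduction (M : Type) [Zero M] [One M] [Add M] [Mul M] [LT M] (m : ℕ) : Prop :=
  ∀ ⦃ι E : Type⦄ [Finite ι] ⦃V : ι → E → M⦄ ⦃R : E × M → Prop⦄, SigmaRel m (extendVars V) R →
    ∀ e, R (e, 0) → (∀ x, R (e, x) → R (e, x + 1)) → ∀ x, R (e, x)

/-- Closure of Σ_m relations in finitely many coordinates under bounded universal
quantification. -/
def SigmaBoundedAll (M : Type) [Zero M] [One M] [Add M] [Mul M] [LT M] (m : ℕ) : Prop :=
  ∀ ⦃ι E : Type⦄ [Finite ι] ⦃V : ι → E → M⦄ ⦃f : E → M⦄ ⦃R : E × M → Prop⦄, IsPoly V f →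
    SigmaRel m (extendVars V) R → SigmaRel m V fun e => ∀ x, x < f e → R (e, x)

theorem SigmaInduction.mono {m m' : ℕ} (hm : m ≤ m') (h : SigmaInduction M m') :
    SigmaInduction M m :=
  fun _ _ _ _ _ hR => h (hR.mono hm)

variable {ι E : Type} [Finite ι] {m : ℕ} {V : ι → E → M}

theorem SigmaRel.bex_not (hball : SigmaBoundedAll M m) {f : E → M} {R : E × M → Prop}
    (hf : IsPoly V f) (hR : SigmaRel m (extendVars V) fun p => ¬R p) :
    SigmaRel m V fun e => ¬∃ x, x < f e ∧ R (e, x) :=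
  (hball hf hR).congr fun e => by simp only [not_exists, not_and]

theorem SigmaRel.exists_matrix (hM : DiscreteOrder M) (hball : SigmaBoundedAll M m)
    {R : E → Prop} (hR : SigmaRel (m + 1) V R) :
    ∃ θ : E × M → Prop, SigmaRel m (extendVars V) (fun p => ¬θ p) ∧
      ∀ e, R e ↔ ∃ b, θ (e, b) := by
  have : Nonempty M := ⟨0⟩
  refine SigmaRel.succ_induction (motive := fun {ι E} (V : ι → E → M) R => ∀ [Finite ι],
    ∃ θ : E × M → Prop, SigmaRel m (extendVars V) (fun p => ¬θ p) ∧
      ∀ e, R e ↔ ∃ b, θ (e, b)) ?_ ?_ hR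
  · intro ι E V R hR _
    exact ⟨fun p => ¬R p.1, hR.lift.congr fun p => not_not.symm, fun e => (exists_const M).symm⟩
  · intro ι E V R ih _
    obtain ⟨θ, hθ, hRθ⟩ := ih
    refine ⟨fun p => ∃ x, x < p.2 ∧ ∃ b, b < p.2 ∧ θ ((p.1, x), b), ?_, fun e => ?_⟩
    · refine .bex_not (R := fun q : (E × M) × M => ∃ b, b < q.1.2 ∧ θ ((q.1.1, q.2), b))
        hball (.bound V) ?_
      refine .bex_not (R := fun r : ((E × M) × M) × M => θ ((r.1.1.1, r.1.2), r.2))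
        hball (IsPoly.bound V).lift ?_
      refine hθ.subst (h := fun r : ((E × M) × M) × M => ((r.1.1.1, r.1.2), r.2)) ?_
      rintro (_ | _ | i)
      exacts [.bound _, (IsPoly.bound _).lift, (IsPoly.var i).lift.lift.lift]
    · constructor
      · rintro ⟨x, hx⟩
        obtain ⟨b, hb⟩ := (hRθ _).1 hx
        obtain ⟨c, hxc, hbc⟩ := hM.exists_gt_both x b
        exact ⟨c, x, hxc, b, hbc, hb⟩
      · rintro ⟨_, x, _, b, _, h⟩
        exact ⟨x, (hRθ _).2 ⟨b, h⟩⟩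

omit [Finite ι] in
theorem SigmaRel.not_ball_bex (hball : SigmaBoundedAll M m) {θ : (E × M) × M → Prop}
    (hθ : SigmaRel m (extendVars (extendVars V)) fun p => ¬θ p) {ι' E' : Type} [Finite ι']
    {V' : ι' → E' → M} {h : E' → E} (hV : ∀ i, IsPoly V' fun e => V i (h e)) {f g : E' → M}
    (hf : IsPoly V' f) (hg : IsPoly V' g) :
    SigmaRel m V' fun e => ¬∀ x, x < f e → ∃ b, b < g e ∧ θ ((h e, x), b) := by
  have hinner : SigmaRel m (extendVars V') fun p => ¬∃ b, b < g p.1 ∧ θ ((h p.1, p.2), b) :=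
    .bex_not (R := fun q : (E' × M) × M => θ ((h q.1.1, q.1.2), q.2)) hball hg.lift
      (hθ.subst (.extend (.extend hV)))
  exact (SigmaRel.bex hf hinner).congr fun e => by simp only [not_forall, exists_prop]

theorem exists_bound_of_forall_exists (hM : DiscreteOrder M) (hball : SigmaBoundedAll M m)
    (hind : SigmaInduction M (m + 1)) {θ : (E × M) × M → Prop}
    (hθ : SigmaRel m (extendVars (extendVars V)) fun p => ¬θ p) {e : E}
    (h : ∀ x, ∃ b, θ ((e, x), b)) (a : M) :
    ∃ B, ∀ x, x < a → ∃ b, b < B ∧ θ ((e, x), b) := by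
  have hS : SigmaRel (m + 1) (extendVars V) fun p : E × M =>
      ∃ B, ∀ x, x < p.2 → ∃ b, b < B ∧ θ ((p.1, x), b) :=
    .ex (R := fun q : (E × M) × M => ∀ x, x < q.1.2 → ∃ b, b < q.2 ∧ θ ((q.1.1, x), b))
      (.of_not (.not_ball_bex hball hθ (fun i => (IsPoly.var i).lift.lift)
        (IsPoly.bound V).lift (.bound _)))
  refine hind hS e ⟨0, fun x hx => (hM.not_lt_zero x hx).elim⟩ (fun c ⟨B, hB⟩ => ?_) a
  obtain ⟨b, hb⟩ := h c
  obtain ⟨B', hBB', hbB'⟩ := hM.exists_gt_both B b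
  refine ⟨B', fun x hx => ?_⟩
  obtain hx | rfl := (hM.lt_add_one_iff x c).1 hx
  · obtain ⟨b', hb', hθ⟩ := hB x hx
    exact ⟨b', hM.trans hb' hBB', hθ⟩
  · exact ⟨b, hbB', hb⟩

theorem SigmaBoundedAll.succ (hM : DiscreteOrder M) (hball : SigmaBoundedAll M m)
    (hind : SigmaInduction M (m + 1)) : SigmaBoundedAll M (m + 1) := by
  intro ι E _ V f R hf hR
  have hR' : SigmaRel (m + 1) (extendVars V) fun p => ¬p.2 < f p.1 ∨ R p :=
    (((Delta0Rel.lt (.bound V) hf.lift).not).sigmaRel _).or hR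
  obtain ⟨θ, hθ, hRθ⟩ := hR'.exists_matrix hM hball
  have hB : SigmaRel (m + 1) V fun e => ∃ B, ∀ x, x < f e → ∃ b, b < B ∧ θ ((e, x), b) :=
    .ex (R := fun p : E × M => ∀ x, x < f p.1 → ∃ b, b < p.2 ∧ θ ((p.1, x), b))
      (.of_not (.not_ball_bex hball hθ (fun i => (IsPoly.var i).lift) hf.lift (.bound V)))
  refine hB.congr fun e => ⟨fun ⟨B, hB⟩ x hx => ?_, fun h => ?_⟩
  · obtain ⟨b, -, hb⟩ := hB x hx
    exact ((hRθ _).2 ⟨b, hb⟩).resolve_left (not_not.2 hx)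
  · refine exists_bound_of_forall_exists hM hball hind hθ (fun x => (hRθ _).1 ?_) (f e)
    exact (em (x < f e)).elim (fun hx => .inr (h x hx)) .inl

theorem SigmaInduction.sigmaBoundedAll (hM : DiscreteOrder M) (hind : SigmaInduction M m) :
    SigmaBoundedAll M m := by
  induction m with
  | zero =>
    rintro ι E _ V f R hf (hR | _)
    exact .delta0 (.ball hf hR)
  | succ m ih => exact SigmaBoundedAll.succ hM (ih (hind.mono m.le_succ)) hind

theorem exists_least_of_sigmaRel_not (hM : DiscreteOrder M) (hind : SigmaInduction M m)
    {R : E × M → Prop} (hR : SigmaRel m (extendVars V) fun p => ¬R p) {e : E} {x : M}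
    (hx : R (e, x)) : ∃ z, R (e, z) ∧ ∀ y, y < z → ¬R (e, y) := by
  by_contra! hleast
  have hbelow : SigmaRel m (extendVars V) fun p => ∀ y, y < p.2 → ¬R (p.1, y) := by
    refine hind.sigmaBoundedAll hM (R := fun q : (E × M) × M => ¬R (q.1.1, q.2)) (.bound V)
      (hR.subst (h := fun q : (E × M) × M => (q.1.1, q.2)) ?_)
    rintro (_ | i)
    exacts [.bound _, (IsPoly.var i).lift.lift]
  have hnone (z : M) : ∀ y, y < z → ¬R (e, y) := by
    refine hind hbelow e (fun y hy => (hM.not_lt_zero y hy).elim) (fun z ih y hy hRy => ?_) z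
    obtain hy | rfl := (hM.lt_add_one_iff y z).1 hy
    · exact ih y hy hRy
    · obtain ⟨y', hy', hR'⟩ := hleast y hRy
      exact ih y' hy' hR'
  obtain ⟨z, hxz, -⟩ := hM.exists_gt_both x x
  exact hnone z x hxz hx

omit [Finite ι] in
theorem SigmaRel.swap {R : (E × M) × M → Prop} (hR : SigmaRel m (extendVars (extendVars V)) R) :
    SigmaRel m (extendVars (extendVars V)) fun p => R ((p.1.1, p.2), p.1.2) := by
  refine hR.subst (h := fun p : (E × M) × M => ((p.1.1, p.2), p.1.2)) ?_
  rintro (_ | _ | i)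
  exacts [(IsPoly.bound _).lift, .bound _, (IsPoly.var i).lift.lift]

theorem SigmaRel.forall_lt_not (hball : SigmaBoundedAll M m) {θ : (E × M) × M → Prop}
    (hθ : SigmaRel m (extendVars (extendVars V)) fun p => ¬θ p) :
    SigmaRel m (extendVars (extendVars V)) fun p => ∀ y, y < p.1.2 → ¬θ ((p.1.1, y), p.2) := by
  refine hball (R := fun q : ((E × M) × M) × M => ¬θ ((q.1.1.1, q.2), q.1.2))
    (IsPoly.bound V).lift (hθ.subst (h := fun q : ((E × M) × M) × M =>
      ((q.1.1.1, q.2), q.1.2)) ?_)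
  rintro (_ | _ | i)
  exacts [(IsPoly.bound _).lift, .bound _, (IsPoly.var i).lift.lift.lift]

-- Choose the value below the bound with the least witness, and the least such value.
theorem SigmaRel.exists_uniformization_below (hM : DiscreteOrder M) (hind : SigmaInduction M m)
    {F : E × M → Prop} (hF : SigmaRel (m + 1) (extendVars V) F) {f : E → M} (hf : IsPoly V f) :
    ∃ G : E × M → Prop, SigmaRel (m + 1) (extendVars V) G ∧
      (∀ e y, G (e, y) → y < f e ∧ F (e, y)) ∧
      (∀ e y y', G (e, y) → G (e, y') → y = y') ∧
      ∀ e, (∃ y, y < f e ∧ F (e, y)) → ∃ y, G (e, y) := by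
  have hball := hind.sigmaBoundedAll hM
  obtain ⟨θ, hθ, hFθ⟩ := hF.exists_matrix hM hball
  let Below (p : E × M) : Prop := ∃ y, y < f p.1 ∧ θ ((p.1, y), p.2)
  have hBelow : SigmaRel m (extendVars V) fun p => ¬Below p :=
    .bex_not (R := fun q : (E × M) × M => θ ((q.1.1, q.2), q.1.2)) hball hf.lift hθ.swap
  let G (p : E × M) : Prop := ∃ b, (p.2 < f p.1 ∧ θ (p, b)) ∧
    (∀ b', b' < b → ¬Below (p.1, b')) ∧ ∀ y, y < p.2 → ¬θ ((p.1, y), b)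
  refine ⟨G, ?_, ?_, ?_, ?_⟩
  · have hb : SigmaRel m (extendVars (extendVars V)) fun p : (E × M) × M =>
        ∀ b', b' < p.2 → ¬Below (p.1.1, b') := by
      refine hball (R := fun q : ((E × M) × M) × M => ¬Below (q.1.1.1, q.2)) (.bound _)
        (hBelow.subst (h := fun q : ((E × M) × M) × M => (q.1.1.1, q.2)) ?_)
      rintro (_ | i)
      exacts [.bound _, (IsPoly.var i).lift.lift.lift]
    exact .ex ((((Delta0Rel.lt (IsPoly.bound V).lift hf.lift.lift).sigmaRel _).and
      (.of_not hθ)).and (hb.succ.and (SigmaRel.forall_lt_not hball hθ).succ))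
  · rintro e y ⟨b, ⟨hy, hb⟩, -⟩
    exact ⟨hy, (hFθ _).2 ⟨b, hb⟩⟩
  · rintro e y y' ⟨b, ⟨hy, hθy⟩, hb, hleast⟩ ⟨b', ⟨hy', hθy'⟩, hb', hleast'⟩
    obtain h | rfl | h := hM.trichotomous b b'
    · exact absurd ⟨y, hy, hθy⟩ (hb' b h)
    · obtain h | rfl | h := hM.trichotomous y y'
      exacts [absurd hθy (hleast' y h), rfl, absurd hθy' (hleast y' h)]
    · exact absurd ⟨y', hy', hθy'⟩ (hb b' h)
  · rintro e ⟨y, hy, hFy⟩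
    obtain ⟨b, hb⟩ := (hFθ _).1 hFy
    obtain ⟨b, ⟨y, hy, hθy⟩, hbleast⟩ := exists_least_of_sigmaRel_not hM hind hBelow
      (show Below (e, b) from ⟨y, hy, hb⟩)
    obtain ⟨z, hθz, hzleast⟩ := exists_least_of_sigmaRel_not hM hind hθ.swap
      (R := fun p : (E × M) × M => θ ((p.1.1, p.2), p.1.2)) (e := (e, b)) hθy
    refine ⟨z, b, ⟨?_, hθz⟩, hbleast, hzleast⟩
    obtain h | rfl | h := hM.trichotomous z y
    exacts [hM.trans h hy, hy, absurd hθy (hzleast y h)]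

end Induction

section Implications

variable {M : Type} [lang.Structure M] {m n : ℕ}

theorem PAm.not_lt_zero (hM : PAm M) (x : M) : ¬x < 0 := fun hx =>
  (hM.zero_le x).elim (fun h => hM.lt_irrefl _ (hM.lt_trans _ _ _ hx h))
    fun h => hM.lt_irrefl _ (h ▸ hx)

theorem PAm.lt_add_one (hM : PAm M) (x : M) : x < x + 1 := by
  simpa only [hM.add_comm _ x, hM.add_zero] using hM.add_lt_add 0 1 x hM.zero_lt_one

theorem PAm.le_add_right (hM : PAm M) (x y : M) : x ≤ x + y := by
  obtain h | h := hM.zero_le y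
  · left
    simpa only [hM.add_comm _ x, hM.add_zero] using hM.add_lt_add 0 y x h
  · right
    rw [← h, hM.add_zero]

theorem PAm.lt_of_lt_of_le (hM : PAm M) {x y z : M} (hxy : x < y) (hyz : y ≤ z) : x < z :=
  hyz.elim (hM.lt_trans _ _ _ hxy) fun h => h ▸ hxy

theorem PAm.lt_add_one_iff (hM : PAm M) (x y : M) : x < y + 1 ↔ x < y ∨ x = y := by
  constructor
  · intro hxy
    obtain h | h | h := hM.lt_total x y
    · exact .inl h
    · exact .inr h
    · obtain ⟨z, rfl⟩ := hM.sub_exists _ _ h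
      have hz : 0 < z := (hM.zero_le z).resolve_right fun hz =>
        hM.lt_irrefl y (by simpa only [← hz, hM.add_zero] using h)
      obtain hz | rfl := hM.discrete z hz
      · have h1z := hM.add_lt_add 1 z y hz
        rw [hM.add_comm 1, hM.add_comm z] at h1z
        exact (hM.lt_irrefl _ (hM.lt_trans _ _ _ hxy h1z)).elim
      · exact (hM.lt_irrefl _ hxy).elim
  · rintro (h | rfl)
    exacts [hM.lt_trans _ _ _ h (hM.lt_add_one y), hM.lt_add_one x]

theorem PAm.discreteOrder (hM : PAm M) : DiscreteOrder M where
  not_lt_zero := hM.not_lt_zero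
  lt_add_one_iff := hM.lt_add_one_iff
  trans := hM.lt_trans _ _ _
  trichotomous := hM.lt_total
  exists_gt_both x y := ⟨x + y + 1,
    hM.lt_of_lt_of_le (hM.lt_add_one x) (by
      simpa only [hM.add_assoc, hM.add_comm y 1] using hM.le_add_right (x + 1) y),
    hM.lt_of_lt_of_le (hM.lt_add_one y) (by
      simpa only [hM.add_assoc, hM.add_comm x] using hM.le_add_right (y + 1) x)⟩

theorem ISig.sigmaInduction (hM : ISig m M) : SigmaInduction M m := by
  intro ι E _ V R hR e
  refine hM {x | R (e, x)} (hR.isSigmaDef (h := fun v : Fin 1 → M => (e, v 0)) ?_)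
  rintro (_ | i)
  exacts [.inl ⟨0, fun _ => rfl⟩, .inr ⟨V i e, fun _ => rfl⟩]

-- A relation violating CARD(Σ_{n+1}) at `a` has a Σ_{n+1} uniformization below `a`, which is an
-- injection of the whole of `M` into `[0, a)`.
theorem GPHP.card (hM : PAm M) (hind : ISig n M) (h : GPHP M (n + 1)) : CARD M (n + 1) := by
  intro F hF a htotal
  by_contra! hinj
  obtain ⟨p, w, hF⟩ := isSigmaDef_iff.1 hF
  let V (i : Option (Option (Fin p))) (x : M) : M := i.elim x fun j => j.elim a w
  have hF' : SigmaRel (n + 1) (extendVars V) fun q : M × M => F q.1 q.2 := by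
    refine hF.subst (h := fun q : M × M => ![q.1, q.2]) ?_
    rintro (i | i)
    · fin_cases i
      exacts [(IsPoly.var (V := V) none).lift, .bound V]
    · exact (IsPoly.var (V := V) (some (some i))).lift
  obtain ⟨G, hG, hGF, hGfun, hGex⟩ := hF'.exists_uniformization_below hM.discreteOrder
    hind.sigmaInduction (.var (some none))
  obtain ⟨y, hy⟩ := h a
  refine hy ⟨fun u v => G (u, v), hG.isSigmaDef (h := fun v : Fin 2 → M => (v 0, v 1)) ?_,
    fun u _ => ?_, fun u v v' _ => hGfun u v v', fun u u' v _ _ hu hu' => ?_⟩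
  · rintro (_ | _ | i)
    exacts [.inl ⟨1, fun _ => rfl⟩, .inl ⟨0, fun _ => rfl⟩, .inr ⟨i.elim a w, fun _ => rfl⟩]
  · obtain ⟨v, hv⟩ := hGex u (htotal u)
    exact ⟨v, (hGF u v hv).1, hv⟩
  · by_contra hne
    exact hinj u u' v hne (hGF u v hu).1 (hGF u v hu).2 (hGF u' v hu').2

theorem WPHP.gphp (hM : PAm M) (h : WPHP M m) : GPHP M m := by
  intro x
  obtain hx | rfl := hM.zero_le x
  · exact ⟨x + x, h x hx⟩
  · refine ⟨1, fun ⟨F, _, hF, _⟩ => ?_⟩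
    obtain ⟨v, hv, _⟩ := hF 0 hM.zero_lt_one
    exact hM.not_lt_zero v hv

end Implications

section ArithmeticalHierarchy

/-- The lightface arithmetical hierarchy on primitively recursively coded types. The matrices
are primitive recursive instead of Δ₀, which makes no difference from Σ₁ on. -/
def ArithSigma : ℕ → ∀ {α : Type} [Primcodable α], (α → Prop) → Prop
  | 0, _, _, A => PrimrecPred A
  | m + 1, α, _, A => ∃ B : α × ℕ → Prop, ArithSigma m B ∧ ∀ a, A a ↔ ∃ w, ¬B (a, w)

variable {α β : Type} [Primcodable α] [Primcodable β] {m : ℕ}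

theorem ArithSigma.congr {A B : α → Prop} (hA : ArithSigma m A) (h : ∀ a, A a ↔ B a) :
    ArithSigma m B :=
  funext (fun a => propext (h a)) ▸ hA

theorem ArithSigma.comp {A : α → Prop} (hA : ArithSigma m A) {f : β → α} (hf : Primrec f) :
    ArithSigma m fun b => A (f b) := by
  induction m generalizing α β with
  | zero => exact PrimrecPred.comp hA hf
  | succ m ih =>
    obtain ⟨B, hB, hAB⟩ := hA
    exact ⟨fun p => B (f p.1, p.2), ih hB ((hf.comp Primrec.fst).pair Primrec.snd),
      fun b => hAB (f b)⟩

theorem ArithSigma.not {A : α → Prop} (hA : ArithSigma m A) :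
    ArithSigma (m + 1) fun a => ¬A a :=
  ⟨fun p => A p.1, hA.comp Primrec.fst, fun a => by simp⟩

theorem ArithSigma.succ {A : α → Prop} (hA : ArithSigma m A) : ArithSigma (m + 1) A := by
  induction m generalizing α with
  | zero => exact ⟨fun p => ¬A p.1, (PrimrecPred.comp hA Primrec.fst).not, fun a => by simp⟩
  | succ m ih =>
    obtain ⟨B, hB, hAB⟩ := hA
    exact ⟨B, ih hB, hAB⟩

theorem ArithSigma.of_primrecPred (m : ℕ) {A : α → Prop} (hA : PrimrecPred A) :
    ArithSigma m A := by
  induction m with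
  | zero => exact hA
  | succ m ih => exact ih.succ

theorem primrec_pair_unpair :
    Primrec fun p : α × ℕ => ((p.1, p.2.unpair.1), p.2.unpair.2) :=
  (Primrec.fst.pair (Primrec.fst.comp (Primrec.unpair.comp Primrec.snd))).pair
    (Primrec.snd.comp (Primrec.unpair.comp Primrec.snd))

theorem ArithSigma.and_and_or {A A' : α → Prop} (hA : ArithSigma m A) (hA' : ArithSigma m A') :
    ArithSigma m (fun a => A a ∧ A' a) ∧ ArithSigma m (fun a => A a ∨ A' a) := by
  induction m generalizing α with
  | zero => exact ⟨PrimrecPred.and hA hA', PrimrecPred.or hA hA'⟩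
  | succ m ih =>
    obtain ⟨B, hB, hAB⟩ := hA
    obtain ⟨B', hB', hAB'⟩ := hA'
    constructor
    · have hsnd : Primrec fun p : α × ℕ => (p.1, p.2.unpair.2) :=
        Primrec.fst.pair (Primrec.snd.comp (Primrec.unpair.comp Primrec.snd))
      refine ⟨_, (ih (hB.comp (Primrec.fst.comp primrec_pair_unpair)) (hB'.comp hsnd)).2,
        fun a => ?_⟩
      simp only [hAB, hAB', not_or]
      constructor
      · rintro ⟨⟨w, h⟩, w', h'⟩
        exact ⟨Nat.pair w w', by simp [h, h']⟩
      · rintro ⟨w, h, h'⟩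
        exact ⟨⟨_, h⟩, _, h'⟩
    · refine ⟨_, (ih hB hB').1, fun a => ?_⟩
      simp only [hAB, hAB', ← exists_or, not_and_or]

theorem ArithSigma.and {A A' : α → Prop} (hA : ArithSigma m A) (hA' : ArithSigma m A') :
    ArithSigma m fun a => A a ∧ A' a :=
  (and_and_or hA hA').1

theorem ArithSigma.exists_nat {A : α × ℕ → Prop} (hA : ArithSigma (m + 1) A) :
    ArithSigma (m + 1) fun a => ∃ k, A (a, k) := by
  obtain ⟨B, hB, hAB⟩ := hA
  refine ⟨_, hB.comp primrec_pair_unpair, fun a => ?_⟩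
  simp only [hAB]
  constructor
  · rintro ⟨k, w, h⟩
    exact ⟨Nat.pair k w, by simpa using h⟩
  · rintro ⟨w, h⟩
    exact ⟨_, _, h⟩

theorem ArithSigma.exists [Inhabited β] {A : α × β → Prop} (hA : ArithSigma (m + 1) A) :
    ArithSigma (m + 1) fun a => ∃ b, A (a, b) := by
  have hdecode : Primrec fun p : α × ℕ => (p.1, (Encodable.decode (α := β) p.2).getD default) :=
    Primrec.fst.pair (Primrec.option_getD.comp (Primrec.decode.comp Primrec.snd)
      (Primrec.const default))
  refine (hA.comp hdecode).exists_nat.congr fun a => ⟨fun ⟨k, h⟩ => ⟨_, h⟩, fun ⟨b, h⟩ => ?_⟩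
  exact ⟨Encodable.encode b, by simpa using h⟩

theorem ArithSigma.lt {f g : α → ℕ} (hf : Primrec f) (hg : Primrec g) :
    ArithSigma m fun a => f a < g a :=
  of_primrecPred m (Primrec.nat_lt.comp hf hg)

theorem ArithSigma.le {f g : α → ℕ} (hf : Primrec f) (hg : Primrec g) :
    ArithSigma m fun a => f a ≤ g a :=
  of_primrecPred m (Primrec.nat_le.comp hf hg)

theorem ArithSigma.eq {f g : α → β} (hf : Primrec f) (hg : Primrec g) :
    ArithSigma m fun a => f a = g a :=
  of_primrecPred m (Primrec.eq.comp hf hg)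

theorem exists_list_getD {P : ℕ → ℕ → Prop} {k : ℕ} (h : ∀ i < k, ∃ w, P i w) :
    ∃ l : List ℕ, ∀ i < k, P i (l.getD i 0) := by
  choose! g hg using h
  refine ⟨(List.range k).map g, fun i hi => ?_⟩
  have : ((List.range k).map g).getD i 0 = g i := by simp [List.getD_eq_getElem?_getD, hi]
  exact this ▸ hg i hi

theorem ArithSigma.ball_and_bex {A : α × ℕ → Prop} (hA : ArithSigma m A) {f : α → ℕ}
    (hf : Primrec f) :
    ArithSigma m (fun a => ∀ i < f a, A (a, i)) ∧
      ArithSigma m (fun a => ∃ i < f a, A (a, i)) := by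
  induction m generalizing α with
  | zero =>
    have hR : PrimrecRel fun (i : ℕ) (a : α) => A (a, i) :=
      PrimrecPred.comp hA (Primrec.snd.pair Primrec.fst)
    have hrange : Primrec fun a => List.range (f a) := Primrec.list_range.comp hf
    exact ⟨(hR.forall_mem_list.comp hrange Primrec.id).of_eq (by simp),
      (hR.exists_mem_list.comp hrange Primrec.id).of_eq (by simp)⟩
  | succ m ih =>
    refine ⟨?_, ((lt Primrec.snd (hf.comp Primrec.fst)).and hA).exists_nat⟩
    obtain ⟨B, hB, hAB⟩ := hA
    have hwitness : Primrec fun p : (α × List ℕ) × ℕ => ((p.1.1, p.2), p.1.2.getD p.2 0) :=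
      ((Primrec.fst.comp Primrec.fst).pair Primrec.snd).pair
        ((Primrec.list_getD 0).comp (Primrec.snd.comp Primrec.fst) Primrec.snd)
    refine (ih (hB.comp hwitness) (hf.comp Primrec.fst)).2.not.exists.congr fun a => ?_
    push Not
    exact ⟨fun ⟨l, hl⟩ i hi => (hAB (a, i)).2 ⟨_, hl i hi⟩,
      fun h => exists_list_getD fun i hi => (hAB (a, i)).1 (h i hi)⟩

theorem ArithSigma.ball {A : α × ℕ → Prop} (hA : ArithSigma m A) {f : α → ℕ}
    (hf : Primrec f) : ArithSigma m fun a => ∀ i < f a, A (a, i) :=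
  (hA.ball_and_bex hf).1

theorem ArithSigma.forall_mem [Inhabited β] {A : α × β → Prop} (hA : ArithSigma m A)
    {f : α → List β} (hf : Primrec f) : ArithSigma m fun a => ∀ b ∈ f a, A (a, b) := by
  have hget : Primrec fun p : α × ℕ => (p.1, (f p.1).getD p.2 default) :=
    Primrec.fst.pair ((Primrec.list_getD _).comp (hf.comp Primrec.fst) Primrec.snd)
  refine ((hA.comp hget).ball (Primrec.list_length.comp hf)).congr fun a => ?_
  simp only [List.forall_mem_iff_getElem]
  refine forall₂_congr fun i hi => ?_
  rw [List.getD_eq_getElem _ _ hi]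

theorem ArithSigma.exists_uniformization_nat {A : α × ℕ → Prop} (hA : ArithSigma (m + 1) A) :
    ∃ A' : α × ℕ → Prop, ArithSigma (m + 1) A' ∧ (∀ p, A' p → A p) ∧
      (∀ a y y', A' (a, y) → A' (a, y') → y = y') ∧ ∀ a y, A (a, y) → ∃ y', A' (a, y') := by
  obtain ⟨B, hB, hAB⟩ := hA
  -- Take the value `y` belonging to the least code `⟨y, w⟩` of a value with a witness.
  refine ⟨fun p => ∃ w, ¬B (p, w) ∧
      ∀ c < Nat.pair p.2 w, B ((p.1, c.unpair.1), c.unpair.2), ?_, ?_, ?_, ?_⟩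
  · refine ArithSigma.exists_nat (A := fun q : (α × ℕ) × ℕ => ¬B q ∧
      ∀ c < Nat.pair q.1.2 q.2, B ((q.1.1, c.unpair.1), c.unpair.2)) (hB.not.and ?_)
    have hunpair : Primrec fun r : ((α × ℕ) × ℕ) × ℕ =>
        ((r.1.1.1, r.2.unpair.1), r.2.unpair.2) :=
      primrec_pair_unpair.comp
        ((Primrec.fst.comp (Primrec.fst.comp Primrec.fst)).pair Primrec.snd)
    exact ((hB.comp hunpair).ball (f := fun q : (α × ℕ) × ℕ => Nat.pair q.1.2 q.2)
      (Primrec₂.natPair.comp (Primrec.snd.comp Primrec.fst) Primrec.snd)).succ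
  · rintro p ⟨w, h, -⟩
    exact (hAB p).2 ⟨w, h⟩
  · rintro a y y' ⟨w, hw, hleast⟩ ⟨w', hw', hleast'⟩
    obtain h | h | h := lt_trichotomy (Nat.pair y w) (Nat.pair y' w')
    · exact (hw (by simpa using hleast' _ h)).elim
    · exact (Nat.pair_eq_pair.1 h).1
    · exact (hw' (by simpa using hleast _ h)).elim
  · intro a y h
    obtain ⟨w, hw⟩ := (hAB _).1 h
    have hex : ∃ c : ℕ, ¬B ((a, c.unpair.1), c.unpair.2) := ⟨Nat.pair y w, by simpa using hw⟩
    classical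
    refine ⟨(Nat.find hex).unpair.1, (Nat.find hex).unpair.2, Nat.find_spec hex,
      fun c hc => not_not.1 (Nat.find_min hex ?_)⟩
    simpa using hc

theorem ArithSigma.exists_uniformization [Inhabited β] {A : α × β → Prop}
    (hA : ArithSigma (m + 1) A) :
    ∃ A' : α × β → Prop, ArithSigma (m + 1) A' ∧ (∀ p, A' p → A p) ∧
      (∀ a b b', A' (a, b) → A' (a, b') → b = b') ∧ ∀ a b, A (a, b) → ∃ b', A' (a, b') := by
  have hcode : ArithSigma (m + 1) fun p : α × ℕ =>
      ∃ b, Encodable.encode b = p.2 ∧ A (p.1, b) :=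
    ArithSigma.exists (A := fun q : (α × ℕ) × β => Encodable.encode q.2 = q.1.2 ∧ A (q.1.1, q.2))
      ((eq (Primrec.encode.comp Primrec.snd) (Primrec.snd.comp Primrec.fst)).and
        (hA.comp ((Primrec.fst.comp Primrec.fst).pair Primrec.snd)))
  obtain ⟨A', hA', hsub, huniq, hdom⟩ := hcode.exists_uniformization_nat
  refine ⟨fun p => A' (p.1, Encodable.encode p.2),
    hA'.comp (Primrec.fst.pair (Primrec.encode.comp Primrec.snd)), fun p h => ?_,
    fun a b b' h h' => Encodable.encode_injective (huniq _ _ _ h h'), fun a b h => ?_⟩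
  · obtain ⟨b, hb, h⟩ := hsub _ h
    rwa [Encodable.encode_injective hb] at h
  · obtain ⟨k, hk⟩ := hdom a _ ⟨b, rfl, h⟩
    obtain ⟨b', rfl, -⟩ := hsub _ hk
    exact ⟨b', hk⟩

open Nat.Partrec (Code)

/-- A universal Σ_{m+1} set: its sections at first coordinate `e` are the Σ_{m+1} sets. -/
def UniversalSigma : ℕ → ℕ × ℕ → Prop
  | 0, p => ∃ w, (Code.evaln w (Denumerable.ofNat Code p.1) p.2).isSome
  | m + 1, p => ∃ w, ¬UniversalSigma m (p.1, Nat.pair p.2 w)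

theorem primrec_pair_snd :
    Primrec fun q : (ℕ × ℕ) × ℕ => (q.1.1, Nat.pair q.1.2 q.2) :=
  (Primrec.fst.comp Primrec.fst).pair
    (Primrec₂.natPair.comp (Primrec.snd.comp Primrec.fst) Primrec.snd)

theorem arithSigma_universalSigma (m : ℕ) : ArithSigma (m + 1) (UniversalSigma m) := by
  induction m with
  | zero =>
    have heval : Primrec fun q : (ℕ × ℕ) × ℕ =>
        (Code.evaln q.2 (Denumerable.ofNat Code q.1.1) q.1.2).isSome :=
      Primrec.option_isSome.comp (Code.primrec_evaln.comp ((Primrec.snd.pair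
        ((Primrec.ofNat _).comp (Primrec.fst.comp Primrec.fst))).pair
        (Primrec.snd.comp Primrec.fst)))
    exact (ArithSigma.eq heval (Primrec.const true)).exists_nat
  | succ m ih => exact (ih.comp primrec_pair_snd).not.exists_nat

theorem exists_code_of_arithSigma_one {A : ℕ → Prop} (hA : ArithSigma 1 A) :
    ∃ c : Code, ∀ x, A x ↔ (c.eval x).Dom := by
  obtain ⟨B, ⟨_, hB⟩, hAB⟩ := hA
  have hsearch : Partrec fun x : ℕ => Nat.rfind fun w => Part.some !decide (B (x, w)) :=
    Partrec.rfind (Primrec.not.comp hB).to_comp.partrec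
  obtain ⟨c, hc⟩ := Code.exists_code.1 (Partrec.nat_iff.1 hsearch)
  refine ⟨c, fun x => ?_⟩
  rw [hc, hAB]
  exact Iff.trans (by simp) Nat.rfind_dom.symm

theorem exists_universalSigma_index (m : ℕ) :
    ∀ {A : ℕ → Prop}, ArithSigma (m + 1) A → ∃ e, ∀ x, A x ↔ UniversalSigma m (e, x) := by
  induction m with
  | zero =>
    intro A hA
    obtain ⟨c, hc⟩ := exists_code_of_arithSigma_one hA
    refine ⟨Encodable.encode c, fun x => ?_⟩
    simp only [hc, UniversalSigma, Denumerable.ofNat_encode, Part.dom_iff_mem,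
      Code.evaln_complete, Option.isSome_iff_exists]
    exact exists_comm
  | succ m ih =>
    rintro A ⟨B, hB, hAB⟩
    obtain ⟨e, he⟩ := ih (A := fun z => B z.unpair) (hB.comp Primrec.unpair)
    refine ⟨e, fun x => ?_⟩
    simp only [hAB, UniversalSigma, ← he, Nat.unpair_pair]

/-- `H` enumerates the Σ_m partial functions `ℕ ⇀ ℕ`: `H e x v` says that the `e`-th one takes
the value `v` at `x`. -/
structure IsUniversalFun (m : ℕ) (H : ℕ → ℕ → ℕ → Prop) : Prop where
  arithSigma : ArithSigma m fun p : (ℕ × ℕ) × ℕ => H p.1.1 p.1.2 p.2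
  unique {e x v v' : ℕ} : H e x v → H e x v' → v = v'
  exists_index {A : ℕ × ℕ → Prop} : ArithSigma m A →
    (∀ x v v', A (x, v) → A (x, v') → v = v') → ∃ e, ∀ x v, H e x v ↔ A (x, v)

theorem exists_isUniversalFun (n : ℕ) : ∃ H, IsUniversalFun (n + 1) H := by
  obtain ⟨A', hA', hsub, huniq, hdom⟩ :=
    ((arithSigma_universalSigma n).comp primrec_pair_snd).exists_uniformization_nat
  refine ⟨fun e x v => A' ((e, x), v), hA', fun h h' => huniq _ _ _ h h', fun {A} hA hAuniq => ?_⟩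
  obtain ⟨e, he⟩ := exists_universalSigma_index n (hA.comp Primrec.unpair)
  have hindex (x v : ℕ) : A (x, v) ↔ UniversalSigma n (e, Nat.pair x v) := by
    rw [← he, Nat.unpair_pair]
  refine ⟨e, fun x v => ⟨fun h => (hindex _ _).2 (hsub _ h), fun h => ?_⟩⟩
  obtain ⟨v', hv'⟩ := hdom (e, x) v ((hindex _ _).1 h)
  rwa [hAuniq x v v' h ((hindex _ _).2 (hsub _ hv'))]

end ArithmeticalHierarchy

section StandardModel

variable {ι E : Type} {V : ι → E → ℕ} {m : ℕ}

theorem IsPoly.primrec [Primcodable E] (hV : ∀ i, Primrec (V i)) {f : E → ℕ}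
    (hf : IsPoly V f) : Primrec f := by
  induction hf with
  | var i => exact hV i
  | zero => exact Primrec.const 0
  | one => exact Primrec.const 1
  | add _ _ ihf ihg => exact Primrec.nat_add.comp ihf ihg
  | mul _ _ ihf ihg => exact Primrec.nat_mul.comp ihf ihg

theorem primrec_extendVars [Primcodable E] (hV : ∀ i, Primrec (V i)) (i : Option ι) :
    Primrec (extendVars V i) := by
  cases i with
  | none => exact Primrec.snd
  | some i => exact (hV i).comp Primrec.fst

theorem Delta0Rel.primrecPred {R : E → Prop} (hR : Delta0Rel V R) :
    ∀ [Primcodable E], (∀ i, Primrec (V i)) → PrimrecPred R := by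
  induction hR with
  | falsum => exact fun _ => (Primrec.eq.comp (Primrec.const 0) (Primrec.const 1)).of_eq (by simp)
  | eq hf hg => exact fun hV => Primrec.eq.comp (hf.primrec hV) (hg.primrec hV)
  | lt hf hg => exact fun hV => Primrec.nat_lt.comp (hf.primrec hV) (hg.primrec hV)
  | imp _ _ ihR ihS => exact fun hV => ((ihR hV).not.or (ihS hV)).of_eq fun e => imp_iff_not_or.symm
  | ball hf _ ih =>
    exact fun hV => ArithSigma.ball (m := 0) (ih (primrec_extendVars hV)) (hf.primrec hV)

theorem SigmaRel.arithSigma {R : E → Prop} (hR : SigmaRel m V R) :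
    ∀ [Primcodable E], (∀ i, Primrec (V i)) → ArithSigma m R := by
  induction hR with
  | delta0 hR => exact hR.primrecPred
  | compl _ ih => exact fun hV => (ih hV).not
  | ex _ ih => exact fun hV => (ih (primrec_extendVars hV)).exists_nat

theorem discreteOrder_nat : DiscreteOrder ℕ where
  not_lt_zero := Nat.not_lt_zero
  lt_add_one_iff _ _ := Nat.lt_succ_iff_lt_or_eq
  trans := Nat.lt_trans
  trichotomous := Nat.lt_trichotomy
  exists_gt_both x y := ⟨x + y + 1, by omega, by omega⟩

theorem sigmaBoundedAll_nat (m : ℕ) : SigmaBoundedAll ℕ m :=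
  SigmaInduction.sigmaBoundedAll discreteOrder_nat fun _ _ _ _ _ _ _ h0 hsucc x =>
    Nat.rec h0 (fun x => hsucc x) x

theorem SigmaRel.exists_fin {k : ℕ} {R : E × (Fin k → ℕ) → Prop}
    (hR : SigmaRel (m + 1) (Sum.elim (fun i p => V i p.1) fun j p => p.2 j) R) :
    SigmaRel (m + 1) V fun e => ∃ z, R (e, z) := by
  induction k generalizing ι E with
  | zero =>
    refine (hR.subst (h := fun e => (e, default)) (V' := V) ?_).congr fun e => ?_
    · exact Sum.rec (fun i => .var i) fun j => j.elim0
    · exact ⟨fun h => ⟨_, h⟩, fun ⟨z, hz⟩ => Subsingleton.elim z default ▸ hz⟩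
  | succ k ih =>
    have hcons : SigmaRel (m + 1)
        (Sum.elim (fun i p => extendVars V i p.1) fun j (p : (E × ℕ) × (Fin k → ℕ)) => p.2 j)
        fun p => R (p.1.1, Fin.cons p.1.2 p.2) := by
      refine hR.subst (h := fun p : (E × ℕ) × (Fin k → ℕ) => (p.1.1, Fin.cons p.1.2 p.2)) ?_
      rintro (i | j)
      · exact .var (V := Sum.elim _ _) (Sum.inl (some i))
      · refine Fin.cases ?_ (fun j => ?_) j
        · exact .var (V := Sum.elim _ _) (Sum.inl none)
        · exact .var (V := Sum.elim _ _) (Sum.inr j)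
    exact (SigmaRel.ex (ih hcons)).congr fun e =>
      (Fin.exists_fin_succ_pi (P := fun z => R (e, z))).symm

theorem SigmaRel.forall_fin {k : ℕ} {R : Fin k → E → Prop} (hR : ∀ i, SigmaRel m V (R i)) :
    SigmaRel m V fun e => ∀ i, R i e := by
  induction k with
  | zero => exact ((Delta0Rel.falsum.not).sigmaRel m).congr fun e => by simp
  | succ k ih => exact ((hR 0).and (ih fun i => hR i.succ)).congr fun e =>
      (Fin.forall_fin_succ (P := fun i => R i e)).symm

theorem sigmaRel_beta {c d i r : E → ℕ} (hc : IsPoly V c) (hd : IsPoly V d) (hi : IsPoly V i)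
    (hr : IsPoly V r) : SigmaRel 1 V fun e => c e % ((i e + 1) * d e + 1) = r e := by
  have hmod : IsPoly V fun e => (i e + 1) * d e + 1 := ((hi.add .one).mul hd).add .one
  have hmatrix : SigmaRel 1 (extendVars V) fun p : E × ℕ =>
      r p.1 < (i p.1 + 1) * d p.1 + 1 ∧ c p.1 = p.2 * ((i p.1 + 1) * d p.1 + 1) + r p.1 :=
    ((Delta0Rel.lt hr.lift hmod.lift).and
      (.eq hc.lift (((IsPoly.bound V).mul hmod.lift).add hr.lift))).sigmaRel 1
  refine hmatrix.ex.congr fun e => ⟨fun ⟨q, hlt, heq⟩ => ?_, fun h => ?_⟩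
  · rw [heq, Nat.mul_add_mod_self_right, Nat.mod_eq_of_lt hlt]
  · exact ⟨c e / _, h ▸ Nat.mod_lt _ (Nat.succ_pos _), h ▸ (Nat.div_add_mod' _ _).symm⟩

theorem exists_beta (F : ℕ → ℕ) (n : ℕ) : ∃ c d, ∀ i ≤ n, c % ((i + 1) * d + 1) = F i := by
  let l := (List.range (n + 1)).map F
  refine ⟨(Nat.unbeta l).unpair.1, (Nat.unbeta l).unpair.2, fun i hi => ?_⟩
  simpa [Nat.beta, l] using Nat.beta_unbeta_coe l ⟨i, by simp [l]; omega⟩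

theorem natRec_eq_iff_exists_beta (a : ℕ) (G : ℕ → ℕ → ℕ) (k t : ℕ) :
    (Nat.rec a G k : ℕ) = t ↔
      ∃ c d, (∃ r, c % ((0 + 1) * d + 1) = r ∧ a = r) ∧ c % ((k + 1) * d + 1) = t ∧
        ∀ i < k, ∃ r, c % ((i + 1) * d + 1) = r ∧
          ∃ s, c % ((i + 1 + 1) * d + 1) = s ∧ G i r = s := by
  constructor
  · intro h
    obtain ⟨c, d, hcd⟩ := exists_beta (fun i => (Nat.rec a G i : ℕ)) k
    exact ⟨c, d, ⟨_, hcd 0 k.zero_le, rfl⟩, (hcd k le_rfl).trans h,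
      fun i hi => ⟨_, hcd i hi.le, _, hcd (i + 1) hi, rfl⟩⟩
  · rintro ⟨c, d, ⟨r, hr, ha⟩, ht, hstep⟩
    have hcd : ∀ i ≤ k, (Nat.rec a G i : ℕ) = c % ((i + 1) * d + 1) := by
      intro i
      induction i with
      | zero => exact fun _ => ha.trans hr.symm
      | succ i ih =>
        intro hi
        obtain ⟨r, hr, s, hs, hG⟩ := hstep i hi
        exact (congrArg (G i) ((ih (Nat.le_of_succ_le hi)).trans hr)).trans (hG.trans hs.symm)
    exact (hcd k le_rfl).trans ht

/-- The graph of `f` is Σ₁ in the language of arithmetic. The arguments and the value range over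
arbitrary polynomials in order that this notion be preserved by composition and primitive
recursion. -/
def HasSigmaGraph {N : ℕ} (f : List.Vector ℕ N → ℕ) : Prop :=
  ∀ ⦃ι E : Type⦄ [Finite ι] ⦃V : ι → E → ℕ⦄ ⦃s : Fin N → E → ℕ⦄ ⦃t : E → ℕ⦄,
    (∀ i, IsPoly V (s i)) → IsPoly V t →
      SigmaRel 1 V fun e => f (List.Vector.ofFn fun i => s i e) = t e

theorem HasSigmaGraph.comp {k N : ℕ} {f : List.Vector ℕ k → ℕ}
    {g : Fin k → List.Vector ℕ N → ℕ} (hf : HasSigmaGraph f) (hg : ∀ i, HasSigmaGraph (g i)) :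
    HasSigmaGraph fun a => f (List.Vector.ofFn fun i => g i a) := by
  intro ι E _ V s t hs ht
  let V' : ι ⊕ Fin k → E × (Fin k → ℕ) → ℕ := Sum.elim (fun i p => V i p.1) fun j p => p.2 j
  have hlift {f : E → ℕ} (hf : IsPoly V f) : IsPoly V' fun p => f p.1 :=
    hf.subst (h := Prod.fst) fun i => .var (V := V') (Sum.inl i)
  have hvar (j : Fin k) : IsPoly V' fun p => p.2 j := .var (V := V') (Sum.inr j)
  have hvalues : SigmaRel 1 V' fun p =>
      (∀ j, g j (List.Vector.ofFn fun i => s i p.1) = p.2 j) ∧ f (List.Vector.ofFn p.2) = t p.1 :=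
    .and (.forall_fin fun j => hg j (fun i => hlift (hs i)) (hvar j)) (hf hvar (hlift ht))
  refine hvalues.exists_fin.congr fun e => ⟨fun ⟨z, hz, h⟩ => ?_, fun h => ⟨_, fun j => rfl, h⟩⟩
  rwa [← (funext hz : _ = z)] at h

theorem HasSigmaGraph.prec {N : ℕ} {f : List.Vector ℕ N → ℕ} {g : List.Vector ℕ (N + 2) → ℕ}
    (hf : HasSigmaGraph f) (hg : HasSigmaGraph g) :
    HasSigmaGraph fun v : List.Vector ℕ (N + 1) =>
      (v.head.rec (f v.tail) fun y IH => g (y ::ᵥ IH ::ᵥ v.tail) : ℕ) := by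
  intro ι E _ V s t hs ht
  have hbound {ι E : Type} {V : ι → E → ℕ} : IsPoly (extendVars V) Prod.snd := .bound V
  have hgraph : SigmaRel 1 (extendVars (extendVars (extendVars (extendVars (extendVars V)))))
      fun p : ((((E × ℕ) × ℕ) × ℕ) × ℕ) × ℕ =>
        g (p.1.1.2 ::ᵥ p.1.2 ::ᵥ List.Vector.ofFn fun i => s i.succ p.1.1.1.1.1) = p.2 := by
    refine hg (s := Fin.cons (α := fun _ => ((((E × ℕ) × ℕ) × ℕ) × ℕ) × ℕ → ℕ) (fun p => p.1.1.2)
      (Fin.cons (fun p => p.1.2) fun i p => s i.succ p.1.1.1.1.1)) (Fin.cases ?_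
      (Fin.cases ?_ fun i => ?_)) hbound
    exacts [hbound.lift.lift, hbound.lift, (hs i.succ).lift.lift.lift.lift.lift]
  have hstep : SigmaRel 1 (extendVars (extendVars (extendVars V)))
      fun p : ((E × ℕ) × ℕ) × ℕ => ∃ r, p.1.1.2 % ((p.2 + 1) * p.1.2 + 1) = r ∧
        ∃ s', p.1.1.2 % ((p.2 + 1 + 1) * p.1.2 + 1) = s' ∧
          g (p.2 ::ᵥ r ::ᵥ List.Vector.ofFn fun i => s i.succ p.1.1.1) = s' :=
    .ex (R := fun q => _ ∧ ∃ s', _) (.and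
      (sigmaRel_beta hbound.lift.lift.lift hbound.lift.lift hbound.lift hbound)
      (.ex (R := fun q => _ ∧ _) (.and (sigmaRel_beta hbound.lift.lift.lift.lift
        hbound.lift.lift.lift (hbound.lift.lift.add .one) hbound) hgraph)))
  have hzero : SigmaRel 1 (extendVars (extendVars V)) fun p : (E × ℕ) × ℕ =>
      ∃ r, p.1.2 % ((0 + 1) * p.2 + 1) = r ∧
        f (List.Vector.ofFn fun i => s i.succ p.1.1) = r :=
    .ex (R := fun q => _ ∧ _) (.and (sigmaRel_beta hbound.lift.lift hbound.lift .zero hbound)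
      (hf (fun i => (hs i.succ).lift.lift.lift) hbound))
  refine SigmaRel.congr (.ex (R := fun p => ∃ d, _) (.ex (R := fun p => _ ∧ _) (hzero.and
    ((sigmaRel_beta hbound.lift hbound (hs 0).lift.lift ht.lift.lift).and
      (sigmaBoundedAll_nat 1 (hs 0).lift.lift hstep))))) fun e => ?_
  exact (natRec_eq_iff_exists_beta (f (List.Vector.ofFn fun i => s i.succ e))
    (fun y IH => g (y ::ᵥ IH ::ᵥ List.Vector.ofFn fun i => s i.succ e)) (s 0 e) (t e)).symm

theorem hasSigmaGraph_of_primrec {N : ℕ} {f : List.Vector ℕ N → ℕ} (hf : Nat.Primrec' f) :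
    HasSigmaGraph f := by
  induction hf with
  | zero => exact fun _ _ _ _ _ _ _ ht => (Delta0Rel.eq .zero ht).sigmaRel 1
  | succ => exact fun _ _ _ _ _ _ hs ht => (Delta0Rel.eq ((hs 0).add .one) ht).sigmaRel 1
  | get i =>
    exact fun _ _ _ _ _ _ hs ht => ((Delta0Rel.eq (hs i) ht).sigmaRel 1).congr fun e => by simp
  | comp _ _ _ ihf ihg => exact ihf.comp ihg
  | prec _ _ ihf ihg => exact ihf.prec ihg

theorem SigmaRel.of_primrecPred {N : ℕ} {A : (Fin N → ℕ) → Prop} (hA : PrimrecPred A) :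
    SigmaRel 1 (fun i (u : Fin N → ℕ) => u i) A := by
  obtain ⟨_, hA⟩ := hA
  have hchar : Primrec fun v : List.Vector ℕ N => if A v.get then 0 else 1 :=
    Primrec.ite (PrimrecPred.comp (p := A) ⟨_, hA⟩ Primrec.vector_get') (Primrec.const 0)
      (Primrec.const 1)
  refine (hasSigmaGraph_of_primrec (Nat.Primrec'.prim_iff.2 hchar)
    (V := fun (i : Fin N) (u : Fin N → ℕ) => u i) (fun i => .var i) .zero).congr fun u => ?_
  have hget : (List.Vector.ofFn u).get = u := funext fun i => by simp
  simp [hget]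

theorem primrec_init {N : ℕ} : Primrec fun u : Fin (N + 1) → ℕ => (Fin.init u, u (Fin.last N)) := by
  have hcoord (i : Fin (N + 1)) : Primrec fun u : Fin (N + 1) → ℕ => u i :=
    Primrec.fin_app.comp Primrec.id (Primrec.const i)
  have hinit : Primrec fun p : (Fin (N + 1) → ℕ) × Fin N => Fin.init p.1 p.2 :=
    ((Primrec.fin_curry₁ (f := fun i (u : Fin (N + 1) → ℕ) => Fin.init u i)).2
      fun i => hcoord i.castSucc).comp Primrec.snd Primrec.fst
  exact (Primrec.fin_curry.2 hinit).pair (hcoord _)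

theorem SigmaRel.ex_of_init {N : ℕ} {B : (Fin N → ℕ) × ℕ → Prop}
    (hB : SigmaRel (m + 1) (fun i (u : Fin (N + 1) → ℕ) => u i)
      fun u => B (Fin.init u, u (Fin.last N))) :
    SigmaRel (m + 1) (fun i (u : Fin N → ℕ) => u i) fun u => ∃ w, B (u, w) := by
  refine .ex (((hB.subst (h := fun p : (Fin N → ℕ) × ℕ => Fin.snoc p.1 p.2) ?_)).congr
    fun p => by rw [Fin.init_snoc, Fin.snoc_last])
  refine Fin.lastCases ?_ fun i => ?_
  · simpa only [Fin.snoc_last] using IsPoly.bound _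
  · simpa only [Fin.snoc_castSucc] using
      (IsPoly.var (V := fun i (u : Fin N → ℕ) => u i) i).lift

theorem ArithSigma.sigmaRel {N : ℕ} {A : (Fin N → ℕ) → Prop} (hA : ArithSigma (m + 1) A) :
    SigmaRel (m + 1) (fun i (u : Fin N → ℕ) => u i) A := by
  induction m generalizing N with
  | zero =>
    obtain ⟨B, hB, hAB⟩ := hA
    exact (SigmaRel.ex_of_init (B := fun p => ¬B p)
      (.of_primrecPred (PrimrecPred.comp hB primrec_init).not)).congr fun u => (hAB u).symm
  | succ m ih =>
    obtain ⟨B, hB, hAB⟩ := hA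
    exact (SigmaRel.ex_of_init (B := fun p => ¬B p)
      (ih (hB.comp primrec_init)).compl).congr fun u => (hAB u).symm

end StandardModel

section Greedy

variable {α β : Type} {m : ℕ}

/-- The lists, growing at the head, all of whose members were added in accordance with the
extension rule `N` with parameter `a`. -/
def IsPath (N : (α × List β) × β → Prop) (a : α) : List β → Prop
  | [] => True
  | b :: l => N ((a, l), b) ∧ IsPath N a l

theorem IsPath.mono {N E : (α × List β) × β → Prop} (h : ∀ q, N q → E q) {a : α} :
    ∀ {l : List β}, IsPath N a l → IsPath E a l
  | [], _ => trivial
  | _ :: _, ⟨hb, hl⟩ => ⟨h _ hb, hl.mono h⟩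

theorem isPath_iff_getD [Inhabited β] {N : (α × List β) × β → Prop} {a : α}
    {l : List β} :
    IsPath N a l ↔ ∀ i < l.length, N ((a, l.drop (i + 1)), l.getD i default) := by
  induction l with
  | nil => simp [IsPath]
  | cons b l ih =>
    rw [IsPath, ih, List.length_cons, Nat.forall_lt_succ_left]
    simp only [List.getD_cons_zero, List.getD_cons_succ, List.drop_succ_cons, List.drop_zero]

theorem ArithSigma.isPath [Primcodable α] [Primcodable β] [Inhabited β]
    {N : (α × List β) × β → Prop} (hN : ArithSigma m N) :
    ArithSigma m fun q : α × List β => IsPath N q.1 q.2 := by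
  have hlist : Primrec fun r : (α × List β) × ℕ => r.1.2 := Primrec.snd.comp Primrec.fst
  have hstep : Primrec fun r : (α × List β) × ℕ =>
      ((r.1.1, r.1.2.drop (r.2 + 1)), r.1.2.getD r.2 default) :=
    ((Primrec.fst.comp Primrec.fst).pair
      (Primrec.list_drop.comp (Primrec.succ.comp Primrec.snd) hlist)).pair
      ((Primrec.list_getD _).comp hlist Primrec.snd)
  exact ((hN.comp hstep).ball (Primrec.list_length.comp Primrec.snd)).congr
    fun _ => Iff.symm isPath_iff_getD

theorem IsPath.isSuffix {N : (α × List β) × β → Prop}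
    (hN : ∀ a b b', N (a, b) → N (a, b') → b = b') {a : α} {l l' : List β} (hl : IsPath N a l)
    (hl' : IsPath N a l') (hlen : l.length ≤ l'.length) : l <:+ l' := by
  induction l' generalizing l with
  | nil => simp [List.length_eq_zero_iff.1 (Nat.le_zero.1 hlen)]
  | cons b' l' ih =>
    obtain hlt | heq := Nat.lt_or_eq_of_le hlen
    · exact (ih hl hl'.2 (Nat.lt_succ_iff.1 hlt)).trans (List.suffix_cons b' l')
    · obtain _ | ⟨b, l⟩ := l
      · simp at heq
      · obtain rfl := (ih hl.2 hl'.2 (by simpa using hlen)).eq_of_length (by simpa using heq)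
        rw [hN _ _ _ hl.1 hl'.1]

theorem exists_isPath_not_extendable {N : (α × List β) × β → Prop} {a : α} {k : ℕ}
    (hbound : ∀ l, IsPath N a l → l.length ≤ k) : ∃ l, IsPath N a l ∧ ∀ b, ¬N ((a, l), b) := by
  by_contra! h
  have hlong (j : ℕ) : ∃ l, IsPath N a l ∧ l.length = j := by
    induction j with
    | zero => exact ⟨[], trivial, rfl⟩
    | succ j ih =>
      obtain ⟨l, hl, rfl⟩ := ih
      obtain ⟨b, hb⟩ := h l hl
      exact ⟨b :: l, ⟨hb, hl⟩, rfl⟩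
  obtain ⟨l, hl, hlen⟩ := hlong (k + 1)
  have := hbound l hl
  omega

theorem ArithSigma.exists_greedy_paths [Primcodable α] [Primcodable β] [Inhabited β]
    {E : (α × List β) × β → Prop}
    (hE : ArithSigma (m + 1) E) (hbound : ∀ a, ∃ k, ∀ l, IsPath E a l → l.length ≤ k) :
    ∃ P : α × List β → Prop, ArithSigma (m + 1) P ∧ (∀ a l, P (a, l) → IsPath E a l) ∧
      (∀ a l l', P (a, l) → P (a, l') → l <:+ l' ∨ l' <:+ l) ∧
      ∀ a, ∃ l, P (a, l) ∧ ∀ b, ¬E ((a, l), b) := by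
  obtain ⟨N, hN, hsub, huniq, hdom⟩ := hE.exists_uniformization
  refine ⟨_, hN.isPath, fun a l hl => hl.mono hsub, fun a l l' hl hl' => ?_, fun a => ?_⟩
  · exact (le_total l.length l'.length).imp (hl.isSuffix huniq hl') (hl'.isSuffix huniq hl)
  · obtain ⟨k, hk⟩ := hbound a
    obtain ⟨l, hl, hmax⟩ := exists_isPath_not_extendable fun l hl => hk l (hl.mono hsub)
    refine ⟨l, hl, fun b hb => ?_⟩
    obtain ⟨b', hb'⟩ := hdom _ _ hb
    exact hmax b' hb'

end Greedy

section Counting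

variable {α : Type} [Primcodable α] {m : ℕ}

theorem primrec_pow {f g : α → ℕ} (hf : Primrec f) (hg : Primrec g) :
    Primrec fun a => f a ^ g a :=
  (Primrec₂.unpaired'.1 Nat.Primrec.pow).comp hf hg

theorem primrecPred_nodup : PrimrecPred fun l : List ℕ => l.Nodup := by
  have hne : ArithSigma 0 fun q : (List ℕ × ℕ) × ℕ => q.1.1[q.2]? ≠ q.1.1[q.1.2]? :=
    (Primrec.eq.comp
      (Primrec.list_getElem?.comp (Primrec.fst.comp Primrec.fst) Primrec.snd)
      (Primrec.list_getElem?.comp (Primrec.fst.comp Primrec.fst)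
        (Primrec.snd.comp Primrec.fst))).not
  refine ((hne.ball Primrec.snd).ball Primrec.list_length).congr fun l => ?_
  rw [List.nodup_iff_getElem?_ne_getElem?]
  exact ⟨fun h i j hij hj => h j hj i hij, fun h j hj i hij => h i j hij hj⟩

open Classical in
theorem le_card_filter_range_iff {P : ℕ → Prop} {k b : ℕ} :
    k ≤ ((Finset.range b).filter P).card ↔
      ∃ l : List ℕ, l.Nodup ∧ k ≤ l.length ∧ ∀ z ∈ l, z < b ∧ P z := by
  constructor
  · intro h
    exact ⟨_, Finset.nodup_toList _, by rwa [Finset.length_toList], by simp⟩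
  · rintro ⟨l, hl, hk, hP⟩
    rw [← List.toFinset_card_of_nodup hl] at hk
    exact hk.trans (Finset.card_le_card fun z hz => by simpa using hP z (by simpa using hz))

open Classical in
theorem ArithSigma.le_card_filter_range {A : α × ℕ → Prop} (hA : ArithSigma (m + 1) A)
    {f g : α → ℕ} (hf : Primrec f) (hg : Primrec g) :
    ArithSigma (m + 1) fun a => f a ≤ ((Finset.range (g a)).filter fun z => A (a, z)).card := by
  have hmem : ArithSigma (m + 1) fun q : (α × List ℕ) × ℕ => q.2 < g q.1.1 ∧ A (q.1.1, q.2) :=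
    (lt Primrec.snd (hg.comp (Primrec.fst.comp Primrec.fst))).and
      (hA.comp ((Primrec.fst.comp Primrec.fst).pair Primrec.snd))
  exact (((of_primrecPred _ (primrecPred_nodup.comp Primrec.snd)).and
    ((le (hf.comp Primrec.fst) (Primrec.list_length.comp Primrec.snd)).and
      (hmem.forall_mem Primrec.snd))).exists).congr fun a => Iff.symm le_card_filter_range_iff

theorem card_le_pow_of_digit_determined {b i y : ℕ} (hb : 0 < b) (hi : i ≤ y) {B : Finset ℕ}
    (hB : ∀ z ∈ B, z < b ^ (y + 1))
    (hdigit : ∀ z ∈ B, ∀ z' ∈ B, z % b ^ i = z' % b ^ i → z % b ^ (i + 1) = z' % b ^ (i + 1)) :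
    B.card ≤ b ^ y := by
  have hbox : (Finset.range (b ^ i) ×ˢ Finset.range (b ^ (y - i))).card = b ^ y := by
    rw [Finset.card_product, Finset.card_range, Finset.card_range, ← pow_add,
      Nat.add_sub_cancel' hi]
  rw [← hbox]
  refine Finset.card_le_card_of_injOn (fun z => (z % b ^ i, z / b ^ (i + 1))) (fun z hz => ?_)
    fun z hz z' hz' heq => ?_
  · simp only [Finset.coe_product, Finset.coe_range, Set.mem_prod, Set.mem_Iio]
    refine ⟨Nat.mod_lt _ (by positivity), (Nat.div_lt_iff_lt_mul (by positivity)).2 ?_⟩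
    rw [← pow_add, show y - i + (i + 1) = y + 1 by omega]
    exact hB z hz
  · obtain ⟨hmod, hdiv⟩ := Prod.mk.inj heq
    rw [← Nat.div_add_mod z (b ^ (i + 1)), ← Nat.div_add_mod z' (b ^ (i + 1)),
      show z / b ^ (i + 1) = z' / b ^ (i + 1) from hdiv, hdigit z hz z' hz' hmod]

end Counting

section Generic

/-- An index `(e, i, x)` stands for the `e`-th partial function applied to the pair of `x` and
the number formed by the first `i` digits of a number under consideration. -/
abbrev Index := ℕ × ℕ × ℕ

/-- The indices with all three components at most `y`. -/
def indexBox (y : ℕ) : Finset Index :=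
  Finset.range (y + 1) ×ˢ Finset.range (y + 1) ×ˢ Finset.range (y + 1)

/-- Each recorded value is required to keep at least one in `branching y` of the numbers
compatible with the values recorded before. -/
def branching (y : ℕ) : ℕ := 2 * ((y + 1) ^ 3 * (y + 1))

/-- The base in which numbers are expanded at level `y`. It is so large that the numbers one of
whose first `y + 1` digits is computed from the preceding ones are few among those compatible
with any recorded list of values. -/
def base (y : ℕ) : ℕ := (2 * (y + 1) ^ 3 + 1) * branching y ^ (y + 1) ^ 3

theorem card_indexBox (y : ℕ) : (indexBox y).card = (y + 1) ^ 3 := by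
  simp only [indexBox, Finset.card_product, Finset.card_range]
  ring

theorem mem_indexBox {y : ℕ} {j : Index} :
    j ∈ indexBox y ↔ j.1 ≤ y ∧ j.2.1 ≤ y ∧ j.2.2 ≤ y := by
  simp [indexBox]

theorem branching_pos (y : ℕ) : 0 < branching y := by
  unfold branching
  positivity

theorem base_pos (y : ℕ) : 0 < base y :=
  Nat.mul_pos (Nat.succ_pos _) (pow_pos (branching_pos y) _)

theorem primrec_cube : Primrec fun y : ℕ => (y + 1) ^ 3 :=
  primrec_pow Primrec.succ (Primrec.const 3)

theorem primrec_branching : Primrec branching :=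
  Primrec.nat_mul.comp (Primrec.const 2) (Primrec.nat_mul.comp primrec_cube Primrec.succ)

theorem primrec_base : Primrec base :=
  Primrec.nat_mul.comp
    (Primrec.succ.comp (Primrec.nat_mul.comp (Primrec.const 2) primrec_cube))
    (primrec_pow primrec_branching primrec_cube)

variable (H : ℕ → ℕ → ℕ → Prop)

/-- The function of `H` with index `j` takes the value `v` at the digits of `z`. -/
def Hit (y : ℕ) (j : Index) (z v : ℕ) : Prop := H j.1 (Nat.pair j.2.2 (z % base y ^ j.2.1)) v

open Classical in
/-- The numbers with `y + 1` digits that are compatible with a list of recorded values. -/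
noncomputable def hitSet (y : ℕ) (l : List (Index × ℕ)) : Finset ℕ :=
  (Finset.range (base y ^ (y + 1))).filter fun z => ∀ q ∈ l, Hit H y q.1 z q.2

open Classical in
/-- The numbers with `y + 1` digits one of which is computed from the preceding ones by a
function with index at most `y`. -/
noncomputable def selfHitSet (y : ℕ) : Finset ℕ :=
  (Finset.range (base y ^ (y + 1))).filter fun z =>
    ∃ j ∈ indexBox y, Hit H y j z (z % base y ^ (j.2.1 + 1))

/-- A list of recorded values is dense if it is compatible with a large proportion of the
numbers with `y + 1` digits. -/
def IsDense (y : ℕ) (l : List (Index × ℕ)) : Prop :=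
  base y ^ (y + 1) / branching y ^ l.length ≤ (hitSet H y l).card

/-- The list `a.1.2` may be extended by the value `a.2` at a new index. -/
def IsDenseExtension (a : (ℕ × List (Index × ℕ)) × (Index × ℕ)) : Prop :=
  a.2.1 ∈ indexBox a.1.1 ∧ a.2.2 ≤ a.1.1 ∧ (∀ q ∈ a.1.2, q.1 ≠ a.2.1) ∧
    IsDense H a.1.1 (a.2 :: a.1.2)

/-- No function with index at most `y` computes a digit of `z` from the preceding ones, and the
values up to `y` that such functions take at the digits of `z` are those given by `P`. -/
structure IsGeneric (P : (ℕ × Index) × ℕ → Prop) (y z : ℕ) : Prop where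
  lt : z < base y ^ (y + 1)
  predicted {j : Index} {v : ℕ} : j ∈ indexBox y → v ≤ y → Hit H y j z v → P ((y, j), v)
  not_hit {j : Index} : j ∈ indexBox y → ¬Hit H y j z (z % base y ^ (j.2.1 + 1))

variable {H}

section Complexity

variable {m : ℕ} (hH : ArithSigma (m + 1) fun p : (ℕ × ℕ) × ℕ => H p.1.1 p.1.2 p.2)

include hH

theorem arithSigma_hit :
    ArithSigma (m + 1) fun q : (ℕ × Index) × (ℕ × ℕ) => Hit H q.1.1 q.1.2 q.2.1 q.2.2 := by
  have hindex : Primrec fun q : (ℕ × Index) × (ℕ × ℕ) => q.1.2 := Primrec.snd.comp Primrec.fst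
  have hdigits : Primrec fun q : (ℕ × Index) × (ℕ × ℕ) => q.2.1 % base q.1.1 ^ q.1.2.2.1 :=
    Primrec.nat_mod.comp (Primrec.fst.comp Primrec.snd)
      (primrec_pow (primrec_base.comp (Primrec.fst.comp Primrec.fst))
        (Primrec.fst.comp (Primrec.snd.comp hindex)))
  exact hH.comp (((Primrec.fst.comp hindex).pair (Primrec₂.natPair.comp
    (Primrec.snd.comp (Primrec.snd.comp hindex)) hdigits)).pair (Primrec.snd.comp Primrec.snd))

theorem arithSigma_isDense :
    ArithSigma (m + 1) fun a : ℕ × List (Index × ℕ) => IsDense H a.1 a.2 := by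
  have hinput : Primrec fun r : ((ℕ × List (Index × ℕ)) × ℕ) × (Index × ℕ) =>
      ((r.1.1.1, r.2.1), (r.1.2, r.2.2)) :=
    ((Primrec.fst.comp (Primrec.fst.comp Primrec.fst)).pair (Primrec.fst.comp Primrec.snd)).pair
      ((Primrec.snd.comp Primrec.fst).pair (Primrec.snd.comp Primrec.snd))
  have hcompat : ArithSigma (m + 1) fun r : (ℕ × List (Index × ℕ)) × ℕ =>
      ∀ q ∈ r.1.2, Hit H r.1.1 q.1 r.2 q.2 :=
    ((arithSigma_hit hH).comp hinput).forall_mem (Primrec.snd.comp Primrec.fst)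
  have hsize : Primrec fun a : ℕ × List (Index × ℕ) => base a.1 ^ (a.1 + 1) :=
    primrec_pow (primrec_base.comp Primrec.fst) (Primrec.succ.comp Primrec.fst)
  have hproportion : Primrec fun a : ℕ × List (Index × ℕ) =>
      base a.1 ^ (a.1 + 1) / branching a.1 ^ a.2.length :=
    Primrec.nat_div.comp hsize (primrec_pow (primrec_branching.comp Primrec.fst)
      (Primrec.list_length.comp Primrec.snd))
  exact (hcompat.le_card_filter_range hproportion hsize).congr fun _ => by
    simp only [IsDense, hitSet]
    congr!

theorem arithSigma_isDenseExtension : ArithSigma (m + 1) (IsDenseExtension H) := by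
  have hlevel : Primrec fun a : (ℕ × List (Index × ℕ)) × (Index × ℕ) => a.1.1 :=
    Primrec.fst.comp Primrec.fst
  have hindex : Primrec fun a : (ℕ × List (Index × ℕ)) × (Index × ℕ) => a.2.1 :=
    Primrec.fst.comp Primrec.snd
  have hlist : Primrec fun a : (ℕ × List (Index × ℕ)) × (Index × ℕ) => a.1.2 :=
    Primrec.snd.comp Primrec.fst
  have hbox : ArithSigma (m + 1) fun a : (ℕ × List (Index × ℕ)) × (Index × ℕ) =>
      a.2.1 ∈ indexBox a.1.1 :=
    ((ArithSigma.le (Primrec.fst.comp hindex) hlevel).and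
      ((ArithSigma.le (Primrec.fst.comp (Primrec.snd.comp hindex)) hlevel).and
        (ArithSigma.le (Primrec.snd.comp (Primrec.snd.comp hindex)) hlevel))).congr
      fun a => mem_indexBox.symm
  have hnew : ArithSigma (m + 1) fun a : (ℕ × List (Index × ℕ)) × (Index × ℕ) =>
      ∀ q ∈ a.1.2, q.1 ≠ a.2.1 :=
    (ArithSigma.of_primrecPred _ (Primrec.eq.comp (Primrec.fst.comp Primrec.snd)
      (hindex.comp Primrec.fst)).not).forall_mem hlist
  exact hbox.and ((ArithSigma.le (Primrec.snd.comp Primrec.snd) hlevel).and (hnew.and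
    ((arithSigma_isDense hH).comp (hlevel.pair (Primrec.list_cons.comp Primrec.snd hlist)))))

end Complexity

theorem IsPath.isDense {y : ℕ} {l : List (Index × ℕ)} (hl : IsPath (IsDenseExtension H) y l) :
    IsDense H y l := by
  cases l with
  | nil => simp [IsDense, hitSet]
  | cons q l => exact hl.1.2.2.2

theorem IsPath.nodup_map_fst {y : ℕ} {l : List (Index × ℕ)}
    (hl : IsPath (IsDenseExtension H) y l) : (l.map Prod.fst).Nodup := by
  induction l with
  | nil => exact List.nodup_nil
  | cons q l ih =>
    refine List.nodup_cons.2 ⟨fun hq => ?_, ih hl.2⟩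
    obtain ⟨r, hr, heq⟩ := List.mem_map.1 hq
    exact hl.1.2.2.1 r hr heq

theorem IsPath.mem_indexBox {y : ℕ} {l : List (Index × ℕ)}
    (hl : IsPath (IsDenseExtension H) y l) : ∀ j ∈ l.map Prod.fst, j ∈ indexBox y := by
  induction l with
  | nil => simp
  | cons q l ih => exact List.forall_mem_cons.2 ⟨hl.1.1, ih hl.2⟩

theorem IsPath.length_le {y : ℕ} {l : List (Index × ℕ)}
    (hl : IsPath (IsDenseExtension H) y l) : l.length ≤ (y + 1) ^ 3 := by
  rw [← List.length_map (f := Prod.fst), ← List.toFinset_card_of_nodup hl.nodup_map_fst,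
    ← card_indexBox]
  exact Finset.card_le_card fun j hj => hl.mem_indexBox j (List.mem_toFinset.1 hj)

theorem card_selfHitSet_le (hH : ∀ {e x v v'}, H e x v → H e x v' → v = v') (y : ℕ) :
    (selfHitSet H y).card ≤ (y + 1) ^ 3 * base y ^ y := by
  classical
  have hunion : selfHitSet H y = (indexBox y).biUnion fun j =>
      (Finset.range (base y ^ (y + 1))).filter fun z =>
        Hit H y j z (z % base y ^ (j.2.1 + 1)) := by
    ext z
    simp only [selfHitSet, Finset.mem_filter, Finset.mem_biUnion]
    tauto
  rw [hunion, ← card_indexBox]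
  refine Finset.card_biUnion_le_card_mul _ _ _ fun j hj => ?_
  refine card_le_pow_of_digit_determined (base_pos y) (mem_indexBox.1 hj).2.1
    (fun z hz => Finset.mem_range.1 (Finset.mem_filter.1 hz).1) fun z hz z' hz' hmod => ?_
  have hhit := (Finset.mem_filter.1 hz).2
  rw [Hit, hmod] at hhit
  exact hH hhit (Finset.mem_filter.1 hz').2

theorem card_sparse_hit_le {y : ℕ} {l : List (Index × ℕ)} {N : Finset (Index × ℕ)}
    (hN : N ⊆ indexBox y ×ˢ Finset.range (y + 1)) (hsparse : ∀ q ∈ N, ¬IsDense H y (q :: l)) :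
    2 * (N.biUnion fun q => hitSet H y (q :: l)).card ≤
      base y ^ (y + 1) / branching y ^ l.length := by
  set d := base y ^ (y + 1) / branching y ^ l.length
  have hcard : N.card ≤ (y + 1) ^ 3 * (y + 1) := by
    simpa [Finset.card_product, card_indexBox] using Finset.card_le_card hN
  have hunion : (N.biUnion fun q => hitSet H y (q :: l)).card ≤ N.card * (d / branching y) := by
    refine Finset.card_biUnion_le_card_mul _ _ _ fun q hq => ?_
    rw [Nat.div_div_eq_div_mul, ← pow_succ]
    exact (not_le.1 (hsparse q hq)).le
  calc 2 * (N.biUnion fun q => hitSet H y (q :: l)).card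
      ≤ 2 * ((y + 1) ^ 3 * (y + 1) * (d / branching y)) := by grw [hunion, hcard]
    _ = branching y * (d / branching y) := by rw [← mul_assoc, branching]
    _ ≤ d := Nat.mul_div_le d _

theorem two_mul_lt_base_pow_div {y k : ℕ} (hk : k ≤ (y + 1) ^ 3) :
    2 * ((y + 1) ^ 3 * base y ^ y) < base y ^ (y + 1) / branching y ^ k := by
  have hpow : 0 < branching y ^ k := pow_pos (branching_pos y) k
  rw [← Nat.succ_le_iff, Nat.le_div_iff_mul_le hpow]
  calc (2 * ((y + 1) ^ 3 * base y ^ y) + 1) * branching y ^ k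
      ≤ (2 * ((y + 1) ^ 3 * base y ^ y) + base y ^ y) * branching y ^ (y + 1) ^ 3 := by
        gcongr
        · exact pow_pos (base_pos y) y
        · exact branching_pos y
    _ = base y ^ y * ((2 * (y + 1) ^ 3 + 1) * branching y ^ (y + 1) ^ 3) := by ring
    _ = base y ^ (y + 1) := (pow_succ _ _).symm

theorem IsPath.exists_isGeneric (hH : ∀ {e x v v'}, H e x v → H e x v' → v = v') {y : ℕ}
    {l : List (Index × ℕ)} (hl : IsPath (IsDenseExtension H) y l)
    (hmax : ∀ q, ¬IsDenseExtension H ((y, l), q)) {P : (ℕ × Index) × ℕ → Prop}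
    (hP : ∀ q ∈ l, P ((y, q.1), q.2)) : ∃ z, IsGeneric H P y z := by
  classical
  let N := (indexBox y ×ˢ Finset.range (y + 1)).filter fun q : Index × ℕ => ∀ r ∈ l, r.1 ≠ q.1
  have hsparse : ∀ q ∈ N, ¬IsDense H y (q :: l) := by
    intro q hq hdense
    simp only [N, Finset.mem_filter, Finset.mem_product, Finset.mem_range, Nat.lt_succ_iff] at hq
    exact hmax q ⟨hq.1.1, hq.1.2, hq.2, hdense⟩
  have hcard_sparse := card_sparse_hit_le (N := N) (Finset.filter_subset _ _) hsparse
  have hcard_self := card_selfHitSet_le (H := H) hH y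
  have hgap := two_mul_lt_base_pow_div hl.length_le
  have hcard_union := Finset.card_union_le (N.biUnion fun q => hitSet H y (q :: l))
    (selfHitSet H y)
  have hdense : _ ≤ (hitSet H y l).card := hl.isDense
  obtain ⟨z, hz, hz'⟩ := Finset.exists_mem_notMem_of_card_lt_card
    (hcard_union.trans_lt (lt_of_lt_of_le (by omega) hdense))
  obtain ⟨hzlt, hzhit⟩ := Finset.mem_filter.1 hz
  obtain ⟨hz_sparse, hz_self⟩ := not_or.1 (Finset.mem_union.not.1 hz')
  simp only [Finset.mem_biUnion, not_exists, not_and] at hz_sparse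
  refine ⟨z, Finset.mem_range.1 hzlt, fun {j v} hj hv hhit => ?_,
    fun hj hhit => hz_self (Finset.mem_filter.2 ⟨hzlt, _, hj, hhit⟩)⟩
  by_cases hjl : ∃ r ∈ l, r.1 = j
  · obtain ⟨r, hr, rfl⟩ := hjl
    exact hH hhit (hzhit r hr) ▸ hP r hr
  · push Not at hjl
    refine (hz_sparse (j, v) ?_ (Finset.mem_filter.2 ⟨hzlt, ?_⟩)).elim
    · simpa [N, hj, Nat.lt_succ_iff, hv] using hjl
    · exact List.forall_mem_cons.2 ⟨hhit, hzhit⟩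

theorem IsUniversalFun.exists_isGeneric {m : ℕ} (hH : IsUniversalFun (m + 1) H) :
    ∃ P : (ℕ × Index) × ℕ → Prop, ArithSigma (m + 1) P ∧
      (∀ a v v', P (a, v) → P (a, v') → v = v') ∧ ∃ z : ℕ → ℕ, ∀ y, IsGeneric H P y (z y) := by
  obtain ⟨C, hC, hpath, hcomp, hmax⟩ :=
    (arithSigma_isDenseExtension hH.arithSigma).exists_greedy_paths
      fun y => ⟨_, fun l hl => hl.length_le⟩
  refine ⟨fun p => ∃ l, C (p.1.1, l) ∧ (p.1.2, p.2) ∈ l, ?_, ?_, ?_⟩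
  · have hmem : PrimrecPred fun q : ((ℕ × Index) × ℕ) × List (Index × ℕ) =>
        ∃ r ∈ q.2, r = (q.1.1.2, q.1.2) :=
      (PrimrecRel.exists_mem_list (Primrec.eq (α := Index × ℕ))).comp Primrec.snd
        ((Primrec.snd.comp (Primrec.fst.comp Primrec.fst)).pair (Primrec.snd.comp Primrec.fst))
    exact (((hC.comp ((Primrec.fst.comp (Primrec.fst.comp Primrec.fst)).pair Primrec.snd)).and
      (ArithSigma.of_primrecPred _ hmem)).exists).congr fun p => by simp
  · rintro ⟨y, j⟩ v v' ⟨l, hl, hv⟩ ⟨l', hl', hv'⟩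
    obtain h | h := hcomp y l l' hl hl'
    · exact congrArg Prod.snd (List.inj_on_of_nodup_map (hpath y l' hl').nodup_map_fst
        (h.subset hv) hv' rfl)
    · exact congrArg Prod.snd (List.inj_on_of_nodup_map (hpath y l hl).nodup_map_fst
        hv (h.subset hv') rfl)
  · choose l hl hlmax using hmax
    exact Classical.skolem.1 fun y => (hpath y (l y) (hl y)).exists_isGeneric (H := H) hH.unique
      (hlmax y) fun q hq => ⟨l y, hl y, hq⟩

end Generic

local notation "𝒰" => (Filter.hyperfilter ℕ : Ultrafilter ℕ)

section Models

open Filter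

theorem eventually_ge_hyperfilter (k : ℕ) : ∀ᶠ t in 𝒰, k ≤ t :=
  (hyperfilter_le_cofinite.trans Nat.cofinite_eq_atTop.le) (eventually_ge_atTop k)

/-- A set of germs of sequences of natural numbers closed under Σ_{n+1}-definable choice. Such
sets are the universes of the models of arithmetic considered here. -/
structure DefClosed (n : ℕ) where
  /-- The germs, modulo a fixed nonprincipal ultrafilter, of the sequences in the set. -/
  carrier : Set (Germ (𝒰 : Filter ℕ) ℕ)
  nonempty : ∃ f : ℕ → ℕ, (f : Germ (𝒰 : Filter ℕ) ℕ) ∈ carrier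
  pair_mem {f g : ℕ → ℕ} : (f : Germ (𝒰 : Filter ℕ) ℕ) ∈ carrier →
    (g : Germ (𝒰 : Filter ℕ) ℕ) ∈ carrier →
      ((fun t => Nat.pair (f t) (g t) : ℕ → ℕ) : Germ (𝒰 : Filter ℕ) ℕ) ∈ carrier
  exists_mem {f : ℕ → ℕ} : (f : Germ (𝒰 : Filter ℕ) ℕ) ∈ carrier →
    ∀ {R : ℕ × ℕ → Prop}, ArithSigma (n + 1) R → (∀ᶠ t in 𝒰, ∃ w, R (f t, w)) →
      ∃ g : ℕ → ℕ, (g : Germ (𝒰 : Filter ℕ) ℕ) ∈ carrier ∧ ∀ᶠ t in 𝒰, R (f t, g t)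

variable {n m k : ℕ} {f g : ℕ → ℕ}

namespace DefClosed

instance : Membership (ℕ → ℕ) (DefClosed n) where
  mem K f := (f : Germ (𝒰 : Filter ℕ) ℕ) ∈ K.carrier

variable {K : DefClosed n}

theorem mem_congr (hf : f ∈ K) (h : ∀ᶠ t in 𝒰, f t = g t) : g ∈ K := by
  have heq : (f : Germ (𝒰 : Filter ℕ) ℕ) = g := Germ.coe_eq.2 h
  change (g : Germ (𝒰 : Filter ℕ) ℕ) ∈ K.carrier
  exact heq ▸ hf

section Encode

variable {β : Type} [Primcodable β] {b : ℕ → β} {R : β × ℕ → Prop}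

theorem exists_mem_of_encode (hb : (fun t => Encodable.encode (b t)) ∈ K)
    (hR : ArithSigma (n + 1) R) (h : ∀ᶠ t in 𝒰, ∃ w, R (b t, w)) :
    ∃ g ∈ K, ∀ᶠ t in 𝒰, R (b t, g t) := by
  have : Inhabited β := ⟨b 0⟩
  have hR' : ArithSigma (n + 1) fun p : ℕ × ℕ => ∃ a : β, Encodable.encode a = p.1 ∧ R (a, p.2) :=
    .exists (.and (.eq (Primrec.encode.comp Primrec.snd) (Primrec.fst.comp Primrec.fst))
      (hR.comp (Primrec.snd.pair (Primrec.snd.comp Primrec.fst))))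
  obtain ⟨g, hg, hgR⟩ := K.exists_mem hb hR' (h.mono fun t ⟨w, hw⟩ => ⟨w, b t, rfl, hw⟩)
  exact ⟨g, hg, hgR.mono fun t ⟨a, ha, h⟩ => Encodable.encode_injective ha ▸ h⟩

theorem mem_of_arithSigma (hb : (fun t => Encodable.encode (b t)) ∈ K)
    (hR : ArithSigma (n + 1) R) (huniq : ∀ x w w', R (x, w) → R (x, w') → w = w')
    (h : ∀ᶠ t in 𝒰, R (b t, g t)) : g ∈ K := by
  obtain ⟨g', hg', h'⟩ := exists_mem_of_encode hb hR (h.mono fun t ht => ⟨_, ht⟩)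
  exact mem_congr hg' (h.mp (h'.mono fun t ht' ht => huniq _ _ _ ht' ht))

theorem exists_ne_of_notMem (hb : (fun t => Encodable.encode (b t)) ∈ K)
    (hR : ArithSigma (n + 1) R) (hg : g ∉ K) (h : ∀ᶠ t in 𝒰, R (b t, g t)) :
    ∃ g' ∈ K, (∀ᶠ t in 𝒰, R (b t, g' t)) ∧ ¬∀ᶠ t in 𝒰, g' t = g t :=
  let ⟨g', hg', hR'⟩ := exists_mem_of_encode hb hR (h.mono fun _ ht => ⟨_, ht⟩)
  ⟨g', hg', hR', fun heq => hg (mem_congr hg' heq)⟩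

theorem map_encode_mem (hb : (fun t => Encodable.encode (b t)) ∈ K) {F : β → ℕ}
    (hF : Primrec F) : (fun t => F (b t)) ∈ K :=
  mem_of_arithSigma (R := fun p => p.2 = F p.1) hb (.eq Primrec.snd (hF.comp Primrec.fst))
    (fun _ _ _ h h' => h.trans h'.symm) (.of_forall fun _ => rfl)

end Encode

theorem map_mem (hf : f ∈ K) {F : ℕ → ℕ} (hF : Primrec F) : (fun t => F (f t)) ∈ K :=
  map_encode_mem (b := f) hf hF

theorem map₂_mem (hf : f ∈ K) (hg : g ∈ K) {F : ℕ → ℕ → ℕ} (hF : Primrec₂ F) :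
    (fun t => F (f t) (g t)) ∈ K :=
  map_encode_mem (b := fun t => (f t, g t)) (K.pair_mem hf hg) hF

theorem fst_mem (h : (fun t => Nat.pair (f t) (g t)) ∈ K) : f ∈ K := by
  simpa using map_mem h (Primrec.fst.comp Primrec.unpair)

theorem snd_mem (h : (fun t => Nat.pair (f t) (g t)) ∈ K) : g ∈ K := by
  simpa using map_mem h (Primrec.snd.comp Primrec.unpair)

theorem const_mem (K : DefClosed n) (k : ℕ) : (fun _ => k) ∈ K :=
  let ⟨_, hf⟩ := K.nonempty
  map_mem hf (Primrec.const k)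

theorem exists_context_fin (f : Fin k → ℕ → ℕ) (hf : ∀ i, f i ∈ K) :
    ∃ c ∈ K, ∃ V : Fin k → ℕ → ℕ, (∀ i, Primrec (V i)) ∧ ∀ i t, V i (c t) = f i t := by
  induction k with
  | zero => exact ⟨_, K.const_mem 0, fun _ => id, fun i => i.elim0, fun i => i.elim0⟩
  | succ k ih =>
    obtain ⟨c, hc, V, hV, hVc⟩ := ih (fun i => f i.succ) fun i => hf _
    refine ⟨fun t => Nat.pair (f 0 t) (c t), K.pair_mem (hf 0) hc,
      Fin.cons (fun z => z.unpair.1) fun i z => V i z.unpair.2, Fin.cases ?_ fun i => ?_,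
      Fin.cases ?_ fun i => ?_⟩
    · exact Primrec.fst.comp Primrec.unpair
    · exact (hV i).comp (Primrec.snd.comp Primrec.unpair)
    · simp
    · simpa using hVc i

theorem exists_context {α : Type} [Finite α] (f : α → ℕ → ℕ) (hf : ∀ a, f a ∈ K) :
    ∃ c ∈ K, ∃ V : α → ℕ → ℕ, (∀ a, Primrec (V a)) ∧ ∀ a t, V a (c t) = f a t := by
  obtain ⟨k, ⟨e⟩⟩ := Finite.exists_equiv_fin α
  obtain ⟨c, hc, V, hV, hVc⟩ := exists_context_fin (fun i => f (e.symm i)) fun i => hf _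
  exact ⟨c, hc, fun a => V (e a), fun a => hV _, fun a t => by simp [hVc]⟩

/-- The substructure of the ultrapower of `ℕ` with universe `K`. -/
def Model (K : DefClosed n) : Type := {x : Germ (𝒰 : Filter ℕ) ℕ // x ∈ K.carrier}

/-- The element of the model represented by a sequence in `K`. -/
noncomputable def elem (f : ℕ → ℕ) (hf : f ∈ K) : K.Model := ⟨f, hf⟩

theorem exists_elem_eq (x : K.Model) : ∃ f, ∃ hf : f ∈ K, elem f hf = x := by
  obtain ⟨x, hx⟩ := x
  induction x using Germ.inductionOn with
  | _ f => exact ⟨f, hx, rfl⟩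

noncomputable instance : lang.Structure K.Model where
  funMap {k} s := match k, s with
    | _, Func.zero => fun _ => elem (fun _ => 0) (K.const_mem 0)
    | _, Func.one => fun _ => elem (fun _ => 1) (K.const_mem 1)
    | _, Func.add => fun v => ⟨(v 0).1 + (v 1).1, by
        obtain ⟨f, hf, h⟩ := exists_elem_eq (v 0)
        obtain ⟨g, hg, h'⟩ := exists_elem_eq (v 1)
        rw [← h, ← h']
        exact map₂_mem hf hg Primrec.nat_add⟩
    | _, Func.mul => fun v => ⟨(v 0).1 * (v 1).1, by
        obtain ⟨f, hf, h⟩ := exists_elem_eq (v 0)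
        obtain ⟨g, hg, h'⟩ := exists_elem_eq (v 1)
        rw [← h, ← h']
        exact map₂_mem hf hg Primrec.nat_mul⟩
  RelMap {k} s := match k, s with
    | _, Rel.lt => fun v => (v 0).1 < (v 1).1

theorem Model.le_iff {x y : K.Model} : x ≤ y ↔ x.1 ≤ y.1 :=
  (or_congr Iff.rfl Subtype.ext_iff).trans (le_iff_lt_or_eq (a := x.1)).symm

theorem elem_lt_elem {hf : f ∈ K} {hg : g ∈ K} : elem f hf < elem g hg ↔ ∀ᶠ t in 𝒰, f t < g t :=
  Germ.coe_lt

theorem elem_le_elem {hf : f ∈ K} {hg : g ∈ K} : elem f hf ≤ elem g hg ↔ ∀ᶠ t in 𝒰, f t ≤ g t :=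
  Model.le_iff.trans Germ.coe_le

theorem elem_eq_elem {hf : f ∈ K} {hg : g ∈ K} : elem f hf = elem g hg ↔ ∀ᶠ t in 𝒰, f t = g t :=
  Subtype.ext_iff.trans Germ.coe_eq

theorem pam_model (K : DefClosed n) : PAm K.Model where
  add_assoc x y z := Subtype.ext (add_assoc x.1 y.1 z.1)
  add_comm x y := Subtype.ext (add_comm x.1 y.1)
  mul_assoc x y z := Subtype.ext (mul_assoc x.1 y.1 z.1)
  mul_comm x y := Subtype.ext (mul_comm x.1 y.1)
  ldistrib x y z := Subtype.ext (mul_add x.1 y.1 z.1)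
  add_zero x := Subtype.ext (add_zero x.1)
  mul_zero x := Subtype.ext (mul_zero x.1)
  mul_one x := Subtype.ext (mul_one x.1)
  lt_trans x y z := lt_trans (a := x.1) (b := y.1) (c := z.1)
  lt_irrefl x := lt_irrefl x.1
  lt_total x y := (lt_trichotomy x.1 y.1).imp_right (Or.imp_left Subtype.ext)
  add_lt_add x y z h := add_lt_add_left (α := Germ (𝒰 : Filter ℕ) ℕ) h z.1
  mul_lt_mul x y z h hz := mul_lt_mul_of_pos_right (α := Germ (𝒰 : Filter ℕ) ℕ) h hz
  sub_exists x y h := by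
    obtain ⟨f, hf, rfl⟩ := exists_elem_eq x
    obtain ⟨g, hg, rfl⟩ := exists_elem_eq y
    refine ⟨elem _ (map₂_mem hg hf Primrec.nat_sub),
      elem_eq_elem.2 ((elem_lt_elem.1 h).mono fun t ht => ?_)⟩
    exact Nat.add_sub_of_le ht.le
  zero_lt_one := elem_lt_elem.2 (.of_forall fun _ => Nat.one_pos)
  discrete x h := by
    obtain ⟨f, hf, rfl⟩ := exists_elem_eq x
    exact elem_le_elem.2 (elem_lt_elem.1 h)
  zero_le x := by
    obtain ⟨f, hf, rfl⟩ := exists_elem_eq x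
    exact elem_le_elem.2 (.of_forall fun t => Nat.zero_le _)

end DefClosed

end Models

section Los

open Filter

/-- The standard model. It is not an instance because it would give `ℕ` a second, only
definitionally equal, set of arithmetic operations. -/
abbrev natStructure : lang.Structure ℕ where
  funMap {k} s := match k, s with
    | _, Func.zero => fun _ => 0
    | _, Func.one => fun _ => 1
    | _, Func.add => fun v => v 0 + v 1
    | _, Func.mul => fun v => v 0 * v 1
  RelMap {k} s := match k, s with
    | _, Rel.lt => fun v => v 0 < v 1

variable {α : Type} {n m k : ℕ} {K : DefClosed n}

/-- Truth in the standard model. -/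
def NatRealize (φ : lang.BoundedFormula α k) (v : α → ℕ) (xs : Fin k → ℕ) : Prop :=
  @BoundedFormula.Realize lang ℕ natStructure α k φ v xs

theorem SigmaFm.sigmaRel_nat {φ : lang.BoundedFormula α k} (hφ : SigmaFm m k φ) :
    SigmaRel m (formulaVars ℕ α k) fun e => NatRealize φ e.1 e.2 :=
  @SigmaFm.sigmaRel ℕ α natStructure _ _ _ hφ

theorem PiFm.sigmaRel_nat_not {φ : lang.BoundedFormula α k} (hφ : PiFm m k φ) :
    SigmaRel m (formulaVars ℕ α k) fun e => ¬NatRealize φ e.1 e.2 :=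
  @PiFm.sigmaRel_not ℕ α natStructure _ _ _ hφ

theorem SigmaRel.exists_sigmaFm_nat {ι E : Type} {V : ι → E → ℕ} {R : E → Prop}
    (hR : SigmaRel m V R) (τ : ι → α ⊕ Fin k) :
    ∃ φ : lang.BoundedFormula α k, SigmaFm m k φ ∧
      ∀ e v xs, (∀ i, V i e = Sum.elim v xs (τ i)) → (NatRealize φ v xs ↔ R e) :=
  (@SigmaRel.exists_sigmaFm ℕ ι E α k m natStructure V R hR τ).1

namespace DefClosed

theorem realize_term_model {t : lang.Term α} {v : α → K.Model} {f : α → ℕ → ℕ}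
    (hf : ∀ a, (v a).1 = f a) :
    (t.realize v).1 =
      ((fun s => @Term.realize lang ℕ natStructure α (f · s) t : ℕ → ℕ) : Germ _ ℕ) := by
  induction t with
  | var a => exact hf a
  | func s ts ih =>
    cases s with
    | zero => rfl
    | one => rfl
    | add => exact congrArg₂ (· + ·) (ih 0) (ih 1)
    | mul => exact congrArg₂ (· * ·) (ih 0) (ih 1)

theorem mem_of_eq {x : K.Model} {f : ℕ → ℕ} (h : x.1 = f) : f ∈ K :=
  show (f : Germ (𝒰 : Filter ℕ) ℕ) ∈ K.carrier from h ▸ x.2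

/-- `φ` satisfies Łoś's theorem for the model `K.Model`. -/
def Los (K : DefClosed n) (φ : lang.BoundedFormula α k) : Prop :=
  ∀ (v : α → K.Model) (xs : Fin k → K.Model) (f : α → ℕ → ℕ) (g : Fin k → ℕ → ℕ),
    (∀ a, (v a).1 = f a) → (∀ i, (xs i).1 = g i) →
      (φ.Realize v xs ↔ ∀ᶠ t in 𝒰, NatRealize φ (f · t) (g · t))

theorem Los.falsum : K.Los (BoundedFormula.falsum : lang.BoundedFormula α k) :=
  fun _ _ _ _ _ _ => ⟨False.elim, fun h => h.exists.elim fun _ => False.elim⟩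

theorem Los.imp {φ ψ : lang.BoundedFormula α k} (hφ : K.Los φ) (hψ : K.Los ψ) :
    K.Los (φ.imp ψ) := fun v xs f g hf hg => by
  rw [BoundedFormula.realize_imp, hφ v xs f g hf hg, hψ v xs f g hf hg,
    ← Ultrafilter.eventually_imp]
  rfl

theorem elim_model_eq {v : α → K.Model} {xs : Fin k → K.Model} {f : α → ℕ → ℕ}
    {g : Fin k → ℕ → ℕ} (hf : ∀ a, (v a).1 = f a) (hg : ∀ i, (xs i).1 = g i) (i : α ⊕ Fin k) :
    (Sum.elim v xs i).1 = (Sum.elim f g i : ℕ → ℕ) :=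
  i.rec hf hg

theorem elim_apply (f : α → ℕ → ℕ) (g : Fin k → ℕ → ℕ) (t : ℕ) :
    (Sum.elim f g · t) = Sum.elim (f · t) (g · t) :=
  funext (Sum.rec (fun _ => rfl) fun _ => rfl)

theorem Los.equal (t u : lang.Term (α ⊕ Fin k)) : K.Los (BoundedFormula.equal t u) := by
  intro v xs f g hf hg
  change t.realize (Sum.elim v xs) = u.realize (Sum.elim v xs) ↔ _
  refine Subtype.ext_iff.trans ?_
  rw [realize_term_model (elim_model_eq hf hg),
    realize_term_model (elim_model_eq hf hg), Germ.coe_eq]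
  simp only [elim_apply]
  rfl

theorem Los.rel {l : ℕ} (s : lang.Relations l) (ts : Fin l → lang.Term (α ⊕ Fin k)) :
    K.Los (BoundedFormula.rel s ts) := by
  intro v xs f g hf hg
  cases s
  change ((ts 0).realize (Sum.elim v xs)).1 < ((ts 1).realize (Sum.elim v xs)).1 ↔ _
  rw [realize_term_model (elim_model_eq hf hg), realize_term_model (elim_model_eq hf hg),
    Germ.coe_lt]
  simp only [elim_apply]
  rfl

theorem Los.snoc {φ : lang.BoundedFormula α (k + 1)} (hφ : K.Los φ) {v : α → K.Model}
    {xs : Fin k → K.Model} {f : α → ℕ → ℕ} {g : Fin k → ℕ → ℕ} (hf : ∀ a, (v a).1 = f a)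
    (hg : ∀ i, (xs i).1 = g i) {h : ℕ → ℕ} (hh : h ∈ K) :
    φ.Realize v (Fin.snoc xs (elem h hh)) ↔
      ∀ᶠ t in 𝒰, NatRealize φ (f · t) (Fin.snoc (g · t) (h t)) := by
  have hsnoc (t : ℕ) : (fun i => (Fin.snoc g h : Fin (k + 1) → ℕ → ℕ) i t) =
      Fin.snoc (g · t) (h t) := by
    refine funext (Fin.lastCases ?_ fun i => ?_) <;> simp
  rw [hφ v _ f (Fin.snoc g h) hf (Fin.lastCases ?_ fun i => ?_)]
  · simp only [hsnoc]
  · simp only [Fin.snoc_last]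
    rfl
  · simpa only [Fin.snoc_castSucc] using hg i

variable [Finite α]

theorem exists_counterexample {φ : lang.BoundedFormula α (k + 1)}
    (hφ : SigmaRel (n + 1) (formulaVars ℕ α (k + 1)) fun e => ¬NatRealize φ e.1 e.2)
    {f : α → ℕ → ℕ} {g : Fin k → ℕ → ℕ} (hf : ∀ a, f a ∈ K) (hg : ∀ i, g i ∈ K)
    (h : ∀ᶠ t in 𝒰, ∃ w, ¬NatRealize φ (f · t) (Fin.snoc (g · t) w)) :
    ∃ h ∈ K, ∀ᶠ t in 𝒰, ¬NatRealize φ (f · t) (Fin.snoc (g · t) (h t)) := by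
  obtain ⟨c, hc, V, hV, hVc⟩ := exists_context (Sum.elim f g) (Sum.rec hf hg)
  have hVf (t : ℕ) : (fun a => V (.inl a) (c t)) = (f · t) := funext fun a => hVc (.inl a) t
  have hVg (t : ℕ) : (fun i => V (.inr i) (c t)) = (g · t) := funext fun i => hVc (.inr i) t
  have hR := (hφ.subst (V' := extendVars V) (h := fun p : ℕ × ℕ =>
    (fun a => V (.inl a) p.1, Fin.snoc (fun i => V (.inr i) p.1) p.2)) ?_).arithSigma
      (primrec_extendVars hV)
  · obtain ⟨h', hh', hR'⟩ := K.exists_mem hc hR (by simpa only [hVf, hVg] using h)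
    exact ⟨h', hh', by simpa only [hVf, hVg] using hR'⟩
  · rintro (a | i)
    · exact (IsPoly.var (V := V) (.inl a)).lift
    · induction i using Fin.lastCases with
      | last => simpa only [formulaVars, Sum.elim_inr, Fin.snoc_last] using .bound V
      | cast i => simpa only [formulaVars, Sum.elim_inr, Fin.snoc_castSucc] using
          (IsPoly.var (V := V) (.inr i)).lift

theorem Los.all {φ : lang.BoundedFormula α (k + 1)} (hφ : K.Los φ)
    (hR : SigmaRel (n + 1) (formulaVars ℕ α (k + 1)) fun e => ¬NatRealize φ e.1 e.2) :
    K.Los φ.all := by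
  intro v xs f g hf hg
  refine BoundedFormula.realize_all.trans ⟨fun hall => ?_, fun h x => ?_⟩
  · by_contra hnot
    obtain ⟨h, hh, hlt⟩ := exists_counterexample hR (fun a => mem_of_eq (hf a))
      (fun i => mem_of_eq (hg i))
      ((Ultrafilter.eventually_not.2 hnot).mono fun t ht => not_forall.1 ht)
    exact (hlt.and ((hφ.snoc hf hg hh).1 (hall (elem h hh)))).exists.elim fun t ht => ht.1 ht.2
  · obtain ⟨h', hh', rfl⟩ := exists_elem_eq x
    exact (hφ.snoc hf hg hh').2 (h.mono fun t ht => ht (h' t))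

theorem Los.ex {φ : lang.BoundedFormula α (k + 1)} (hφ : K.Los φ)
    (hR : SigmaRel (n + 1) (formulaVars ℕ α (k + 1)) fun e => NatRealize φ e.1 e.2) :
    K.Los φ.ex :=
  ((hφ.imp .falsum).all (hR.congr fun _ => not_not.symm)).imp .falsum

theorem los_of_isDelta0 {φ : lang.BoundedFormula α k} (hφ : IsDelta0 k φ) : K.Los φ := by
  induction hφ with
  | falsum => exact .falsum
  | equal _ t u => exact .equal t u
  | rel _ _ s ts => exact .rel s ts
  | imp _ _ _ ihφ ihψ => exact ihφ.imp ihψ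
  | bdAll _ _ hφ ih =>
    exact ((Los.rel _ _).imp ih).all
      (PiFm.sigmaRel_nat_not (.delta0 _ _ (.imp _ (.rel _ _ _ _) hφ)))

mutual

theorem los_of_sigmaFm : ∀ {m k : ℕ} {φ : lang.BoundedFormula α k}, SigmaFm m k φ →
    m ≤ n + 1 → K.Los φ
  | _, _, _, .delta0 _ _ h, _ => los_of_isDelta0 h
  | _, _, _, .ofPi _ _ h, hm => los_of_piFm h (Nat.le_of_succ_le hm)
  | _, _, _, .ex _ _ h, hm => (los_of_sigmaFm h hm).ex (h.sigmaRel_nat.mono hm)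

theorem los_of_piFm : ∀ {m k : ℕ} {φ : lang.BoundedFormula α k}, PiFm m k φ →
    m ≤ n + 1 → K.Los φ
  | _, _, _, .delta0 _ _ h, _ => los_of_isDelta0 h
  | _, _, _, .ofSigma _ _ h, hm => los_of_sigmaFm h (Nat.le_of_succ_le hm)
  | _, _, _, .all _ _ h, hm => (los_of_piFm h hm).all (h.sigmaRel_nat_not.mono hm)

end

end DefClosed

end Los

section Definability

open Filter

variable {n m k : ℕ} {K : DefClosed n}

namespace DefClosed

theorem exists_arithSigma_of_isSigmaDef {A : (Fin k → K.Model) → Prop}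
    (hA : IsSigmaDef m K.Model A) (hm : m ≤ n + 1) :
    ∃ c ∈ K, ∃ R : ℕ × (Fin k → ℕ) → Prop, ArithSigma m R ∧
      ∀ (v : Fin k → K.Model) (f : Fin k → ℕ → ℕ), (∀ i, (v i).1 = f i) →
        (A v ↔ ∀ᶠ t in 𝒰, R (c t, (f · t))) := by
  obtain ⟨p, φ, w, hφ, hA⟩ := hA
  choose w' hw' hww' using fun j => exists_elem_eq (w j)
  obtain ⟨c, hc, V, hV, hVc⟩ := exists_context w' hw'
  refine ⟨c, hc, fun q => NatRealize φ (Sum.elim q.2 fun j => V j q.1) finZeroElim, ?_,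
    fun v f hf => ?_⟩
  · let V' : Fin k ⊕ Fin p → ℕ × (Fin k → ℕ) → ℕ :=
      Sum.elim (fun i q => q.2 i) fun j q => V j q.1
    refine (hφ.sigmaRel_nat.subst (V' := V')
      (h := fun q => (Sum.elim q.2 fun j => V j q.1, finZeroElim)) ?_).arithSigma ?_
    · rintro ((i | j) | i)
      · exact .var (V := V') (.inl i)
      · exact .var (V := V') (.inr j)
      · exact i.elim0
    · rintro (i | j)
      · exact Primrec.fin_app.comp Primrec.snd (Primrec.const i)
      · exact (hV j).comp Primrec.fst
  · rw [hA, los_of_sigmaFm hφ hm (Sum.elim v w) finZeroElim (Sum.elim f w') finZeroElim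
      (Sum.rec hf fun j => (congrArg Subtype.val (hww' j)).symm) fun i => i.elim0]
    refine eventually_congr (.of_forall fun t => iff_of_eq ?_)
    simp only [elim_apply, hVc, Subsingleton.elim _ (finZeroElim : Fin 0 → ℕ)]

theorem primrec_finTwo : Primrec fun p : ℕ × ℕ => ![p.1, p.2] := by
  refine Primrec.fin_curry.2 (Primrec.fin_curry₁ (f := fun i (p : ℕ × ℕ) => ![p.1, p.2] i) |>.2
    (Fin.forall_fin_two.2 ⟨Primrec.fst, Primrec.snd⟩) |>.comp Primrec.snd Primrec.fst)

theorem exists_arithSigma_of_sigmaDef2 {F : K.Model → K.Model → Prop}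
    (hF : SigmaDef2 (n + 1) K.Model F) :
    ∃ c ∈ K, ∃ R : ℕ × ℕ × ℕ → Prop, ArithSigma (n + 1) R ∧
      ∀ f hf g hg, F (elem f hf) (elem g hg) ↔ ∀ᶠ t in 𝒰, R (c t, f t, g t) := by
  obtain ⟨c, hc, R, hR, hF⟩ := exists_arithSigma_of_isSigmaDef hF le_rfl
  refine ⟨c, hc, fun q => R (q.1, ![q.2.1, q.2.2]),
    hR.comp (Primrec.fst.pair (primrec_finTwo.comp Primrec.snd)), fun f hf g hg => ?_⟩
  have hfg (t : ℕ) : (fun i => ![f, g] i t) = ![f t, g t] :=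
    funext (Fin.forall_fin_two.2 ⟨rfl, rfl⟩)
  simpa only [hfg] using!
    hF ![elem f hf, elem g hg] ![f, g] (Fin.forall_fin_two.2 ⟨rfl, rfl⟩)

theorem exists_sigmaDef2_of_arithSigma {c : ℕ → ℕ} (hc : c ∈ K) {R : ℕ × ℕ × ℕ → Prop}
    (hR : ArithSigma (n + 1) R) :
    ∃ F : K.Model → K.Model → Prop, SigmaDef2 (n + 1) K.Model F ∧
      ∀ f hf g hg, F (elem f hf) (elem g hg) ↔ ∀ᶠ t in 𝒰, R (c t, f t, g t) := by
  have hcoord (i : Fin 3) : Primrec fun u : Fin 3 → ℕ => u i :=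
    Primrec.fin_app.comp Primrec.id (Primrec.const i)
  have hS := (hR.comp ((hcoord 0).pair ((hcoord 1).pair (hcoord 2)))).sigmaRel
  obtain ⟨φ, hφ, hφR⟩ := hS.exists_sigmaFm_nat (α := Fin 2 ⊕ Fin 1) (k := 0)
    ![.inl (.inr 0), .inl (.inl 0), .inl (.inl 1)]
  refine ⟨fun x y => φ.Realize (Sum.elim ![x, y] ![elem c hc]) finZeroElim,
    ⟨1, φ, ![elem c hc], hφ, fun v => ?_⟩, fun f hf g hg => ?_⟩
  · have hv : ![v 0, v 1] = v := funext (Fin.forall_fin_two.2 ⟨rfl, rfl⟩)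
    beta_reduce
    rw [hv]
  · refine (los_of_sigmaFm hφ le_rfl _ finZeroElim (Sum.elim ![f, g] ![c]) finZeroElim
      (Sum.rec (Fin.forall_fin_two.2 ⟨rfl, rfl⟩) (Fin.forall_fin_one.2 rfl))
      fun i => i.elim0).trans (eventually_congr (.of_forall fun t => ?_))
    exact hφR ![c t, f t, g t] _ _ (by simp [Fin.forall_fin_succ])

theorem isig_model (K : DefClosed n) : ISig n K.Model := by
  intro A hA hzero hsucc x
  obtain ⟨c, hc, R, hR, hAR⟩ := exists_arithSigma_of_isSigmaDef hA n.le_succ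
  have mem_iff (f : ℕ → ℕ) (hf : f ∈ K) :
      elem f hf ∈ A ↔ ∀ᶠ t in 𝒰, R (c t, fun _ => f t) :=
    hAR (fun _ => elem f hf) (fun _ => f) fun _ => rfl
  by_contra hx
  obtain ⟨f, hf, rfl⟩ := exists_elem_eq x
  have hfail : ∀ᶠ t in 𝒰, ∃ w, R (c t, fun _ => w) ∧ ¬R (c t, fun _ => w + 1) := by
    have hzero' := (mem_iff _ (K.const_mem 0)).1 hzero
    have hf' := Ultrafilter.eventually_not.2 fun h => hx ((mem_iff f hf).2 h)
    filter_upwards [hzero', hf'] with t h0 hft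
    by_contra! hind
    exact hft (Nat.rec h0 hind (f t))
  have hvec {h : ℕ × ℕ → ℕ} (hh : Primrec h) : Primrec fun p => (p.1, fun _ : Fin 1 => h p) :=
    Primrec.fst.pair (Primrec.fin_curry.2 (hh.comp Primrec.fst))
  obtain ⟨g, hg, hgR⟩ := K.exists_mem hc
    ((hR.comp (hvec Primrec.snd)).succ.and (hR.comp (hvec (Primrec.succ.comp Primrec.snd))).not)
    hfail
  have hgsucc : (fun t => g t + 1) ∈ K := map_mem hg Primrec.succ
  have hmem := hsucc _ ((mem_iff g hg).2 (hgR.mono fun t ht => ht.1))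
  exact ((mem_iff _ hgsucc).1 hmem |>.and hgR).exists.elim fun t ht => ht.2.2 ht.1

end DefClosed

end Definability

section DefinableClosure

open Filter

variable {n : ℕ} {f g x y : ℕ → ℕ} {K : DefClosed n}

/-- The definable closure of the germ of `x`: the germs of the images of `x` under partial
functions with Σ_{n+1} graphs. -/
def dcl (n : ℕ) (x : ℕ → ℕ) : DefClosed n where
  carrier := {γ | ∃ g : ℕ → ℕ, (g : Germ (𝒰 : Filter ℕ) ℕ) = γ ∧ ∃ A : ℕ × ℕ → Prop,
    ArithSigma (n + 1) A ∧ (∀ a v v', A (a, v) → A (a, v') → v = v') ∧ ∀ᶠ t in 𝒰, A (x t, g t)}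
  nonempty := ⟨x, x, rfl, fun p => p.2 = p.1, .eq Primrec.snd Primrec.fst,
    fun _ _ _ h h' => h.trans h'.symm, .of_forall fun _ => rfl⟩
  pair_mem {f g} := by
    rintro ⟨f', hf, A, hA, hAu, hAf⟩ ⟨g', hg, B, hB, hBu, hBg⟩
    refine ⟨fun t => Nat.pair (f' t) (g' t), Germ.coe_eq.2 ?_,
      fun p => A (p.1, p.2.unpair.1) ∧ B (p.1, p.2.unpair.2), ?_, fun a v v' h h' => ?_, ?_⟩
    · filter_upwards [Germ.coe_eq.1 hf, Germ.coe_eq.1 hg] with t hf hg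
      rw [hf, hg]
    · have hunpair : Primrec fun p : ℕ × ℕ => p.2.unpair := Primrec.unpair.comp Primrec.snd
      exact (hA.comp (Primrec.fst.pair (Primrec.fst.comp hunpair))).and
        (hB.comp (Primrec.fst.pair (Primrec.snd.comp hunpair)))
    · rw [← Nat.pair_unpair v, ← Nat.pair_unpair v', hAu _ _ _ h.1 h'.1, hBu _ _ _ h.2 h'.2]
    · simpa only [Nat.unpair_pair] using hAf.and hBg
  exists_mem {f} := by
    rintro ⟨f', hf, A, hA, hAu, hAf⟩ R hR h
    have hS : ArithSigma (n + 1) fun p : ℕ × ℕ => ∃ u, A (p.1, u) ∧ R (u, p.2) :=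
      .exists_nat ((hA.comp ((Primrec.fst.comp Primrec.fst).pair Primrec.snd)).and
        (hR.comp (Primrec.snd.pair (Primrec.snd.comp Primrec.fst))))
    obtain ⟨S, hS, hSR, hSu, hSex⟩ := hS.exists_uniformization
    have hchoice : ∀ᶠ t in 𝒰, ∃ w, S (x t, w) := by
      filter_upwards [hAf, Germ.coe_eq.1 hf, h] with t hA hf hR
      obtain ⟨w, hw⟩ := hR
      exact hSex _ w ⟨_, hA, hf ▸ hw⟩
    obtain ⟨g, hg⟩ := hchoice.choice
    refine ⟨g, ⟨g, rfl, S, hS, hSu, hg⟩, ?_⟩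
    filter_upwards [hg, hAf, Germ.coe_eq.1 hf] with t hg hA hf
    obtain ⟨u, hu, hR⟩ := hSR _ hg
    rwa [← hf, hAu _ _ _ hA hu]

namespace DefClosed

theorem self_mem_dcl (n : ℕ) (x : ℕ → ℕ) : x ∈ dcl n x :=
  ⟨x, rfl, fun p => p.2 = p.1, .eq Primrec.snd Primrec.fst,
    fun _ _ _ h h' => h.trans h'.symm, .of_forall fun _ => rfl⟩

theorem mem_of_mem_dcl (hx : x ∈ K) (hf : f ∈ dcl n x) : f ∈ K := by
  obtain ⟨g, hg, A, hA, hAu, hAg⟩ := hf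
  exact mem_congr (mem_of_arithSigma (b := x) hx hA hAu hAg) (Germ.coe_eq.1 hg)

theorem exists_index_of_mem_dcl {H : ℕ → ℕ → ℕ → Prop} (hH : IsUniversalFun (n + 1) H)
    (hf : f ∈ dcl n x) : ∃ e, ∀ᶠ t in 𝒰, H e (x t) (f t) := by
  obtain ⟨g, hg, A, hA, hAu, hAg⟩ := hf
  obtain ⟨e, he⟩ := hH.exists_index hA hAu
  refine ⟨e, ?_⟩
  filter_upwards [hAg, Germ.coe_eq.1 hg] with t hA hg
  exact (he _ _).2 (hg ▸ hA)

/-- The union of an increasing sequence of universes. -/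
def iUnion (K : ℕ → DefClosed n) (hK : ∀ k l, k ≤ l → ∀ f ∈ K k, f ∈ K l) : DefClosed n where
  carrier := ⋃ k, (K k).carrier
  nonempty := let ⟨f, hf⟩ := (K 0).nonempty; ⟨f, Set.mem_iUnion_of_mem 0 hf⟩
  pair_mem hf hg := by
    obtain ⟨k, hf⟩ := Set.mem_iUnion.1 hf
    obtain ⟨l, hg⟩ := Set.mem_iUnion.1 hg
    exact Set.mem_iUnion_of_mem (max k l)
      ((K _).pair_mem (hK _ _ (le_max_left k l) _ hf) (hK _ _ (le_max_right k l) _ hg))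
  exists_mem hf R hR h := by
    obtain ⟨k, hf⟩ := Set.mem_iUnion.1 hf
    obtain ⟨g, hg, hgR⟩ := (K k).exists_mem hf hR h
    exact ⟨g, Set.mem_iUnion_of_mem k hg, hgR⟩

theorem exSigmaInj_id_of_forall_mem_dcl (hx : x ∈ K) (hid : id ∈ K) (hy : y ∈ K)
    (h : ∀ u ∈ K, (∀ᶠ t in 𝒰, u t < y t) → u ∈ dcl n x) :
    ExSigmaInj K.Model (n + 1) (elem y hy) (elem id hid) := by
  obtain ⟨H, hH⟩ := exists_isUniversalFun n
  -- `p` is `((c, u), e)`, where `c` codes the pair of `x t` and `t`; an element is sent to an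
  -- index `e` computing it from `x`, and the index is eventually below `t`.
  have hindex : ArithSigma (n + 1) fun p : (ℕ × ℕ) × ℕ =>
      p.2 < p.1.1.unpair.2 ∧ H p.2 p.1.1.unpair.1 p.1.2 := by
    have hunpair : Primrec fun p : (ℕ × ℕ) × ℕ => p.1.1.unpair :=
      Primrec.unpair.comp (Primrec.fst.comp Primrec.fst)
    exact (ArithSigma.lt Primrec.snd (Primrec.snd.comp hunpair)).and (hH.arithSigma.comp
      ((Primrec.snd.pair (Primrec.fst.comp hunpair)).pair (Primrec.snd.comp Primrec.fst)))
  obtain ⟨E, hE, hEindex, hEu, hEex⟩ := hindex.exists_uniformization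
  have hc : (fun t => Nat.pair (x t) (id t)) ∈ K := K.pair_mem hx hid
  obtain ⟨F, hF, hFE⟩ := exists_sigmaDef2_of_arithSigma hc
    (hE.comp ((Primrec.fst.pair (Primrec.fst.comp Primrec.snd)).pair
      (Primrec.snd.comp Primrec.snd)))
  refine ⟨F, hF, fun u hu => ?_, fun u v v' _ hv hv' => ?_, fun u u' v _ _ hv hv' => ?_⟩
  · obtain ⟨u, huK, rfl⟩ := exists_elem_eq u
    obtain ⟨e, he⟩ := exists_index_of_mem_dcl hH (h u huK (elem_lt_elem.1 hu))
    obtain ⟨v, hvK, hv⟩ := exists_mem_of_encode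
      (b := fun t => (Nat.pair (x t) (id t), u t)) (K.pair_mem hc huK) hE (by
        filter_upwards [he, eventually_ge_hyperfilter (e + 1)] with t he hle
        exact hEex _ e ⟨by simpa using hle, by simpa using he⟩)
    refine ⟨elem v hvK, elem_lt_elem.2 (hv.mono fun t ht => ?_), (hFE ..).2 hv⟩
    simpa using (hEindex _ ht).1
  · obtain ⟨u, huK, rfl⟩ := exists_elem_eq u
    obtain ⟨v, hvK, rfl⟩ := exists_elem_eq v
    obtain ⟨v', hvK', rfl⟩ := exists_elem_eq v'
    exact elem_eq_elem.2 (((hFE ..).1 hv).mp (((hFE ..).1 hv').mono fun t h' h => hEu _ _ _ h h'))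
  · obtain ⟨u, huK, rfl⟩ := exists_elem_eq u
    obtain ⟨u', huK', rfl⟩ := exists_elem_eq u'
    obtain ⟨v, hvK, rfl⟩ := exists_elem_eq v
    exact elem_eq_elem.2 (((hFE ..).1 hv).mp (((hFE ..).1 hv').mono fun t h' h =>
      hH.unique (hEindex _ h).2 (hEindex _ h').2))

end DefClosed

end DefinableClosure

section Tower

open Filter DefClosed

/-- A universal partial Σ_{n+1} function `fn` together with a generic number `code y` for each
bound `y`, predicted by the partial function with graph `pred`. -/
structure GenericData (n : ℕ) where
  fn : ℕ → ℕ → ℕ → Prop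
  isUniversalFun : IsUniversalFun (n + 1) fn
  pred : (ℕ × Index) × ℕ → Prop
  arithSigma_pred : ArithSigma (n + 1) pred
  pred_unique : ∀ a v v', pred (a, v) → pred (a, v') → v = v'
  code : ℕ → ℕ
  isGeneric : ∀ y, IsGeneric fn pred y (code y)

theorem nonempty_genericData (n : ℕ) : Nonempty (GenericData n) := by
  obtain ⟨H, hH⟩ := exists_isUniversalFun n
  obtain ⟨P, hP, hPu, z, hz⟩ := hH.exists_isGeneric
  exact ⟨⟨H, hH, P, hP, hPu, z, hz⟩⟩

namespace GenericData

variable {n : ℕ} (G : GenericData n) {x y c f : ℕ → ℕ} {K : DefClosed n} {i i' : ℕ}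

/-- The number formed by the `i` lowest digits, in base `base (y t)`, of the generic number with
bound `y t`. -/
def residue (y : ℕ → ℕ) (i t : ℕ) : ℕ := G.code (y t) % base (y t) ^ i

theorem residue_mem (hii' : i ≤ i') (hy : y ∈ K) (h : G.residue y i' ∈ K) :
    G.residue y i ∈ K := by
  have hmod : Primrec₂ fun r b => r % base b ^ i :=
    Primrec.nat_mod.comp Primrec.fst
      (primrec_pow (primrec_base.comp Primrec.snd) (Primrec.const i))
  refine mem_congr (map₂_mem h hy hmod) (.of_forall fun t => ?_)
  exact Nat.mod_mod_of_dvd _ (pow_dvd_pow _ hii')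

theorem residue_lt (y : ℕ → ℕ) (i t : ℕ) : G.residue y i t < base (y t) ^ (y t + 1) :=
  (Nat.mod_le _ _).trans_lt (G.isGeneric (y t)).lt

theorem mem_dcl_of_mem_dcl_pair_residue (hy : y ∈ dcl n x) (hxy : ∀ t, x t ≤ y t)
    (hty : ∀ t, t ≤ y t) (hc : c ∈ dcl n fun t => Nat.pair (x t) (G.residue y i t))
    (hcy : ∀ᶠ t in 𝒰, c t ≤ y t) : c ∈ dcl n x := by
  obtain ⟨e, he⟩ := exists_index_of_mem_dcl G.isUniversalFun hc
  have hP : ArithSigma (n + 1) fun p : (ℕ × ℕ) × ℕ => G.pred ((p.1.2, e, i, p.1.1), p.2) :=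
    G.arithSigma_pred.comp (((Primrec.snd.comp Primrec.fst).pair ((Primrec.const e).pair
      ((Primrec.const i).pair (Primrec.fst.comp Primrec.fst)))).pair Primrec.snd)
  refine mem_of_arithSigma (b := fun t => (x t, y t)) ((dcl n x).pair_mem (self_mem_dcl n x) hy)
    hP (fun _ _ _ => G.pred_unique _ _ _) ?_
  filter_upwards [he, hcy, eventually_ge_hyperfilter (max e i)] with t he hcy ht
  obtain ⟨het, hit⟩ := max_le_iff.1 (ht.trans (hty t))
  exact (G.isGeneric (y t)).predicted (mem_indexBox.2 ⟨het, hit, hxy t⟩) hcy he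

theorem residue_succ_notMem_dcl (hxy : ∀ t, x t ≤ y t) (hty : ∀ t, t ≤ y t) :
    G.residue y (i + 1) ∉ dcl n fun t => Nat.pair (x t) (G.residue y i t) := by
  intro h
  obtain ⟨e, he⟩ := exists_index_of_mem_dcl G.isUniversalFun h
  obtain ⟨t, he, ht⟩ := (he.and (eventually_ge_hyperfilter (max e i))).exists
  obtain ⟨het, hit⟩ := max_le_iff.1 (ht.trans (hty t))
  exact (G.isGeneric (y t)).not_hit (j := (e, i, x t)) (mem_indexBox.2 ⟨het, hit, hxy t⟩) he

/-- The sequence of the values of the `e`-th universal partial function along `x`, with value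
`0` where it is undefined. -/
noncomputable def value (e : ℕ) (x : ℕ → ℕ) (t : ℕ) : ℕ := sInf {v | G.fn e (x t) v}

theorem value_eq {e v t : ℕ} (h : G.fn e (x t) v) : G.value e x t = v :=
  G.isUniversalFun.unique (Nat.sInf_mem (s := {v | G.fn e (x t) v}) ⟨v, h⟩) h

theorem value_mem (e : ℕ) (hx : x ∈ K) : G.value e x ∈ K := by
  by_cases h : ∀ᶠ t in 𝒰, ∃ v, G.fn e (x t) v
  · have hfn : ArithSigma (n + 1) fun p : ℕ × ℕ => G.fn e p.1 p.2 :=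
      G.isUniversalFun.arithSigma.comp (((Primrec.const e).pair Primrec.fst).pair Primrec.snd)
    exact mem_of_arithSigma (b := x) hx hfn (fun _ _ _ => G.isUniversalFun.unique)
      (h.mono fun t ht => Nat.sInf_mem ht)
  · refine mem_congr (K.const_mem 0) ((Ultrafilter.eventually_not.2 h).mono fun t ht => ?_)
    have hempty : {v | G.fn e (x t) v} = ∅ := Set.eq_empty_of_forall_notMem fun v hv => ht ⟨v, hv⟩
    rw [value, hempty, Nat.sInf_empty]

mutual

/-- The scale of bounds of the construction. The square makes `level (k + 1)` exceed all towers
of height `k + 1`; the summand makes the levels cofinal in the definable closures of the towers,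
since every number is of the form `Nat.pair j e`. -/
noncomputable def level (ι : ℕ → ℕ) : ℕ → ℕ → ℕ
  | 0 => fun t => t + t
  | k + 1 => fun t => (level ι k t + base (level ι k t) ^ (level ι k t + 1) + 1) ^ 2 +
      G.value k.unpair.2 (tower ι (fun _ => ι k.unpair.1) k.unpair.1) t
termination_by k => (k, 1)
decreasing_by
  · exact Prod.Lex.left _ _ k.lt_succ_self
  · exact Prod.Lex.left _ _ (Nat.lt_succ_of_le k.unpair_left_le)

/-- The tower of height `k`: a code of `t` and of the `κ j` lowest digits of the generic number
at level `j`, for all `j < k`. -/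
noncomputable def tower (ι κ : ℕ → ℕ) : ℕ → ℕ → ℕ
  | 0 => id
  | k + 1 => fun t => Nat.pair (tower ι κ k t) (G.residue (level ι k) (κ k) t)
termination_by k => (k, 0)

end

variable {ι κ κ' : ℕ → ℕ} {k l : ℕ}

theorem level_zero : G.level ι 0 = fun t => t + t := by rw [level]

theorem level_succ : G.level ι (k + 1) = fun t =>
    (G.level ι k t + base (G.level ι k t) ^ (G.level ι k t + 1) + 1) ^ 2 +
      G.value k.unpair.2 (G.tower ι (fun _ => ι k.unpair.1) k.unpair.1) t := by
  rw [level]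

theorem tower_zero : G.tower ι κ 0 = id := by rw [tower]

theorem tower_succ : G.tower ι κ (k + 1) = fun t =>
    Nat.pair (G.tower ι κ k t) (G.residue (G.level ι k) (κ k) t) := by
  rw [tower]

theorem sq_le_level_succ (t : ℕ) :
    (G.level ι k t + base (G.level ι k t) ^ (G.level ι k t + 1) + 1) ^ 2 ≤
      G.level ι (k + 1) t := by
  rw [level_succ]
  exact Nat.le_add_right _ _

theorem level_add_pow_lt_level_succ (t : ℕ) :
    G.level ι k t + base (G.level ι k t) ^ (G.level ι k t + 1) < G.level ι (k + 1) t :=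
  (Nat.le_self_pow two_ne_zero _).trans (G.sq_le_level_succ t)

theorem residue_level_lt_level_succ (t : ℕ) :
    G.residue (G.level ι k) i t < G.level ι (k + 1) t :=
  (G.residue_lt _ i t).trans ((Nat.le_add_left _ _).trans_lt (G.level_add_pow_lt_level_succ t))

theorem level_mono (ι : ℕ → ℕ) : Monotone (G.level ι) :=
  monotone_nat_of_le_succ fun _ t =>
    (Nat.le_add_right _ _).trans (G.level_add_pow_lt_level_succ t).le

theorem le_level (t : ℕ) : t ≤ G.level ι k t :=
  calc t ≤ G.level ι 0 t := by rw [level_zero]; exact Nat.le_add_right t t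
    _ ≤ G.level ι k t := G.level_mono ι k.zero_le t

theorem tower_le_level (t : ℕ) : G.tower ι κ k t ≤ G.level ι k t := by
  induction k with
  | zero => rw [tower_zero]; exact G.le_level t
  | succ k ih =>
    have hres := G.residue_lt (G.level ι k) (κ k) t
    rw [tower_succ]
    calc Nat.pair (G.tower ι κ k t) (G.residue (G.level ι k) (κ k) t)
        ≤ (max (G.tower ι κ k t) (G.residue (G.level ι k) (κ k) t) + 1) ^ 2 :=
          (Nat.pair_lt_max_add_one_sq _ _).le
      _ ≤ (G.level ι k t + base (G.level ι k t) ^ (G.level ι k t + 1) + 1) ^ 2 := by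
          gcongr
          exact max_le (by omega) (by omega)
      _ ≤ G.level ι (k + 1) t := G.sq_le_level_succ t

theorem exists_le_level (hf : f ∈ dcl n (G.tower ι (fun _ => ι k) k)) :
    ∃ l, ∀ᶠ t in 𝒰, f t ≤ G.level ι l t := by
  obtain ⟨e, he⟩ := exists_index_of_mem_dcl G.isUniversalFun hf
  refine ⟨Nat.pair k e + 1, he.mono fun t ht => ?_⟩
  rw [← G.value_eq ht, level_succ, Nat.unpair_pair]
  exact Nat.le_add_left _ _

theorem tower_mem_of_le (hkl : k ≤ l) (h : G.tower ι κ l ∈ K) : G.tower ι κ k ∈ K := by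
  induction l, hkl using Nat.le_induction with
  | base => exact h
  | succ l _ ih =>
    rw [tower_succ] at h
    exact ih (fst_mem h)

theorem tower_mem_of_level_mem_dcl (hι : Monotone ι)
    (hlevel : ∀ j < k, G.level ι j ∈ dcl n (G.tower ι (fun _ => ι j) j))
    (hκ : ∀ j < k, κ j ≤ κ' j) (hκ' : ∀ j, ι k ≤ κ' j) (h : G.tower ι κ' k ∈ K) :
    G.tower ι κ k ∈ K := by
  induction k generalizing κ with
  | zero => rwa [tower_zero] at h ⊢
  | succ k ih =>
    have hκ'k (j : ℕ) : ι k ≤ κ' j := (hι k.le_succ).trans (hκ' j)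
    rw [tower_succ] at h ⊢
    have lower {κ} (hκ : ∀ j < k, κ j ≤ κ' j) : G.tower ι κ k ∈ K :=
      ih (fun j hj => hlevel j (hj.trans k.lt_succ_self)) hκ hκ'k (fst_mem h)
    have hlevel_mem : G.level ι k ∈ K :=
      mem_of_mem_dcl (lower fun j _ => hκ'k j) (hlevel k k.lt_succ_self)
    exact K.pair_mem (lower fun j hj => hκ j (hj.trans k.lt_succ_self))
      (G.residue_mem (hκ k k.lt_succ_self) hlevel_mem (snd_mem h))

theorem level_mem_dcl (hι : Monotone ι) (k : ℕ) :
    G.level ι k ∈ dcl n (G.tower ι (fun _ => ι k) k) := by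
  induction k using Nat.strong_induction_on with
  | _ k ih =>
    cases k with
    | zero =>
      rw [level_zero, tower_zero]
      exact map_mem (self_mem_dcl n id) (Primrec.nat_add.comp Primrec.id Primrec.id)
    | succ k =>
      have htower (j : ℕ) (hj : j ≤ k) :
          G.tower ι (fun _ => ι j) j ∈ dcl n (G.tower ι (fun _ => ι (k + 1)) (k + 1)) :=
        G.tower_mem_of_level_mem_dcl hι (fun i hi => ih i (by omega))
          (fun _ _ => hι (by omega)) (fun _ => hι (by omega))
          (G.tower_mem_of_le (by omega) (self_mem_dcl n _))
      have hstep : Primrec fun a => (a + base a ^ (a + 1) + 1) ^ 2 :=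
        primrec_pow (Primrec.succ.comp (Primrec.nat_add.comp Primrec.id
          (primrec_pow primrec_base Primrec.succ))) (Primrec.const 2)
      rw [level_succ]
      exact map₂_mem
        (map_mem (mem_of_mem_dcl (htower k le_rfl) (ih k k.lt_succ_self)) hstep)
        (G.value_mem _ (htower _ k.unpair_left_le)) Primrec.nat_add

theorem tower_mem (hι : Monotone ι) (hkl : k ≤ l) (hκ : ∀ j < k, κ j ≤ κ' j)
    (hκ' : ∀ j, ι k ≤ κ' j) (h : G.tower ι κ' l ∈ K) : G.tower ι κ k ∈ K :=
  G.tower_mem_of_level_mem_dcl hι (fun j _ => G.level_mem_dcl hι j) hκ hκ'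
    (G.tower_mem_of_le hkl h)

theorem level_mem (hι : Monotone ι) (hkl : k ≤ l) (hκ : ∀ j, ι k ≤ κ j)
    (h : G.tower ι κ l ∈ K) : G.level ι k ∈ K :=
  mem_of_mem_dcl (G.tower_mem hι hkl (fun j _ => hκ j) hκ h) (G.level_mem_dcl hι k)

theorem mem_dcl_tower_of_le_level (hι : Monotone ι) (hkl : k ≤ l) (hκ : ∀ j, ι l ≤ κ j)
    (hf : f ∈ dcl n (G.tower ι κ l)) (hfk : ∀ᶠ t in 𝒰, f t ≤ G.level ι k t) :
    f ∈ dcl n (G.tower ι κ k) := by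
  induction l, hkl using Nat.le_induction with
  | base => exact hf
  | succ l hkl ih =>
    have hκl (j : ℕ) : ι l ≤ κ j := (hι l.le_succ).trans (hκ j)
    rw [tower_succ] at hf
    exact ih hκl (G.mem_dcl_of_mem_dcl_pair_residue
      (G.level_mem hι le_rfl hκl (self_mem_dcl n _)) (fun _ => G.tower_le_level _)
      (fun _ => G.le_level _) hf (hfk.mono fun t ht => ht.trans (G.level_mono ι hkl t)))

theorem residue_succ_notMem_dcl_tower (hι : Monotone ι) (hkl : k < l) (hκ : ∀ j, ι l ≤ κ j) :
    G.residue (G.level ι k) (κ k + 1) ∉ dcl n (G.tower ι κ l) := by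
  intro h
  have hk := G.mem_dcl_tower_of_le_level hι (Nat.succ_le_of_lt hkl) hκ h
    (.of_forall fun t => (G.residue_level_lt_level_succ t).le)
  rw [tower_succ] at hk
  exact G.residue_succ_notMem_dcl (fun _ => G.tower_le_level _) (fun _ => G.le_level _) hk

end GenericData

end Tower

section Separation

open Filter DefClosed

namespace GenericData

variable {n : ℕ} (G : GenericData n) {ι : ℕ → ℕ} (hι : Monotone ι) {f g : ℕ → ℕ} {k l : ℕ}

include hι in
theorem mem_dcl_tower_of_le (hkl : k ≤ l) (hf : f ∈ dcl n (G.tower ι (fun _ => ι k) k)) :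
    f ∈ dcl n (G.tower ι (fun _ => ι l) l) :=
  mem_of_mem_dcl
    (G.tower_mem hι hkl (fun _ _ => hι hkl) (fun _ => hι hkl) (self_mem_dcl n _)) hf

/-- The universe generated by all the towers, where the tower of height `k` carries the `ι k`
lowest digits of the generic numbers. -/
noncomputable def towerClosure : DefClosed n :=
  iUnion (fun k => dcl n (G.tower ι (fun _ => ι k) k)) fun _ _ hkl _ =>
    G.mem_dcl_tower_of_le hι hkl

theorem mem_towerClosure_iff :
    f ∈ G.towerClosure hι ↔ ∃ k, f ∈ dcl n (G.tower ι (fun _ => ι k) k) :=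
  Set.mem_iUnion

theorem id_mem_towerClosure : id ∈ G.towerClosure hι :=
  (G.mem_towerClosure_iff hι).2 ⟨0, by simpa only [tower_zero] using self_mem_dcl n id⟩

theorem exists_le_level_of_mem_towerClosure (hf : f ∈ G.towerClosure hι) :
    ∃ l, ∀ᶠ t in 𝒰, f t ≤ G.level ι l t :=
  let ⟨_, hk⟩ := (G.mem_towerClosure_iff hι).1 hf
  G.exists_le_level hk

theorem exists_mem_dcl_tower_of_le_level (l₀ : ℕ) (hf : f ∈ G.towerClosure hι)
    (hfk : ∀ᶠ t in 𝒰, f t ≤ G.level ι k t) :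
    ∃ l ≥ l₀, f ∈ dcl n (G.tower ι (fun _ => ι l) k) := by
  obtain ⟨j, hj⟩ := (G.mem_towerClosure_iff hι).1 hf
  exact ⟨max j (max k l₀), by omega, G.mem_dcl_tower_of_le_level hι (by omega) (fun _ => le_rfl)
    (G.mem_dcl_tower_of_le hι (le_max_left _ _) hj) hfk⟩

theorem residue_one_notMem_dcl_tower (κ : ℕ → ℕ) :
    G.residue (G.level ι k) 1 ∉ dcl n (G.tower ι κ k) := fun h =>
  G.residue_succ_notMem_dcl (i := 0) (fun _ => G.tower_le_level _) (fun _ => G.le_level _)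
    (mem_of_mem_dcl (fst_mem (self_mem_dcl n _)) h)

theorem residue_mem_towerClosure (hkl : k < l) :
    G.residue (G.level ι k) (ι l) ∈ G.towerClosure hι := by
  have h := G.tower_mem hι (Nat.succ_le_of_lt hkl) (κ := fun _ => ι l) (fun _ _ => le_rfl)
    (fun _ => hι hkl) (self_mem_dcl n _)
  rw [tower_succ] at h
  exact (G.mem_towerClosure_iff hι).2 ⟨l, snd_mem h⟩

theorem card_towerClosure_one :
    CARD (G.towerClosure (ι := fun _ => 1) monotone_const).Model (n + 1) := by
  set hι : Monotone fun _ : ℕ => 1 := monotone_const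
  intro F hF a hFa
  obtain ⟨a, ha, rfl⟩ := exists_elem_eq a
  obtain ⟨c, hc, R, hR, hFR⟩ := exists_arithSigma_of_sigmaDef2 hF
  obtain ⟨j, hcj⟩ := (G.mem_towerClosure_iff hι).1 hc
  obtain ⟨l, hal⟩ := G.exists_le_level_of_mem_towerClosure hι ha
  set k := max j l
  have hck := G.mem_dcl_tower_of_le hι (le_max_left j l) hcj
  have hg : G.residue (G.level _ k) 1 ∈ G.towerClosure hι :=
    G.residue_mem_towerClosure hι k.lt_succ_self
  obtain ⟨v, hva, hv⟩ := hFa (elem _ hg)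
  obtain ⟨v, hvK, rfl⟩ := exists_elem_eq v
  obtain ⟨-, -, hvk⟩ := G.exists_mem_dcl_tower_of_le_level hι (k := k) 0 hvK (by
    filter_upwards [hal, elem_lt_elem.1 hva] with t hal hva
    exact hva.le.trans (hal.trans (G.level_mono _ (le_max_right j l) t)))
  obtain ⟨g', hg', hRg', hne⟩ := exists_ne_of_notMem (b := fun t => (c t, v t))
    (R := fun q => R (q.1.1, q.2, q.1.2)) ((dcl n _).pair_mem hck hvk)
    (hR.comp ((Primrec.fst.comp Primrec.fst).pair
      (Primrec.snd.pair (Primrec.snd.comp Primrec.fst))))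
    (G.residue_one_notMem_dcl_tower _) ((hFR ..).1 hv)
  have hg'K := (G.mem_towerClosure_iff hι).2 ⟨k, hg'⟩
  exact ⟨elem g' hg'K, elem _ hg, elem v hvK, fun h => hne (elem_eq_elem.1 h), hva,
    (hFR ..).2 hRg', hv⟩

theorem not_gphp_towerClosure_one :
    ¬GPHP (G.towerClosure (ι := fun _ => 1) monotone_const).Model (n + 1) := by
  set hι : Monotone fun _ : ℕ => 1 := monotone_const
  intro hGPHP
  obtain ⟨y, hy⟩ := hGPHP (elem id (G.id_mem_towerClosure hι))
  obtain ⟨y, hyK, rfl⟩ := exists_elem_eq y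
  obtain ⟨k, hk⟩ := G.exists_le_level_of_mem_towerClosure hι hyK
  refine hy (exSigmaInj_id_of_forall_mem_dcl (x := G.tower (fun _ => 1) (fun _ => 1) k)
    ((G.mem_towerClosure_iff hι).2 ⟨k, self_mem_dcl n _⟩) _ hyK fun u hu huy => ?_)
  obtain ⟨-, -, huk⟩ := G.exists_mem_dcl_tower_of_le_level hι (k := k) 0 hu
    (huy.mp (hk.mono fun t hk huy => huy.le.trans hk))
  exact huk

theorem not_wphp_towerClosure : ¬WPHP (G.towerClosure hι).Model (n + 1) := by
  intro hWPHP
  have hid := G.id_mem_towerClosure hι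
  have hdouble : (fun t => t + t) ∈ G.towerClosure hι := map₂_mem hid hid Primrec.nat_add
  refine hWPHP (elem id hid) ?_ (exSigmaInj_id_of_forall_mem_dcl hid hid hdouble fun u hu hlt => ?_)
  · exact elem_lt_elem.2 (eventually_ge_hyperfilter 1)
  · obtain ⟨_, _, h⟩ := G.exists_mem_dcl_tower_of_le_level hι (k := 0) 0 hu
      (hlt.mono fun t ht => by rw [level_zero]; exact ht.le)
    rwa [tower_zero] at h

theorem succ_monotone : Monotone Nat.succ := fun _ _ => Nat.succ_le_succ

theorem exists_ne_residue_towerClosure_succ {c v : ℕ → ℕ} {R : ℕ × ℕ × ℕ → Prop}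
    (hR : ArithSigma (n + 1) R) (hkl : k < l) (hc : c ∈ dcl n (G.tower Nat.succ (fun _ => l + 1) l))
    (hv : v ∈ G.towerClosure succ_monotone) (hvk : ∀ᶠ t in 𝒰, v t ≤ G.level Nat.succ k t)
    (h : ∀ᶠ t in 𝒰, R (c t, G.residue (G.level Nat.succ k) (l + 2) t, v t)) :
    ∃ g ∈ G.towerClosure succ_monotone, (∀ᶠ t in 𝒰, g t < G.level Nat.succ (k + 1) t) ∧
      (∀ᶠ t in 𝒰, R (c t, g t, v t)) ∧
        ¬∀ᶠ t in 𝒰, g t = G.residue (G.level Nat.succ k) (l + 2) t := by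
  set hι : Monotone Nat.succ := succ_monotone
  obtain ⟨l', hl', hvl'⟩ := G.exists_mem_dcl_tower_of_le_level hι l hv hvk
  -- Enough digits below level `k` to compute `v`, but one too few at level `k` to compute the
  -- residue.
  let κ (j : ℕ) : ℕ := if j < k then l' + 1 else l + 1
  have le_κ (j : ℕ) : l + 1 ≤ κ j := by grind
  have κ_le (j : ℕ) : κ j ≤ l' + 1 := by grind
  have κ_of_lt (j : ℕ) (hj : j < k) : κ j = l' + 1 := if_pos hj
  have κ_self : κ k = l + 1 := if_neg (lt_irrefl k)
  have hself := self_mem_dcl n (G.tower Nat.succ κ l)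
  have hcκ := mem_of_mem_dcl (G.tower_mem hι le_rfl (fun j _ => le_κ j) le_κ hself) hc
  have hvκ := mem_of_mem_dcl (G.tower_mem hι hkl.le (fun j hj => (κ_of_lt j hj).ge)
    (fun j => (Nat.succ_le_succ hkl.le).trans (le_κ j)) hself) hvl'
  have hlevel := G.level_mem hι (Nat.succ_le_of_lt hkl)
    (fun j => (Nat.succ_le_succ hkl).trans (le_κ j)) hself
  have hnot : G.residue (G.level Nat.succ k) (l + 2) ∉ dcl n (G.tower Nat.succ κ l) := by
    simpa only [κ_self] using G.residue_succ_notMem_dcl_tower hι hkl le_κ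
  have hR' : ArithSigma (n + 1) fun q : (ℕ × ℕ × ℕ) × ℕ =>
      q.2 < q.1.2.2 ∧ R (q.1.1, q.2, q.1.2.1) :=
    (ArithSigma.lt Primrec.snd (Primrec.snd.comp (Primrec.snd.comp Primrec.fst))).and
      (hR.comp ((Primrec.fst.comp Primrec.fst).pair
        (Primrec.snd.pair (Primrec.fst.comp (Primrec.snd.comp Primrec.fst)))))
  obtain ⟨g, hg, hgR, hne⟩ := exists_ne_of_notMem
    (b := fun t => (c t, v t, G.level Nat.succ (k + 1) t))
    ((dcl n _).pair_mem hcκ ((dcl n _).pair_mem hvκ hlevel)) hR' hnot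
    (h.mono fun t ht => ⟨G.residue_level_lt_level_succ t, ht⟩)
  have htower : G.tower Nat.succ κ l ∈ G.towerClosure hι := (G.mem_towerClosure_iff hι).2
    ⟨l', G.tower_mem hι hl' (fun j _ => κ_le j) (fun _ => hι hl') (self_mem_dcl n _)⟩
  exact ⟨g, mem_of_mem_dcl htower hg, hgR.mono fun _ => And.left, hgR.mono fun _ => And.right, hne⟩

theorem gphp_towerClosure_succ : GPHP (G.towerClosure succ_monotone).Model (n + 1) := by
  set hι : Monotone Nat.succ := succ_monotone
  intro x
  obtain ⟨x, hx, rfl⟩ := exists_elem_eq x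
  obtain ⟨k, hxk⟩ := G.exists_le_level_of_mem_towerClosure hι hx
  have hlevel : G.level Nat.succ (k + 1) ∈ G.towerClosure hι :=
    (G.mem_towerClosure_iff hι).2 ⟨k + 1, G.level_mem_dcl hι (k + 1)⟩
  refine ⟨elem _ hlevel, ?_⟩
  rintro ⟨F, hF, hFmap, -, hFinj⟩
  obtain ⟨c, hc, R, hR, hFR⟩ := exists_arithSigma_of_sigmaDef2 hF
  obtain ⟨j, hcj⟩ := (G.mem_towerClosure_iff hι).1 hc
  obtain ⟨l, hjl, hkl⟩ : ∃ l, j ≤ l ∧ k < l := ⟨max j (k + 1), by omega, by omega⟩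
  have hg : G.residue (G.level Nat.succ k) (l + 2) ∈ G.towerClosure hι :=
    G.residue_mem_towerClosure hι (hkl.trans l.lt_succ_self)
  have hglt : elem _ hg < elem _ hlevel :=
    elem_lt_elem.2 (.of_forall G.residue_level_lt_level_succ)
  obtain ⟨v, hvx, hv⟩ := hFmap _ hglt
  obtain ⟨v, hvK, rfl⟩ := exists_elem_eq v
  have hvk : ∀ᶠ t in 𝒰, v t ≤ G.level Nat.succ k t :=
    hxk.mp ((elem_lt_elem.1 hvx).mono fun t hvx hxk => hvx.le.trans hxk)
  obtain ⟨g', hg', hg'lt, hRg', hne⟩ := G.exists_ne_residue_towerClosure_succ hR hkl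
    (G.mem_dcl_tower_of_le hι hjl hcj) hvK hvk ((hFR ..).1 hv)
  exact hne (elem_eq_elem.1 (hFinj (elem g' hg') (elem _ hg) (elem v hvK) (elem_lt_elem.2 hg'lt)
    hglt ((hFR ..).2 hRg') hv))

end GenericData

variable (n : ℕ)

theorem exists_card_not_gphp : ∃ (M : Type) (_ : lang.Structure M),
    PAm M ∧ ISig n M ∧ CARD M (n + 1) ∧ ¬GPHP M (n + 1) :=
  let ⟨G⟩ := nonempty_genericData n
  ⟨_, _, pam_model _, isig_model _, G.card_towerClosure_one, G.not_gphp_towerClosure_one⟩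

theorem exists_gphp_not_wphp : ∃ (M : Type) (_ : lang.Structure M),
    PAm M ∧ ISig n M ∧ GPHP M (n + 1) ∧ ¬WPHP M (n + 1) :=
  let ⟨G⟩ := nonempty_genericData n
  ⟨_, _, pam_model _, isig_model _, G.gphp_towerClosure_succ, G.not_wphp_towerClosure _⟩

end Separation

theorem statement_16_general (n : ℕ) :
    (∀ (M : Type) (_ : lang.Structure M), PAm M → ISig n M →
      (WPHP M (n + 1) → GPHP M (n + 1)) ∧ (GPHP M (n + 1) → CARD M (n + 1))) ∧
      (∃ (M : Type) (_ : lang.Structure M), PAm M ∧ ISig n M ∧ CARD M (n + 1) ∧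
        ¬GPHP M (n + 1)) ∧
      (∃ (M : Type) (_ : lang.Structure M), PAm M ∧ ISig n M ∧ GPHP M (n + 1) ∧
        ¬WPHP M (n + 1)) :=
  ⟨fun _ _ hM hind => ⟨fun h => h.gphp hM, fun h => h.card hM hind⟩,
    exists_card_not_gphp n, exists_gphp_not_wphp n⟩

/-- For every `n ≥ 1`, over PA⁻ + IΣn, GPHP(Σ_{n+1}) lies strictly
between CARD(Σ_{n+1}) and WPHP(Σ_{n+1}). -/
theorem statement_16 (n : ℕ) (hn : 1 ≤ n) :
    (∀ (M : Type) (_ : lang.Structure M), PAm M → ISig n M →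
      (WPHP M (n + 1) → GPHP M (n + 1)) ∧ (GPHP M (n + 1) → CARD M (n + 1))) ∧
      (∃ (M : Type) (_ : lang.Structure M), PAm M ∧ ISig n M ∧ CARD M (n + 1) ∧
        ¬GPHP M (n + 1)) ∧
      (∃ (M : Type) (_ : lang.Structure M), PAm M ∧ ISig n M ∧ GPHP M (n + 1) ∧
        ¬WPHP M (n + 1)) :=
  statement_16_general n

end ArithFC
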